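/- arXiv:1306.1368 — 12 statements merged into one kernel-verified Lean document; each statement's English description precedes it below -/
import Mathlib

section
/- Let p be a prime, V a d-dimensional vector space over 𝔽_p, h a linear automorphism of V, v ∈ V, and let g be the affine transformation g = t_v h. Then the order of g equals either orderOf h or p · orderOf h. -/
/-- Let `p` be a prime, `V` a `d`-dimensional vector space over `𝔽_p`,
`h` a linear automorphism of `V`, `v ∈ V`, and `g = t_v h` the affine transformation
`x ↦ h (x + v)`.  Then the order of `g` equals either `orderOf h` or `p * orderOf h`. -/
theorem affine_order_eq_or_eq_mul (p d : ℕ) [Fact p.Prime] (V : Type*) [AddCommGroup V]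
    [Module (ZMod p) V] [Module.Finite (ZMod p) V]
    (hdim : Module.finrank (ZMod p) V = d)
    (h : V ≃ₗ[ZMod p] V) (v : V)
    (g : Equiv.Perm V) (hg : ∀ x : V, g x = h (x + v)) :
    orderOf g = orderOf h ∨ orderOf g = p * orderOf h := by
  have key : ∀ n : ℕ, ∃ w : V, ∀ x, (g ^ n) x = (h ^ n) x + w := by
    intro n
    induction n with
    | zero => exact ⟨0, fun x => by simp⟩
    | succ n ih =>
      obtain ⟨w, hw⟩ := ih
      refine ⟨h (w + v), fun x => ?_⟩
      rw [pow_succ', pow_succ', Equiv.Perm.mul_apply, hw, hg, LinearEquiv.mul_apply, ← map_add,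
        add_assoc]
  have h1 : orderOf h ∣ orderOf g := by
    rw [orderOf_dvd_iff_pow_eq_one]
    obtain ⟨w, hw⟩ := key (orderOf g)
    rw [pow_orderOf_eq_one] at hw
    have hw0 : w = 0 := by simpa using (hw 0).symm
    ext x
    simpa [hw0] using (hw x).symm
  have h2 : orderOf g ∣ orderOf h * p := by
    rw [orderOf_dvd_iff_pow_eq_one, pow_mul]
    obtain ⟨w, hw⟩ := key (orderOf h)
    rw [pow_orderOf_eq_one] at hw
    have hk : ∀ k : ℕ, ∀ x, ((g ^ orderOf h) ^ k) x = x + k • w := by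
      intro k
      induction k with
      | zero => intro x; simp
      | succ k ih =>
        intro x
        rw [pow_succ', Equiv.Perm.mul_apply, ih, hw, LinearEquiv.coe_one, id, succ_nsmul, add_assoc]
    ext x
    rw [hk, ← Nat.cast_smul_eq_nsmul (ZMod p)]
    simp
  obtain ⟨k, hk⟩ := h1
  rcases Nat.eq_zero_or_pos (orderOf h) with h0 | h0
  · left; rw [hk, h0, zero_mul]
  · rw [hk] at h2
    rcases (Nat.dvd_prime Fact.out).1 (Nat.dvd_of_mul_dvd_mul_left h0 h2) with r | r
    · left; rw [hk, r, mul_one]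
    · right; rw [hk, r, mul_comm]
end

section
/- Let p be a prime, V a d-dimensional vector space over 𝔽_p, h a linear automorphism of V of order k, and set h(k) = I + h + ⋯ + h^{k−1}. Then: (a) for every v ∈ V, h applied to h(k)(v) equals h(k)(v), i.e. h(k)(v) is a fixed vector of h; and (b) for every v ∈ V, the affine transformation g = t_v h satisfies g^k = t_{h(k)(v)}; consequently orderOf g = p·k if h(k)(v) ≠ 0, and orderOf g = k if h(k)(v) = 0. -/
/-- With `g = t_v h`, `k = orderOf h` and `hk = I + h + ⋯ + h^(k-1)`:
(a) `h (hk w) = hk w` for all `w`; (b) `g ^ k = t_{hk v}`, hence `orderOf g = p * k`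
if `hk v ≠ 0` and `orderOf g = k` if `hk v = 0`. -/
theorem affine_power_order (p d : ℕ) [Fact p.Prime] (V : Type*) [AddCommGroup V]
    [Module (ZMod p) V] [Module.Finite (ZMod p) V]
    (hdim : Module.finrank (ZMod p) V = d)
    (h : V ≃ₗ[ZMod p] V) (k : ℕ) (hk : orderOf h = k)
    (hkmap : Module.End (ZMod p) V)
    (hkdef : hkmap = ∑ i ∈ Finset.range k, (h.toLinearMap : Module.End (ZMod p) V) ^ i)
    (v : V) (g : Equiv.Perm V) (hg : ∀ x : V, g x = h (x + v)) :
    (∀ w : V, h (hkmap w) = hkmap w) ∧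
    (∀ x : V, (g ^ k) x = x + hkmap v) ∧
    (hkmap v ≠ 0 → orderOf g = p * k) ∧
    (hkmap v = 0 → orderOf g = k) := by
  set H : Module.End (ZMod p) V := h.toLinearMap with hH
  have hp : p.Prime := Fact.out
  haveI : Finite V := Module.finite_of_finite (ZMod p)
  haveI : Finite (V ≃ₗ[ZMod p] V) :=
    Finite.of_injective (fun e : V ≃ₗ[ZMod p] V => (e : V → V)) DFunLike.coe_injective
  have hk0 : 0 < k := hk ▸ orderOf_pos h
  have hpow : ∀ (n : ℕ) (x : V), (H ^ n) x = (h ^ n) x := by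
    intro n
    induction n with
    | zero => intro x; simp
    | succ n ih =>
      intro x
      rw [pow_succ, pow_succ, Module.End.mul_apply, ih]
      rfl
  have hHk : H ^ k = 1 := by
    ext x
    rw [hpow, ← hk, pow_orderOf_eq_one]
    rfl
  have hfix : H * hkmap = hkmap := by
    have h1 := mul_geom_sum H k
    rw [← hkdef, hHk, sub_self, sub_mul, one_mul, sub_eq_zero] at h1
    exact h1
  have ha : ∀ w : V, h (hkmap w) = hkmap w := fun w => LinearMap.congr_fun hfix w
  have hgn : ∀ (n : ℕ) (x : V),
      (g ^ n) x = (H ^ n) x + H ((∑ i ∈ Finset.range n, H ^ i) v) := by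
    intro n
    induction n with
    | zero => intro x; simp
    | succ n ih =>
      intro x
      have hx : g x = H (x + v) := hg x
      rw [pow_succ, Equiv.Perm.mul_apply, ih, hx, Finset.sum_range_succ, pow_succ,
        Module.End.mul_apply, LinearMap.add_apply, map_add, map_add, map_add]
      have : (H ^ n) (H v) = H ((H ^ n) v) := by
        rw [← Module.End.mul_apply, ← Module.End.mul_apply, ← pow_succ, ← pow_succ']
      rw [this]
      abel
  have hb : ∀ x : V, (g ^ k) x = x + hkmap v := by
    intro x
    rw [hgn, ← hkdef, hHk]
    exact congrArg (x + ·) (ha v)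
  have hdvd : k ∣ orderOf g := by
    rw [← hk]
    apply orderOf_dvd_of_pow_eq_one
    ext x
    have e1 := hgn (orderOf g) x
    have e0 := hgn (orderOf g) 0
    rw [pow_orderOf_eq_one] at e1 e0
    simp only [Equiv.Perm.one_apply, map_zero, zero_add] at e1 e0
    rw [← e0, add_zero] at e1
    rw [← hpow, ← e1]
    rfl
  have hord : orderOf g = orderOf (g ^ k) * k := by
    rw [orderOf_pow_of_dvd hk0.ne' hdvd, Nat.div_mul_cancel hdvd]
  refine ⟨ha, hb, ?_, ?_⟩
  · intro hne
    have hm : ∀ (n : ℕ) (x : V), ((g ^ k) ^ n) x = x + n • hkmap v := by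
      intro n
      induction n with
      | zero => intro x; simp
      | succ n ih =>
        intro x
        rw [pow_succ, Equiv.Perm.mul_apply, ih, hb, succ_nsmul]
        abel
    have : orderOf (g ^ k) = p := by
      apply orderOf_eq_prime
      · ext x
        rw [hm, ← Nat.cast_smul_eq_nsmul (ZMod p)]
        simp
      · intro h1
        apply hne
        have := hb 0
        rw [h1] at this
        simpa using this.symm
    rw [hord, this]
  · intro h0
    have : g ^ k = 1 := by
      ext x
      rw [hb, h0, add_zero]
      rfl
    rw [hord, this, orderOf_one, one_mul]
end

section
/- Let p be a prime, V a d-dimensional vector space over 𝔽_p, h a linear automorphism of V of order k, and set h(k) = I + h + ⋯ + h^{k−1}. Then the following are equivalent: (i) there exists v ∈ V such that the affine transformation t_v h has order p·k; (ii) h(k) ≠ 0 as a linear endomorphism of V; (iii) the multiplicity of (X − 1) as a factor of the minimal polynomial of h over 𝔽_p equals (k)_p, the p-part of k (i.e. the minimal polynomial has the form (X − 1)^{(k)_p}·f(X) with f(X) coprime to X − 1). -/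
open Polynomial

theorem rootMult_aux (p k : ℕ) [Fact p.Prime] (hk : 0 < k) :
    (X ^ k - 1 : (ZMod p)[X]).rootMultiplicity 1 = p ^ (k.factorization p) := by
  classical
  have hpp : p.Prime := Fact.out
  set a := k.factorization p
  set m := k / p ^ a with hm
  have hkm : p ^ a * m = k := Nat.ordProj_mul_ordCompl_eq_self k p
  have hpm : ¬ p ∣ m := Nat.not_dvd_ordCompl hpp hk.ne'
  have hm0 : m ≠ 0 := by rintro h; simp [h] at hpm
  have e : (X ^ k - 1 : (ZMod p)[X]) = (X ^ m - 1) ^ (p ^ a) := by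
    rw [sub_pow_char_pow, ← pow_mul, mul_comm m, hkm, one_pow]
  set q : (ZMod p)[X] := X ^ m - 1 with hq
  have hq0 : q ≠ 0 := by
    simpa using X_pow_sub_C_ne_zero (Nat.pos_of_ne_zero hm0) (1 : ZMod p)
  have h1 : q.rootMultiplicity 1 = 1 := by
    apply le_antisymm
    · by_contra hc
      push Not at hc
      have := ((one_lt_rootMultiplicity_iff_isRoot hq0).1 hc).2
      rw [IsRoot.def, hq] at this
      simp [derivative_X_pow] at this
      exact hpm ((ZMod.natCast_eq_zero_iff _ _).1 this)
    · exact (rootMultiplicity_pos hq0).2 (by simp [hq])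
  rw [e, ← count_roots, roots_pow, Multiset.count_nsmul, count_roots, h1]
  simp

/-- With `k = orderOf h` and `h(k) = I + h + ⋯ + h^(k-1)`, the following are
equivalent: (i) some affine transformation `t_v h` has order `p * k`; (ii) `h(k) ≠ 0`;
(iii) the multiplicity of `X - 1` in the minimal polynomial of `h` equals `(k)_p`,
the `p`-part of `k`. -/
theorem affine_order_tfae (p d : ℕ) [Fact p.Prime] (V : Type*) [AddCommGroup V]
    [Module (ZMod p) V] [Module.Finite (ZMod p) V]
    (hdim : Module.finrank (ZMod p) V = d)
    (h : V ≃ₗ[ZMod p] V) (k : ℕ) (hk : orderOf h = k) :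
    ((∃ (v : V) (g : Equiv.Perm V), (∀ x : V, g x = h (x + v)) ∧ orderOf g = p * k) ↔
      (∑ i ∈ Finset.range k, (h.toLinearMap : Module.End (ZMod p) V) ^ i) ≠ 0) ∧
    ((∑ i ∈ Finset.range k, (h.toLinearMap : Module.End (ZMod p) V) ^ i) ≠ 0 ↔
      (minpoly (ZMod p) (h.toLinearMap : Module.End (ZMod p) V)).rootMultiplicity 1 =
        p ^ (k.factorization p)) := by
  classical
  have hpp : p.Prime := Fact.out
  have hfin : Finite V := Module.finite_of_finite (ZMod p)
  have hfinE : Finite (V ≃ₗ[ZMod p] V) :=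
    Finite.of_injective (fun e : V ≃ₗ[ZMod p] V => (e : V → V)) DFunLike.coe_injective
  have hk0 : 0 < k := hk ▸ orderOf_pos h
  have hpowE : ∀ (n : ℕ) (x : V),
      ((h.toLinearMap : Module.End (ZMod p) V) ^ n) x = (h ^ n) x := by
    intro n
    induction n with
    | zero => intro x; simp
    | succ n ih => intro x; rw [pow_succ, pow_succ]; simp [ih]
  have hkE : (h.toLinearMap : Module.End (ZMod p) V) ^ k = 1 := by
    ext x
    rw [hpowE, ← hk, pow_orderOf_eq_one]; simp
  set T : Module.End (ZMod p) V := h.toLinearMap with hT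
  refine ⟨?_, ?_⟩
  · have key : ∀ (v : V) (g : Equiv.Perm V), (∀ x : V, g x = h (x + v)) →
        ∀ (n : ℕ) (x : V), (g ^ n) x = (T ^ n) x + (∑ i ∈ Finset.range n, T ^ i) (h v) := by
      intro v g hg n
      induction n with
      | zero => intro x; simp
      | succ n ih =>
        intro x
        rw [pow_succ, Equiv.Perm.mul_apply, ih, hg, Finset.sum_range_succ, pow_succ]
        simp [hT]
        abel
    constructor
    · rintro ⟨v, g, hg, ho⟩ h0
      have h1 : g ^ k = 1 := by
        ext x
        rw [key v g hg, h0, hkE]; simp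
      have h2 := Nat.le_of_dvd hk0 (orderOf_dvd_of_pow_eq_one h1)
      rw [ho] at h2
      have := hpp.two_le
      nlinarith
    · intro h0
      obtain ⟨w, hw⟩ : ∃ w, (∑ i ∈ Finset.range k, T ^ i) w ≠ 0 := by
        by_contra hc
        push Not at hc
        exact h0 (LinearMap.ext hc)
      set u := (∑ i ∈ Finset.range k, T ^ i) w with hu
      let g : Equiv.Perm V := (Equiv.addRight (h.symm w)).trans h.toEquiv
      have hg : ∀ x, g x = h (x + h.symm w) := fun x => rfl
      have kg := key _ g hg
      rw [h.apply_symm_apply] at kg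
      have hgk : ∀ x, (g ^ k) x = x + u := by
        intro x; rw [kg, hkE]; rfl
      have hgkn : ∀ (n : ℕ) (x : V), ((g ^ k) ^ n) x = x + n • u := by
        intro n
        induction n with
        | zero => intro x; simp
        | succ n ih =>
          intro x
          rw [pow_succ, Equiv.Perm.mul_apply, ih, hgk, succ_nsmul]; abel
      refine ⟨h.symm w, g, hg, ?_⟩
      have hd : orderOf g ∣ k * p := by
        apply orderOf_dvd_of_pow_eq_one
        rw [pow_mul]
        ext x
        rw [hgkn, ← Nat.cast_smul_eq_nsmul (ZMod p)]; simp
      have hkd : k ∣ orderOf g := by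
        rw [← hk]
        apply orderOf_dvd_of_pow_eq_one
        have e : ∀ x, (T ^ orderOf g) x + (∑ i ∈ Finset.range (orderOf g), T ^ i) w = x := by
          intro x; rw [← kg, pow_orderOf_eq_one]; rfl
        have e0 := e 0
        rw [map_zero, zero_add] at e0
        ext x
        have := e x
        rw [e0, add_zero, hpowE] at this
        simpa using this
      obtain ⟨j, hj⟩ := hkd
      rw [hj] at hd
      have hjp : j ∣ p := Nat.dvd_of_mul_dvd_mul_left hk0 hd
      rcases (Nat.dvd_prime hpp).1 hjp with rfl | rfl
      · exfalso
        rw [mul_one] at hj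
        have := hgk 0
        rw [← hj, pow_orderOf_eq_one] at this
        apply hw
        simpa using this.symm
      · rw [hj, mul_comm]
  · set S : (ZMod p)[X] := ∑ i ∈ Finset.range k, X ^ i with hS
    have hST : (∑ i ∈ Finset.range k, T ^ i) = aeval T S := by simp [hS]
    rw [hST, Ne, ← minpoly.dvd_iff]
    have hXS : (X - C 1) * S = X ^ k - 1 := by
      rw [C_1, hS, mul_geom_sum]
    have hXk : (X ^ k - 1 : (ZMod p)[X]) ≠ 0 := by
      simpa using X_pow_sub_C_ne_zero hk0 (1 : ZMod p)
    have hS0 : S ≠ 0 := by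
      rintro hz; rw [hz, mul_zero] at hXS; exact hXk hXS.symm
    have hmd : minpoly (ZMod p) T ∣ X ^ k - 1 := by
      apply minpoly.dvd; simp [hkE]
    have hm0 : minpoly (ZMod p) T ≠ 0 := ne_zero_of_dvd_ne_zero hXk hmd
    set a := k.factorization p with ha
    have hmult : (X ^ k - 1 : (ZMod p)[X]).rootMultiplicity 1 = p ^ a := rootMult_aux p k hk0
    have hSm : S.rootMultiplicity 1 + 1 = p ^ a := by
      rw [← hmult, ← hXS, rootMultiplicity_mul (by rw [hXS]; exact hXk),
        rootMultiplicity_X_sub_C_self, add_comm]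
    have hle := rootMultiplicity_le_rootMultiplicity_of_dvd hXk hmd 1
    rw [hmult] at hle
    constructor
    · intro hnd
      by_contra hne
      apply hnd
      obtain ⟨f, hf, hfn⟩ := exists_eq_pow_rootMultiplicity_mul_and_not_dvd _ hm0 1
      have hcop : IsCoprime (X - C 1) f :=
        ((irreducible_X_sub_C (1 : ZMod p)).coprime_iff_not_dvd).2 hfn
      have hfS : f ∣ S := by
        apply hcop.symm.dvd_of_dvd_mul_left
        rw [hXS]
        exact (Dvd.intro_left _ hf.symm).trans hmd
      rw [hf]
      apply IsCoprime.mul_dvd hcop.pow_left _ hfS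
      exact (pow_dvd_pow _ (by omega)).trans (pow_rootMultiplicity_dvd S 1)
    · intro he hd
      have := rootMultiplicity_le_rootMultiplicity_of_dvd hS0 hd 1
      omega
end

section
/- Let p be a prime, V a d-dimensional vector space over 𝔽_p, h a linear automorphism of V of order k, and v ∈ V. If the affine transformation g = t_v h has order p·k, then there exist h-invariant subspaces U and W of V such that V = U ⊕ W (internal direct sum), dim U = (k)_p, and the minimal polynomial of the restriction of h to U is (X − 1)^{(k)_p}; that is, h acts on U as a single Jordan block J_{(k)_p} with eigenvalue 1. -/
open Polynomial

lemma jordan_split {K V : Type*} [Field K] [AddCommGroup V] [Module K V]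
    (n : Module.End K V) (u : V) (f : V →ₗ[K] K) (q : ℕ) (hq : 0 < q)
    (hu : (n ^ q) u = 0) (hf : ∀ x, f ((n ^ q) x) = 0) (hfu : f ((n ^ (q - 1)) u) ≠ 0) :
    ∃ U W : Submodule K V, (∀ x ∈ U, n x ∈ U) ∧ (∀ x ∈ W, n x ∈ W) ∧ IsCompl U W ∧
      Module.finrank K U = q ∧ u ∈ U ∧ ∀ x ∈ U, (n ^ q) x = 0 := by
  have hbig : ∀ j, q ≤ j → (n ^ j) u = 0 := by
    intro j hj
    obtain ⟨c, rfl⟩ := Nat.exists_eq_add_of_le' hj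
    rw [pow_add, Module.End.mul_apply, hu, map_zero]
  let S : (Fin q → K) →ₗ[K] V := Fintype.linearCombination K (fun i : Fin q => (n ^ (i : ℕ)) u)
  let T : V →ₗ[K] (Fin q → K) := LinearMap.pi (fun i : Fin q => f ∘ₗ (n ^ (i : ℕ)))
  have hS : ∀ a, S a = ∑ i : Fin q, a i • (n ^ (i : ℕ)) u := fun a => rfl
  have hT : ∀ x i, T x i = f ((n ^ (i : ℕ)) x) := fun x i => rfl
  have hinj : Function.Injective (T ∘ₗ S) := by
    rw [← LinearMap.ker_eq_bot, LinearMap.ker_eq_bot']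
    intro a ha
    have key : ∀ i : ℕ, ∀ hi : i < q, a ⟨i, hi⟩ = 0 := by
      intro i
      induction i using Nat.strong_induction_on with
      | _ i ih =>
        intro hi
        have h1 : T (S a) ⟨q - 1 - i, by omega⟩ = 0 := by
          have := congrFun ha ⟨q - 1 - i, by omega⟩
          simpa using this
        rw [hT, hS, map_sum, map_sum, Finset.sum_eq_single ⟨i, hi⟩] at h1
        · rw [map_smul, map_smul, ← Module.End.mul_apply, ← pow_add,
            show q - 1 - i + i = q - 1 by omega, smul_eq_mul] at h1
          exact (mul_eq_zero.mp h1).resolve_right hfu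
        · intro j _ hj
          rcases lt_or_gt_of_ne (fun e => hj (Fin.ext e) : (j : ℕ) ≠ i) with hlt | hgt
          · have := ih j hlt j.2
            rw [show a j = 0 from this]; simp
          · rw [map_smul, ← Module.End.mul_apply, ← pow_add, hbig _ (by dsimp only at hgt ⊢; omega)]; simp
        · simp
    funext i
    exact key i i.2
  have hsurj : Function.Surjective (T ∘ₗ S) := LinearMap.injective_iff_surjective.mp hinj
  have hSinj : Function.Injective S := by
    intro a b hab
    apply hinj
    simp [hab]
  have hmem : ∀ j, (n ^ j) u ∈ LinearMap.range S := by
    intro j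
    by_cases hj : j < q
    · refine ⟨Pi.single ⟨j, hj⟩ 1, ?_⟩
      rw [hS, Finset.sum_eq_single ⟨j, hj⟩]
      · simp
      · intro b _ hb
        simp [Pi.single_eq_of_ne hb]
      · simp
    · rw [hbig j (by omega)]; exact zero_mem _
  refine ⟨LinearMap.range S, LinearMap.ker T, ?_, ?_, ?_, ?_, ?_, ?_⟩
  · rintro _ ⟨a, rfl⟩
    rw [hS, map_sum]
    refine Submodule.sum_mem _ fun i _ => ?_
    rw [map_smul, ← Module.End.mul_apply, ← pow_succ']
    exact Submodule.smul_mem _ _ (hmem _)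
  · intro x hx
    rw [LinearMap.mem_ker] at hx ⊢
    funext i
    rw [hT, ← Module.End.mul_apply, ← pow_succ]
    by_cases hi : (i : ℕ) + 1 < q
    · exact (hT x ⟨i + 1, hi⟩).symm.trans (congrFun hx _)
    · rw [show (i : ℕ) + 1 = q by omega]; exact hf x
  · constructor
    · rw [Submodule.disjoint_def]
      rintro _ ⟨a, rfl⟩ ha
      have : a = 0 := hinj (by simpa using ha)
      simp [this]
    · rw [codisjoint_iff, eq_top_iff]
      intro x _
      obtain ⟨a, ha⟩ := hsurj (T x)
      rw [Submodule.mem_sup]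
      refine ⟨S a, ⟨a, rfl⟩, x - S a, ?_, by abel⟩
      rw [LinearMap.mem_ker, map_sub, ← ha]; simp
  · rw [LinearMap.finrank_range_of_inj hSinj]; simp
  · simpa using hmem 0
  · rintro _ ⟨a, rfl⟩
    rw [hS, map_sum]
    refine Finset.sum_eq_zero fun i _ => ?_
    rw [map_smul, ← Module.End.mul_apply, ← pow_add, hbig _ (by omega), smul_zero]

/-- If `g = t_v h` has order `p * k` (where `k = orderOf h`), then `V`
decomposes as an internal direct sum `U ⊕ W` of `h`-invariant subspaces with
`dim U = (k)_p` and the restriction of `h` to `U` having minimal polynomial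
`(X - 1) ^ (k)_p`, i.e. `h` acts on `U` as a single Jordan block `J_{(k)_p}`
with eigenvalue `1`. -/
theorem affine_order_jordan_block (p d : ℕ) [Fact p.Prime] (V : Type*) [AddCommGroup V]
    [Module (ZMod p) V] [Module.Finite (ZMod p) V]
    (hdim : Module.finrank (ZMod p) V = d)
    (h : V ≃ₗ[ZMod p] V) (k : ℕ) (hk : orderOf h = k)
    (v : V) (g : Equiv.Perm V) (hg : ∀ x : V, g x = h (x + v))
    (hord : orderOf g = p * k) :
    ∃ (U W : Submodule (ZMod p) V) (hU : ∀ x ∈ U, h x ∈ U),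
      (∀ x ∈ W, h x ∈ W) ∧ IsCompl U W ∧
      Module.finrank (ZMod p) U = p ^ (k.factorization p) ∧
      minpoly (ZMod p) (h.toLinearMap.restrict hU) =
        (X - 1 : Polynomial (ZMod p)) ^ (p ^ (k.factorization p)) := by
  have hp : p.Prime := Fact.out
  have : Finite V := Module.finite_of_finite (ZMod p)
  have hfin : Finite (V ≃ₗ[ZMod p] V) := DFunLike.finite _
  have hk0 : 0 < k := hk ▸ orderOf_pos h
  set q := p ^ (k.factorization p) with hqdef
  have hq : 0 < q := pow_pos hp.pos _
  obtain ⟨m, hm⟩ : q ∣ k := Nat.ordProj_dvd k p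
  have hpm : ¬ p ∣ m := by
    have := Nat.not_dvd_ordCompl hp hk0.ne'
    rwa [← hqdef, hm, Nat.mul_div_cancel_left _ hq] at this
  set H : Module.End (ZMod p) V := h.toLinearMap with hH
  have hHx : ∀ x, H x = h x := fun x => rfl
  have hHpow : ∀ j x, (H ^ j) x = (h ^ j) x := by
    intro j
    induction j with
    | zero => intro x; simp
    | succ j ih => intro x; rw [pow_succ, pow_succ, Module.End.mul_apply, ih]; rfl
  have hHk : H ^ k = 1 := by
    ext x
    rw [hHpow, ← hk, pow_orderOf_eq_one]; rfl
  -- powers of g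
  have hgpow : ∀ j x, (g ^ j) x = (H ^ j) x + H ((∑ i ∈ Finset.range j, H ^ i) v) := by
    intro j
    induction j with
    | zero => intro x; simp
    | succ j ih =>
      intro x
      rw [pow_succ', Equiv.Perm.mul_apply, ih, hg, ← hHx, Finset.sum_range_succ', pow_succ']
      simp only [pow_succ', ← Finset.mul_sum, LinearMap.add_apply, map_add, Module.End.mul_apply,
        pow_zero, Module.End.one_apply]
      abel
  set N : Module.End (ZMod p) V := ∑ i ∈ Finset.range k, H ^ i with hN
  have hNv : N v ≠ 0 := by
    intro h0
    have h1 : g ^ k = 1 := by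
      ext x
      rw [hgpow, hHk, ← hN, h0]; simp
    have h2 := Nat.le_of_dvd hk0 (orderOf_dvd_of_pow_eq_one h1)
    rw [hord] at h2
    have := hp.two_le
    nlinarith
  -- polynomial identities
  let c : (ZMod p)[X] := ∑ i ∈ Finset.range m, X ^ i
  have hc : c * (X - 1) = X ^ m - 1 := geom_sum_mul X m
  have hXk : c ^ q * (X - 1) ^ q = X ^ k - 1 := by
    rw [← mul_pow, hc, hqdef, sub_pow_char_pow, one_pow, ← pow_mul, ← hqdef, mul_comm m q, ← hm]
  have hcN : c ^ q * (X - 1) ^ (q - 1) = ∑ i ∈ Finset.range k, (X : (ZMod p)[X]) ^ i := by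
    have hX : (X - 1 : (ZMod p)[X]) ≠ 0 := by simpa using X_sub_C_ne_zero (1 : ZMod p)
    apply mul_right_cancel₀ hX
    rw [geom_sum_mul, mul_assoc, ← pow_succ, Nat.sub_add_cancel hq, hXk]
  set n : Module.End (ZMod p) V := H - 1 with hn
  set C : Module.End (ZMod p) V := aeval H (c ^ q) with hC
  have hCn : C * n ^ q = 0 := by
    have := congrArg (aeval H) hXk
    simpa [hHk, ← hn, hC] using this
  have hCN : C * n ^ (q - 1) = N := by
    have := congrArg (aeval H) hcN
    simpa [← hn, hC, hN] using this
  have hcomm : ∀ j, Commute C (n ^ j) := by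
    intro j
    have : n ^ j = aeval H ((X - 1 : (ZMod p)[X]) ^ j) := by simp [hn]
    rw [this, hC]
    exact Commute.all (c ^ q) ((X - 1) ^ j) |>.map (aeval H)
  have hnN : n * N = 0 := by
    rw [← hCN, ← mul_assoc, ← pow_one n, ← (hcomm 1).eq, mul_assoc, ← pow_mul, one_mul,
      ← pow_add, Nat.add_sub_cancel' hq, hCn]
  have hCfix : ∀ x, n x = 0 → C x = ((m : ZMod p) ^ q) • x := by
    intro x hx
    have hHx1 : H x = (1 : ZMod p) • x := by
      rw [one_smul]; simpa [hn, sub_eq_zero] using hx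
    obtain ⟨r, hr⟩ : (X - 1 : (ZMod p)[X]) ∣ c ^ q - Polynomial.C ((m : ZMod p) ^ q) := by
      have := X_sub_C_dvd_sub_C_eval (a := (1 : ZMod p)) (p := c ^ q)
      simpa [c, eval_finsetSum] using this
    have h3 : c ^ q = r * (X - 1) + Polynomial.C ((m : ZMod p) ^ q) := by
      rw [mul_comm, ← hr]; ring
    rw [hC, h3, map_add, map_mul, map_sub, aeval_X, map_one, ← hn, aeval_C, LinearMap.add_apply,
      Module.End.mul_apply, hx, map_zero, zero_add, Module.algebraMap_end_apply]
  have hm0 : (m : ZMod p) ^ q ≠ 0 := by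
    apply pow_ne_zero
    rwa [Ne, ZMod.natCast_eq_zero_iff]
  obtain ⟨f0, hf0⟩ : ∃ f0 : V →ₗ[ZMod p] ZMod p, f0 (N v) ≠ 0 := by
    by_contra! hcon
    exact hNv ((Module.forall_dual_apply_eq_zero_iff (ZMod p) _).mp hcon)
  have hnu : (n ^ (q - 1)) (C v) = N v := by
    rw [← hCN, (hcomm _).eq]; rfl
  obtain ⟨U, W, hU, hW, hUW, hfr, huU, hUn⟩ := jordan_split n (C v) (f0 ∘ₗ C) q hq
    (by rw [← Module.End.mul_apply, ← (hcomm q).eq, hCn]; rfl)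
    (by
      intro x
      rw [LinearMap.comp_apply, ← Module.End.mul_apply, hCn]; simp)
    (by
      rw [hnu, LinearMap.comp_apply, hCfix, map_smul, smul_eq_mul]
      · exact mul_ne_zero hm0 hf0
      · rw [← Module.End.mul_apply, hnN]; rfl)
  have hhn : ∀ x, h x = n x + x := by
    intro x
    simp [hn, hH]
  have hU' : ∀ x ∈ U, h x ∈ U := fun x hx => by
    rw [hhn]; exact add_mem (hU x hx) hx
  refine ⟨U, W, hU', fun x hx => by rw [hhn]; exact add_mem (hW x hx) hx, hUW, hfr, ?_⟩
  set R := h.toLinearMap.restrict hU' with hR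
  have hRn : ∀ j (x : U), ((aeval R ((X - 1 : (ZMod p)[X]) ^ j) x : U) : V) = (n ^ j) x := by
    intro j
    induction j with
    | zero => intro x; simp
    | succ j ih =>
      intro x
      rw [pow_succ, map_mul, Module.End.mul_apply, ih, pow_succ, Module.End.mul_apply]
      congr 1
      simp [hn, hR, hH]
  have hdvd : minpoly (ZMod p) R ∣ (X - 1) ^ q := by
    apply minpoly.dvd
    ext x
    rw [hRn, hUn x x.2]; rfl
  have hprime : Prime (X - 1 : (ZMod p)[X]) := by simpa using prime_X_sub_C (1 : ZMod p)
  have hmonic : (X - 1 : (ZMod p)[X]).Monic := by simpa using monic_X_sub_C (1 : ZMod p)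
  obtain ⟨j, hj, hass⟩ := (dvd_prime_pow hprime q).mp hdvd
  have heq : minpoly (ZMod p) R = (X - 1) ^ j :=
    eq_of_monic_of_associated (minpoly.monic (Algebra.IsIntegral.isIntegral R)) (hmonic.pow j) hass
  rcases hj.eq_or_lt with rfl | hlt
  · exact heq
  · exfalso
    have h4 : aeval R ((X - 1 : (ZMod p)[X]) ^ (q - 1)) = 0 := by
      rw [show q - 1 = (q - 1 - j) + j by omega, pow_add, ← heq, map_mul, minpoly.aeval, mul_zero]
    have h5 := hRn (q - 1) ⟨C v, huU⟩
    rw [h4, hnu] at h5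
    exact hNv (by simpa using h5.symm)
end

section
/- Let p be a prime, V a d-dimensional vector space over 𝔽_p, h a linear automorphism of V, v ∈ V, and g = t_v h. Let U be the kernel of (h − 1)^d. Then there exist w ∈ V and u ∈ U such that t_w^{−1} ∘ g ∘ t_w = t_u h, i.e. g(x + w) − w = h(x + u) for all x ∈ V. In particular, if h has no nonzero fixed vector (ker(h − 1) = 0), then g is conjugate, by a translation, to the permutation of V induced by h. -/
/-- Let `U = ker ((h - 1) ^ d)` be the generalized `1`-eigenspace of `h`.
Then the affine transformation `g = t_v h` is conjugate by a translation `t_w` to `t_u h`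
for some `u ∈ U`; in particular if `h` has no nonzero fixed vector then `g` is conjugate
by a translation to the permutation induced by `h`. -/
theorem affine_conj_translation (p d : ℕ) [Fact p.Prime] (V : Type*) [AddCommGroup V]
    [Module (ZMod p) V] [Module.Finite (ZMod p) V]
    (hdim : Module.finrank (ZMod p) V = d)
    (h : V ≃ₗ[ZMod p] V) (v : V)
    (g : Equiv.Perm V) (hg : ∀ x : V, g x = h (x + v)) :
    (∃ (w u : V), u ∈ LinearMap.ker (((h.toLinearMap : Module.End (ZMod p) V) - 1) ^ d) ∧
      ∀ x : V, g (x + w) - w = h (x + u)) ∧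
    (LinearMap.ker ((h.toLinearMap : Module.End (ZMod p) V) - 1) = ⊥ →
      ∃ w : V, ∀ x : V, g (x + w) - w = h x) := by
  set N : Module.End (ZMod p) V := (h.toLinearMap : Module.End (ZMod p) V) - 1 with hN
  have hNx : ∀ x, N x = h x - x := fun x => by simp [hN]
  have key : ∃ (w u : V), u ∈ LinearMap.ker (N ^ d) ∧ ∀ x : V, g (x + w) - w = h (x + u) := by
    obtain ⟨n, hn⟩ := Filter.eventually_atTop.mp (LinearMap.eventually_isCompl_ker_pow_range_pow N)
    have hc := hn (n + d + 1) (by omega)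
    have hker : LinearMap.ker (N ^ (n + d + 1)) = LinearMap.ker (N ^ d) := by
      have := Module.End.ker_pow_eq_ker_pow_finrank_of_le (f := N) (m := n + d + 1) (by omega)
      rwa [hdim] at this
    have hmem : h v ∈ LinearMap.ker (N ^ (n + d + 1)) ⊔ LinearMap.range (N ^ (n + d + 1)) := by
      rw [hc.sup_eq_top]; trivial
    obtain ⟨a, ha, b, ⟨c, hb⟩, hab⟩ := Submodule.mem_sup.mp hmem
    rw [hker] at ha
    have hcomm : Commute (N ^ d) (h.toLinearMap : Module.End (ZMod p) V) := by
      apply Commute.pow_left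
      rw [hN]
      exact (Commute.refl _).sub_left (Commute.one_left _)
    refine ⟨-((N ^ (n + d)) c), h.symm a, ?_, ?_⟩
    · rw [LinearMap.mem_ker] at ha ⊢
      apply h.injective
      have := LinearMap.congr_fun hcomm.eq (h.symm a)
      simp only [Module.End.mul_apply, LinearEquiv.coe_coe, LinearEquiv.apply_symm_apply] at this
      rw [← this, ha, map_zero]
    · intro x
      rw [pow_succ', Module.End.mul_apply, hNx] at hb
      rw [hg, map_add, map_add, map_add, map_neg, ← hab, ← hb, LinearEquiv.apply_symm_apply]
      abel
  refine ⟨key, fun hbot => ?_⟩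
  obtain ⟨w, u, hu, hx⟩ := key
  have hinj : Function.Injective (N ^ d) := by
    rw [Module.End.coe_pow]
    exact (LinearMap.ker_eq_bot.mp hbot).iterate d
  have hu0 : u = 0 := hinj (by rw [LinearMap.mem_ker.mp hu, map_zero])
  exact ⟨w, fun x => by rw [hx, hu0, add_zero]⟩
end

section
/- Let p be a prime, V a d-dimensional vector space over 𝔽_p, h a linear automorphism of V, and v ∈ U where U = ker((h − 1)^d). Let W = range((h − 1)^d) and let W′ be an h-invariant subspace of W. Then the subgroup U + W′ of V is invariant under the affine transformation g = t_v h, and the number of orbits of the cyclic group ⟨g⟩ on U + W′ is at least t·r, where t is the number of orbits of ⟨g⟩ on U and r is the number of orbits of ⟨h⟩ on W′. -/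
/-- The number of cycles (orbits of the generated cyclic group, fixed points counting as
cycles of length 1) of a permutation `g` on a subset `S`. -/
noncomputable def cyclesOn {V : Type*} (g : Equiv.Perm V) (S : Set V) : ℕ :=
  Nat.card {O : Set V // ∃ x ∈ S, O = {y | g.SameCycle x y}}

/-- With `U = ker ((h-1)^d)`, `W = range ((h-1)^d)`, `v ∈ U`, and `W'` an
`h`-invariant subspace of `W`, the subspace `U + W'` is invariant under `g = t_v h`, and
the number of `⟨g⟩`-orbits on `U + W'` is at least `t * r` where `t` is the number of
`⟨g⟩`-orbits on `U` and `r` the number of `⟨h⟩`-orbits on `W'`. -/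
theorem affine_invariant_orbit_bound (p d : ℕ) [Fact p.Prime] (V : Type*) [AddCommGroup V]
    [Module (ZMod p) V] [Module.Finite (ZMod p) V]
    (hdim : Module.finrank (ZMod p) V = d)
    (h : V ≃ₗ[ZMod p] V)
    (U W : Submodule (ZMod p) V)
    (hUdef : U = LinearMap.ker (((h.toLinearMap : Module.End (ZMod p) V) - 1) ^ d))
    (hWdef : W = LinearMap.range (((h.toLinearMap : Module.End (ZMod p) V) - 1) ^ d))
    (v : V) (hv : v ∈ U)
    (W' : Submodule (ZMod p) V) (hW'le : W' ≤ W) (hW'inv : ∀ x ∈ W', h x ∈ W')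
    (g : Equiv.Perm V) (hg : ∀ x : V, g x = h (x + v)) :
    (∀ x ∈ (U ⊔ W' : Submodule (ZMod p) V), g x ∈ (U ⊔ W' : Submodule (ZMod p) V)) ∧
    cyclesOn g (U : Set V) * cyclesOn h.toEquiv (W' : Set V) ≤
      cyclesOn g ((U ⊔ W' : Submodule (ZMod p) V) : Set V) := by
  classical
  have : Finite V := Module.finite_of_finite (ZMod p)
  -- invariance of U under h
  have hU : ∀ x ∈ U, h x ∈ U := by
    intro x hx
    rw [hUdef, LinearMap.mem_ker] at hx ⊢
    have hc : Commute (((h.toLinearMap : Module.End (ZMod p) V) - 1) ^ d)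
        (h.toLinearMap : Module.End (ZMod p) V) :=
      ((Commute.refl _).sub_left (Commute.one_left _)).pow_left d
    have := congrArg (fun f : Module.End (ZMod p) V => f x) hc.eq
    simp only [Module.End.mul_apply, hx, map_zero] at this
    exact this
  have hdisj : ∀ x ∈ U, x ∈ W → x = 0 := by
    intro x hx hxW
    rw [hUdef, LinearMap.mem_ker] at hx
    rw [hWdef] at hxW
    obtain ⟨y, rfl⟩ := hxW
    rw [← Module.End.mul_apply, ← pow_add] at hx
    have hk := Module.End.ker_pow_eq_ker_pow_finrank_of_le
      (f := ((h.toLinearMap : Module.End (ZMod p) V) - 1)) (m := d + d) (by omega)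
    rw [hdim] at hk
    have : y ∈ LinearMap.ker (((h.toLinearMap : Module.End (ZMod p) V) - 1) ^ (d + d)) := hx
    rw [hk] at this
    exact this
  have hgU : ∀ x ∈ U, g x ∈ U := fun x hx => by
    rw [hg]; exact hU _ (U.add_mem hx hv)
  have hgadd : ∀ x w, g (x + w) = g x + h w := by
    intro x w
    rw [hg, hg, ← map_add]
    congr 1
    abel
  have hgUn : ∀ (n : ℕ), ∀ x ∈ U, (g ^ n) x ∈ U := by
    intro n
    induction n with
    | zero => intro x hx; simpa using hx
    | succ n ih => intro x hx; rw [pow_succ', Equiv.Perm.mul_apply]; exact hgU _ (ih x hx)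
  have hhWn : ∀ (n : ℕ), ∀ x ∈ W', ((h.toEquiv : Equiv.Perm V) ^ n) x ∈ W' := by
    intro n
    induction n with
    | zero => intro x hx; simpa using hx
    | succ n ih => intro x hx; rw [pow_succ', Equiv.Perm.mul_apply]; exact hW'inv _ (ih x hx)
  have hgaddn : ∀ (n : ℕ) x w,
      (g ^ n) (x + w) = (g ^ n) x + ((h.toEquiv : Equiv.Perm V) ^ n) w := by
    intro n x w
    induction n with
    | zero => simp
    | succ n ih =>
      simp only [pow_succ', Equiv.Perm.mul_apply]
      rw [ih, hgadd]
      rfl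
  refine ⟨?_, ?_⟩
  · intro x hx
    obtain ⟨u, hu, w, hw, rfl⟩ := Submodule.mem_sup.1 hx
    rw [hgadd]
    exact Submodule.add_mem_sup (hgU u hu) (hW'inv w hw)
  · unfold cyclesOn
    rw [← Nat.card_prod]
    refine Nat.card_le_card_of_injective
      (fun q => ⟨{y | g.SameCycle (q.1.2.choose + q.2.2.choose) y}, _,
        Submodule.add_mem_sup q.1.2.choose_spec.1 q.2.2.choose_spec.1, rfl⟩) ?_
    rintro ⟨a, b⟩ ⟨a', b'⟩ hab
    have hab' := congrArg Subtype.val hab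
    have ha := a.2.choose_spec
    have hb := b.2.choose_spec
    have ha' := a'.2.choose_spec
    have hb' := b'.2.choose_spec
    simp only at hab'
    generalize a.2.choose = u at *
    generalize b.2.choose = w at *
    generalize a'.2.choose = u' at *
    generalize b'.2.choose = w' at *
    have hs : g.SameCycle (u + w) (u' + w') := by
      have : u' + w' ∈ {y | g.SameCycle (u + w) y} := by
        rw [hab']; exact Equiv.Perm.SameCycle.refl _ _
      exact this
    obtain ⟨n, hn⟩ := hs.exists_nat_pow_eq
    rw [hgaddn] at hn
    have h1 : (g ^ n) u - u' = w' - ((h.toEquiv : Equiv.Perm V) ^ n) w := by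
      rw [sub_eq_sub_iff_add_eq_add, hn, add_comm]
    have h0 : (g ^ n) u - u' = 0 := by
      apply hdisj
      · exact U.sub_mem (hgUn n u ha.1) ha'.1
      · rw [h1]; exact hW'le (W'.sub_mem hb'.1 (hhWn n w hb.1))
    have e1 : g.SameCycle u u' := ⟨n, by simpa using sub_eq_zero.1 h0⟩
    have e2 : Equiv.Perm.SameCycle (h.toEquiv : Equiv.Perm V) w w' := by
      rw [h0] at h1
      exact ⟨n, by simpa using (sub_eq_zero.1 h1.symm).symm⟩
    have key : ∀ (k : Equiv.Perm V) (x y : V), k.SameCycle x y →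
        {z | k.SameCycle x z} = {z | k.SameCycle y z} := fun k x y hxy =>
      Set.ext fun z => ⟨fun hz => hxy.symm.trans hz, fun hz => hxy.trans hz⟩
    refine Prod.ext (Subtype.ext ?_) (Subtype.ext ?_)
    · exact ha.2.trans ((key _ _ _ e1).trans ha'.2.symm)
    · exact hb.2.trans ((key _ _ _ e2).trans hb'.2.symm)
end

section
/- Let p be a prime, V a d-dimensional vector space over 𝔽_p, h a linear automorphism of V, and v ∈ U where U = ker((h − 1)^d). Let W = range((h − 1)^d), suppose U ≠ V, and let W′ be a nonzero h-invariant subspace of W. Suppose the affine transformation g = t_v h has at most four cycles on V, that g has t cycles on U, and that h has r cycles on W′. Then t·r ≤ 4 with t ≥ 1 and r ≥ 2; moreover, if t ≥ 2 then t = r = 2, W′ = W, and the cyclic group ⟨h⟩ acts transitively on W ∖ {0}. -/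
theorem cyclesOn_eq {V : Type*} (g : Equiv.Perm V) (S : Set V) :
    cyclesOn g S = ((fun x => {y | g.SameCycle x y}) '' S).ncard := by
  unfold cyclesOn
  rw [← Nat.card_coe_set_eq]
  congr 1
  have : {O : Set V | ∃ x ∈ S, O = {y | g.SameCycle x y}}
      = ((fun x => {y | g.SameCycle x y}) '' S) := by
    ext O
    constructor
    · rintro ⟨x, hx, rfl⟩
      exact ⟨x, hx, rfl⟩
    · rintro ⟨x, hx, rfl⟩
      exact ⟨x, hx, rfl⟩
  rw [← this]
  rfl

theorem sameCycle_set_eq {V : Type*} (g : Equiv.Perm V) (x y : V) :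
    ({z | g.SameCycle x z} : Set V) = {z | g.SameCycle y z} ↔ g.SameCycle x y := by
  constructor
  · intro e
    have : y ∈ ({z | g.SameCycle y z} : Set V) := Equiv.Perm.SameCycle.refl g y
    rw [← e] at this
    exact this
  · intro e
    ext z
    exact ⟨fun k => e.symm.trans k, fun k => e.trans k⟩

theorem cycles_prod_le {V : Type*} [Finite V] [AddCommGroup V] (g k : Equiv.Perm V) (A B : Set V)
    (H : ∀ a ∈ A, ∀ b ∈ B, ∀ a' ∈ A, ∀ b' ∈ B, g.SameCycle (a + b) (a' + b') →
      g.SameCycle a a' ∧ k.SameCycle b b') :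
    cyclesOn g A * cyclesOn k B ≤ cyclesOn g Set.univ := by
  rw [cyclesOn_eq, cyclesOn_eq, cyclesOn_eq, ← Set.ncard_prod]
  have h1 : ∀ q ∈ ((fun x => {y | g.SameCycle x y}) '' A) ×ˢ ((fun x => {y | k.SameCycle x y}) '' B),
      ∃ s : V × V, s.1 ∈ A ∧ s.2 ∈ B ∧ {y | g.SameCycle s.1 y} = q.1 ∧
        {y | k.SameCycle s.2 y} = q.2 := by
    rintro ⟨_, _⟩ ⟨⟨a, ha, rfl⟩, ⟨b, hb, rfl⟩⟩
    exact ⟨(a, b), ha, hb, rfl, rfl⟩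
  choose! f hA hB hf1 hf2 using h1
  refine Set.ncard_le_ncard_of_injOn (fun q => {y | g.SameCycle ((f q).1 + (f q).2) y}) ?_ ?_
    (Set.toFinite _)
  · intro q _
    exact ⟨_, trivial, rfl⟩
  · intro q hq q' hq' e
    have e' := (sameCycle_set_eq g _ _).1 e
    obtain ⟨e1, e2⟩ := H _ (hA q hq) _ (hB q hq) _ (hA q' hq') _ (hB q' hq') e'
    refine Prod.ext ?_ ?_
    · rw [← hf1 q hq, ← hf1 q' hq']
      exact (sameCycle_set_eq g _ _).2 e1
    · rw [← hf2 q hq, ← hf2 q' hq']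
      exact (sameCycle_set_eq k _ _).2 e2

/-- Claim 1: With `U = ker ((h-1)^d)`, `W = range ((h-1)^d)`, `v ∈ U`,
`U ≠ V`, and `W'` a nonzero `h`-invariant subspace of `W`: if `g = t_v h` has at most
four cycles on `V`, `t` cycles on `U`, and `h` has `r` cycles on `W'`, then `t * r ≤ 4`
with `t ≥ 1`, `r ≥ 2`; and if `t ≥ 2` then `t = r = 2`, `W' = W` and `⟨h⟩` is transitive
on `W \ {0}`. -/
theorem affine_four_cycles_claim1 (p d : ℕ) [Fact p.Prime] (V : Type*) [AddCommGroup V]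
    [Module (ZMod p) V] [Module.Finite (ZMod p) V]
    (hdim : Module.finrank (ZMod p) V = d)
    (h : V ≃ₗ[ZMod p] V)
    (U W : Submodule (ZMod p) V)
    (hUdef : U = LinearMap.ker (((h.toLinearMap : Module.End (ZMod p) V) - 1) ^ d))
    (hWdef : W = LinearMap.range (((h.toLinearMap : Module.End (ZMod p) V) - 1) ^ d))
    (hUne : U ≠ ⊤)
    (v : V) (hv : v ∈ U)
    (W' : Submodule (ZMod p) V) (hW'ne : W' ≠ ⊥) (hW'le : W' ≤ W)
    (hW'inv : ∀ x ∈ W', h x ∈ W')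
    (g : Equiv.Perm V) (hg : ∀ x : V, g x = h (x + v))
    (hfour : cyclesOn g (Set.univ : Set V) ≤ 4)
    (t r : ℕ) (ht : t = cyclesOn g (U : Set V)) (hr : r = cyclesOn h.toEquiv (W' : Set V)) :
    t * r ≤ 4 ∧ 1 ≤ t ∧ 2 ≤ r ∧
    (2 ≤ t → t = 2 ∧ r = 2 ∧ W' = W ∧
      ∀ x y : V, x ∈ W → y ∈ W → x ≠ 0 → y ≠ 0 → ∃ n : ℤ, (h.toEquiv ^ n) x = y) := by
  have : NeZero p := ⟨(Fact.out : p.Prime).ne_zero⟩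
  have hfin : Finite V := Module.finite_of_finite (ZMod p)
  have hdisj : ∀ x, x ∈ U → x ∈ W → x = 0 := by
    intro x hxU hxW
    rw [hUdef, LinearMap.mem_ker] at hxU
    rw [hWdef] at hxW
    obtain ⟨y, rfl⟩ := hxW
    rw [← Module.End.mul_apply, ← pow_add] at hxU
    have hk := Module.End.ker_pow_eq_ker_pow_finrank_of_le
      (f := (h.toLinearMap : Module.End (ZMod p) V) - 1) (m := d + d) (by omega)
    rw [hdim] at hk
    have : y ∈ LinearMap.ker (((h.toLinearMap : Module.End (ZMod p) V) - 1) ^ d) := by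
      rw [← hk]; exact hxU
    exact this
  have hcomm : Commute (h.toLinearMap : Module.End (ZMod p) V)
      (((h.toLinearMap : Module.End (ZMod p) V) - 1) ^ d) :=
    ((Commute.refl _).sub_right (Commute.one_right _)).pow_right d
  have hcx : ∀ x, (((h.toLinearMap : Module.End (ZMod p) V) - 1) ^ d) (h x)
      = h ((((h.toLinearMap : Module.End (ZMod p) V) - 1) ^ d) x) := fun x =>
    (LinearMap.congr_fun hcomm.eq x).symm
  have hU : ∀ x ∈ U, h x ∈ U := by
    intro x hx
    rw [hUdef, LinearMap.mem_ker] at hx ⊢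
    rw [hcx, hx, map_zero]
  have hW : ∀ x ∈ W, h x ∈ W := by
    intro x hx
    rw [hWdef] at hx ⊢
    obtain ⟨y, rfl⟩ := hx
    exact ⟨h y, hcx y⟩
  have hpow : ∀ (X : Submodule (ZMod p) V), (∀ x ∈ X, h x ∈ X) → ∀ (n : ℕ), ∀ x ∈ X,
      (h.toEquiv ^ n) x ∈ X := by
    intro X hX n
    induction n with
    | zero => intro x hx; simpa using hx
    | succ n ih =>
      intro x hx
      rw [pow_succ', Equiv.Perm.mul_apply]
      exact hX _ (ih x hx)
  have hgU : ∀ (n : ℕ), ∀ x ∈ U, (g ^ n) x ∈ U := by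
    intro n
    induction n with
    | zero => intro x hx; simpa using hx
    | succ n ih =>
      intro x hx
      rw [pow_succ', Equiv.Perm.mul_apply, hg]
      exact hU _ (U.add_mem (ih x hx) hv)
  have hsplit : ∀ (n : ℕ) (a b : V), (g ^ n) (a + b) = (g ^ n) a + (h.toEquiv ^ n) b := by
    intro n
    induction n with
    | zero => intro a b; simp
    | succ n ih =>
      intro a b
      rw [pow_succ', pow_succ', Equiv.Perm.mul_apply, Equiv.Perm.mul_apply,
        Equiv.Perm.mul_apply, ih, hg, hg]
      change h _ = h _ + h _
      rw [← map_add]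
      congr 1
      abel
  have hmain : cyclesOn g (U : Set V) * cyclesOn h.toEquiv (W : Set V) ≤ 4 := by
    refine le_trans (cycles_prod_le g h.toEquiv _ _ ?_) hfour
    intro a ha b hb a' ha' b' hb' hs
    obtain ⟨n, hn⟩ := hs.exists_nat_pow_eq
    rw [hsplit] at hn
    have e : (g ^ n) a - a' = b' - (h.toEquiv ^ n) b := by
      rw [sub_eq_sub_iff_add_eq_add, hn, add_comm]
    have z := hdisj _ (U.sub_mem (hgU n a ha) ha')
      (e ▸ W.sub_mem hb' (hpow W hW n b hb))
    have z' := e ▸ z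
    exact ⟨⟨n, by simpa using sub_eq_zero.1 z⟩, ⟨n, by simpa using (sub_eq_zero.1 z').symm⟩⟩
  have ht1 : 1 ≤ t := by
    rw [ht, cyclesOn_eq, Nat.one_le_iff_ne_zero, ← Nat.pos_iff_ne_zero,
      Set.ncard_pos (Set.toFinite _)]
    exact ⟨_, 0, U.zero_mem, rfl⟩
  have hzero : ∀ x : V, Equiv.Perm.SameCycle h.toEquiv 0 x → x = 0 := by
    intro x hx
    obtain ⟨n, hn⟩ := hx.exists_nat_pow_eq
    have := hpow ⊥ (by simp) n 0 (by simp)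
    rw [hn] at this
    simpa using this
  have hr2 : 2 ≤ r := by
    obtain ⟨w, hw, hw0⟩ := (Submodule.ne_bot_iff _).1 hW'ne
    rw [hr, cyclesOn_eq]
    change 1 < _
    rw [Set.one_lt_ncard_iff (Set.toFinite _)]
    refine ⟨_, _, ⟨0, W'.zero_mem, rfl⟩, ⟨w, hw, rfl⟩, ?_⟩
    intro e
    exact hw0 (hzero w ((sameCycle_set_eq _ _ _).1 e))
  have hsub : ((fun x => {y | Equiv.Perm.SameCycle h.toEquiv x y}) '' (W' : Set V)) ⊆
      ((fun x => {y | Equiv.Perm.SameCycle h.toEquiv x y}) '' (W : Set V)) := Set.image_mono hW'le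
  have hle : r ≤ cyclesOn h.toEquiv (W : Set V) := by
    rw [hr, cyclesOn_eq, cyclesOn_eq]
    exact Set.ncard_le_ncard hsub (Set.toFinite _)
  rw [← ht] at hmain
  refine ⟨le_trans (Nat.mul_le_mul_left t hle) hmain, ht1, hr2, ?_⟩
  intro ht2
  have hrW : cyclesOn h.toEquiv (W : Set V) = 2 := by nlinarith
  have hr' : r = 2 := by omega
  refine ⟨by rw [hrW] at hmain; omega, hr', ?_, ?_⟩
  · refine le_antisymm hW'le ?_
    intro x hx
    have heq := Set.eq_of_subset_of_ncard_le hsub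
      (by rw [← cyclesOn_eq, ← cyclesOn_eq, hrW, ← hr, hr']) (Set.toFinite _)
    have hx' : {y | Equiv.Perm.SameCycle h.toEquiv x y} ∈
        ((fun x => {y | Equiv.Perm.SameCycle h.toEquiv x y}) '' (W : Set V)) := ⟨x, hx, rfl⟩
    rw [← heq] at hx'
    obtain ⟨y, hy, e⟩ := hx'
    obtain ⟨n, hn⟩ := ((sameCycle_set_eq _ _ _).1 e).exists_nat_pow_eq
    rw [← hn]
    exact hpow W' hW'inv n y hy
  · intro x y hx hy hx0 hy0
    by_contra hne
    have hxy : ¬ Equiv.Perm.SameCycle h.toEquiv x y := hne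
    have : 2 < cyclesOn h.toEquiv (W : Set V) := by
      rw [cyclesOn_eq, Set.two_lt_ncard_iff (Set.toFinite _)]
      refine ⟨_, _, _, ⟨0, W.zero_mem, rfl⟩, ⟨x, hx, rfl⟩, ⟨y, hy, rfl⟩, ?_, ?_, ?_⟩
      · exact fun e => hx0 (hzero x ((sameCycle_set_eq _ _ _).1 e))
      · exact fun e => hy0 (hzero y ((sameCycle_set_eq _ _ _).1 e))
      · exact fun e => hxy ((sameCycle_set_eq _ _ _).1 e)
    omega
end

section
/- Let p be a prime, V a d-dimensional vector space over 𝔽_p, h a linear automorphism of V, v ∈ U where U = ker((h − 1)^d), and g = t_v h. Suppose W₁ and W₂ are nonzero simple 𝔽_p[h]-submodules of W = range((h − 1)^d) with W₁ ∩ W₂ = 0, and suppose g has at most four cycles on V. Then, writing a = dim U, a₁ = dim W₁, a₂ = dim W₂ with a₁ ≤ a₂: V = U ⊕ W₁ ⊕ W₂ (internal direct sum), p = 2, gcd(a₁, a₂) = 1, a ≤ 2 ≤ a₁ < a₂ (so d ≥ 5), the cyclic group ⟨h⟩ acts transitively on Wᵢ ∖ {0} for i = 1, 2, the minimal polynomial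 of the restriction of h to U is (X − 1)^a, and g has exactly four cycles on V. -/
open Polynomial

/-- A nonzero `h`-invariant subspace that contains no proper nonzero `h`-invariant
subspace, i.e. a simple `𝔽_p⟨h⟩`-submodule. -/
def IsSimpleInvariant {p : ℕ} {V : Type*} [AddCommGroup V] [Module (ZMod p) V]
    (h : V ≃ₗ[ZMod p] V) (W : Submodule (ZMod p) V) : Prop :=
  W ≠ ⊥ ∧ (∀ x ∈ W, h x ∈ W) ∧
    ∀ W' : Submodule (ZMod p) V, W' ≤ W → (∀ x ∈ W', h x ∈ W') → W' = ⊥ ∨ W' = W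

open Function in
theorem aux_minimalPeriod {α : Type*} [Finite α] (f : α → α) (hf : Injective f) (x : α)
    (S : Set α) (h1 : ∀ n, f^[n] x ∈ S) (h2 : ∀ y ∈ S, ∃ n, f^[n] x = y) :
    minimalPeriod f x = Nat.card S ∧ 0 < minimalPeriod f x := by
  have hper : x ∈ periodicPts f := hf.mem_periodicPts x
  have hpos := minimalPeriod_pos_of_mem_periodicPts hper
  refine ⟨?_, hpos⟩
  let F : Fin (minimalPeriod f x) → S := fun k => ⟨f^[k] x, h1 k⟩
  have hF : Bijective F := by
    constructor
    · intro a b hab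
      have : f^[a] x = f^[b] x := congrArg Subtype.val hab
      exact Fin.ext (iterate_injOn_Iio_minimalPeriod a.2 b.2 this)
    · rintro ⟨y, hy⟩
      obtain ⟨n, hn⟩ := h2 y hy
      refine ⟨⟨n % minimalPeriod f x, Nat.mod_lt _ hpos⟩, ?_⟩
      apply Subtype.ext
      simp only [F]
      rw [iterate_mod_minimalPeriod_eq, hn]
  have := Nat.card_congr (Equiv.ofBijective F hF)
  simpa using this

theorem aux_cyclesOn {V : Type*} (g : Equiv.Perm V) :
    cyclesOn g (Set.univ : Set V) = Nat.card (Quotient (Equiv.Perm.SameCycle.setoid g)) := by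
  unfold cyclesOn
  symm
  let F : Quotient (Equiv.Perm.SameCycle.setoid g) →
      {O : Set V // ∃ x ∈ (Set.univ : Set V), O = {y | g.SameCycle x y}} :=
    Quotient.lift (fun x => ⟨{y | g.SameCycle x y}, x, trivial, rfl⟩) (by
      intro a b hab
      have hab' : g.SameCycle a b := hab
      apply Subtype.ext
      ext y
      exact ⟨fun h => hab'.symm.trans h, fun h => hab'.trans h⟩)
  refine Nat.card_congr (Equiv.ofBijective F ⟨?_, ?_⟩)
  · intro a b
    induction a using Quotient.inductionOn
    induction b using Quotient.inductionOn
    rename_i a b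
    intro hab
    have h1 : {y | g.SameCycle a y} = {y | g.SameCycle b y} := congrArg Subtype.val hab
    have h2 : b ∈ {y | g.SameCycle a y} := by
      rw [h1]; exact Equiv.Perm.SameCycle.refl g b
    exact Quotient.sound h2
  · rintro ⟨O, x, hx, rfl⟩
    exact ⟨Quotient.mk _ x, rfl⟩

theorem aux_four {V : Type*} [Finite V] (g : Equiv.Perm V)
    (P : Fin 4 → V) (hP : ∀ i j, ∀ n : ℕ, g^[n] (P i) = P j → i = j)
    (hfour : cyclesOn g (Set.univ : Set V) ≤ 4) :
    cyclesOn g (Set.univ : Set V) = 4 ∧ ∀ y, ∃ i, ∃ n : ℕ, g^[n] (P i) = y := by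
  rw [aux_cyclesOn] at *
  let F : Fin 4 → Quotient (Equiv.Perm.SameCycle.setoid g) := fun i => Quotient.mk _ (P i)
  have key : ∀ x y, g.SameCycle x y → ∃ n : ℕ, g^[n] x = y := by
    intro x y hxy
    obtain ⟨n, hn⟩ := hxy.exists_nat_pow_eq
    exact ⟨n, by rw [← hn, Equiv.Perm.coe_pow]⟩
  have hF : Function.Injective F := by
    intro i j hij
    obtain ⟨n, hn⟩ := key _ _ (Quotient.exact hij)
    exact hP i j n hn
  have hb : Function.Bijective F := hF.bijective_of_nat_card_le (by simpa using hfour)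
  refine ⟨?_, fun y => ?_⟩
  · have := Nat.card_congr (Equiv.ofBijective F hb)
    simpa using this.symm
  · obtain ⟨i, hi⟩ := hb.2 (Quotient.mk _ y)
    obtain ⟨n, hn⟩ := key _ _ (Quotient.exact hi)
    exact ⟨i, n, hn⟩

theorem aux_char_two {V : Type*} [AddCommGroup V] [Module (ZMod 2) V]
    (f : Module.End (ZMod 2) V) (k : ℕ) : (f - 1) ^ (2 ^ k) = f ^ (2 ^ k) + 1 := by
  have h2 : ∀ e : Module.End (ZMod 2) V, e + e = 0 := by
    intro e
    have : (2 : ZMod 2) • e = 0 := by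
      rw [show (2 : ZMod 2) = 0 from rfl, zero_smul]
    rwa [two_smul] at this
  induction k with
  | zero =>
    simp only [pow_zero, pow_one]
    have := h2 1
    rw [sub_eq_iff_eq_add, add_assoc, this, add_zero]
  | succ k ih =>
    rw [pow_succ, pow_mul, ih, pow_mul]
    have := h2 (f ^ 2 ^ k)
    calc (f ^ 2 ^ k + 1) ^ 2 = (f ^ 2 ^ k) ^ 2 + (f ^ 2 ^ k + f ^ 2 ^ k) + 1 := by
          noncomm_ring
      _ = _ := by rw [this, add_zero]

theorem aux_iter {V : Type*} [AddCommGroup V] [Module (ZMod 2) V]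
    (f : Module.End (ZMod 2) V) (g : V → V) (v : V) (hg : ∀ x, g x = f (x + v)) (k : ℕ) :
    ∀ x, g^[2 ^ k] x = (f ^ (2 ^ k)) x + f (((f - 1 : Module.End (ZMod 2) V) ^ (2 ^ k - 1)) v) := by
  induction k with
  | zero => intro x; simp [hg]
  | succ k ih =>
    intro x
    have e : 2 ^ (k + 1) - 1 = 2 ^ k + (2 ^ k - 1) := by
      have := Nat.one_le_two_pow (n := k)
      rw [pow_succ]; omega
    rw [e, pow_add (f - 1), aux_char_two f k]
    rw [show 2 ^ (k + 1) = 2 ^ k + 2 ^ k by ring, Function.iterate_add_apply, ih, ih]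
    set y := ((f - 1 : Module.End (ZMod 2) V) ^ (2 ^ k - 1)) v
    have c : (f ^ 2 ^ k) (f y) = f ((f ^ 2 ^ k) y) := by
      have e : f ^ 2 ^ k * f = f * f ^ 2 ^ k := by rw [← pow_succ, ← pow_succ']
      exact LinearMap.congr_fun e y
    simp only [Module.End.mul_apply, LinearMap.add_apply, map_add, Module.End.one_apply, pow_add, c]
    abel

theorem aux_minpoly {p : ℕ} [Fact p.Prime] {U : Type*} [AddCommGroup U] [Module (ZMod p) U]
    [Module.Finite (ZMod p) U] (f : Module.End (ZMod p) U) (a : ℕ) (h1 : (f - 1) ^ a = 0)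
    (h2 : 0 < a → (f - 1) ^ (a - 1) ≠ 0) :
    minpoly (ZMod p) f = (X - 1 : Polynomial (ZMod p)) ^ a := by
  have hp : Prime (X - 1 : Polynomial (ZMod p)) := by
    have := prime_X_sub_C (1 : ZMod p)
    rwa [map_one] at this
  have hm : (X - 1 : Polynomial (ZMod p)).Monic := by
    have := monic_X_sub_C (1 : ZMod p)
    rwa [map_one] at this
  have hd : minpoly (ZMod p) f ∣ (X - 1) ^ a := by
    apply minpoly.dvd
    simp [h1]
  obtain ⟨i, hi, hass⟩ := (dvd_prime_pow hp a).1 hd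
  have heq := eq_of_monic_of_associated (minpoly.monic (Algebra.IsIntegral.isIntegral f))
    (hm.pow i) hass
  have hz : (f - 1) ^ i = 0 := by
    have := minpoly.aeval (ZMod p) f
    rw [heq] at this
    simpa using this
  rcases hi.lt_or_eq with hlt | rfl
  · exact absurd (pow_eq_zero_of_le (by omega : i ≤ a - 1) hz) (h2 (by omega))
  · exact heq

theorem aux_restrict {p : ℕ} {V : Type*} [AddCommGroup V] [Module (ZMod p) V]
    (f : Module.End (ZMod p) V) (U : Submodule (ZMod p) V) (hU : ∀ x ∈ U, f x ∈ U) (k : ℕ)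
    (u : U) : ((((f.restrict hU - 1 : Module.End (ZMod p) U) ^ k) u : U) : V) = ((f - 1 : Module.End (ZMod p) V) ^ k) u := by
  induction k with
  | zero => simp
  | succ k ih =>
    rw [pow_succ', pow_succ', Module.End.mul_apply, Module.End.mul_apply, ← ih]
    simp

theorem aux_coprime {V : Type*} (h : V → V) (hi : Function.Injective h) (x₁ x₂ : V)
    (n : ℕ) (h1 : h^[n] x₁ = x₁) (h2 : h^[n] x₂ = h x₂) :
    Nat.gcd (Function.minimalPeriod h x₁) (Function.minimalPeriod h x₂) = 1 := by
  have d1 : Function.minimalPeriod h x₁ ∣ n := Function.IsPeriodicPt.minimalPeriod_dvd h1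
  rcases n with _ | k
  · have d2 : Function.minimalPeriod h x₂ ∣ 1 :=
      Function.IsPeriodicPt.minimalPeriod_dvd (by
        show h^[1] x₂ = x₂
        simpa using h2.symm)
    rw [Nat.dvd_one.1 d2]; simp
  · have d2 : Function.minimalPeriod h x₂ ∣ k :=
      Function.IsPeriodicPt.minimalPeriod_dvd (by
        rw [Function.iterate_succ_apply'] at h2
        exact hi h2)
    have e1 := (Nat.gcd_dvd_left _ (Function.minimalPeriod h x₂)).trans d1
    have e2 := (Nat.gcd_dvd_right (Function.minimalPeriod h x₁) _).trans d2
    exact Nat.dvd_one.1 ((Nat.dvd_add_right e2).1 e1)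

/-- Claim 3: Suppose `W₁, W₂` are nonzero simple `𝔽_p⟨h⟩`-submodules of
`W = range((h-1)^d)` with `W₁ ∩ W₂ = 0`, `v ∈ U = ker((h-1)^d)`, and `g = t_v h` has at
most four cycles on `V`.  Then `V = U ⊕ W₁ ⊕ W₂`, `p = 2`, `gcd(a₁,a₂) = 1`,
`a ≤ 2 ≤ a₁ < a₂` (so `d ≥ 5`), `⟨h⟩` is transitive on each `Wᵢ \ {0}`, `h` acts on `U`
as the Jordan block `J_a`, and `g` has exactly four cycles. -/
theorem affine_four_cycles_claim3 (p d : ℕ) [Fact p.Prime] (V : Type*) [AddCommGroup V]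
    [Module (ZMod p) V] [Module.Finite (ZMod p) V]
    (hdim : Module.finrank (ZMod p) V = d)
    (h : V ≃ₗ[ZMod p] V)
    (U W : Submodule (ZMod p) V)
    (hUdef : U = LinearMap.ker (((h.toLinearMap : Module.End (ZMod p) V) - 1) ^ d))
    (hWdef : W = LinearMap.range (((h.toLinearMap : Module.End (ZMod p) V) - 1) ^ d))
    (hUinv : ∀ x ∈ U, h x ∈ U)
    (v : V) (hv : v ∈ U)
    (g : Equiv.Perm V) (hg : ∀ x : V, g x = h (x + v))
    (W₁ W₂ : Submodule (ZMod p) V)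
    (hW₁ : IsSimpleInvariant h W₁) (hW₂ : IsSimpleInvariant h W₂)
    (hW₁le : W₁ ≤ W) (hW₂le : W₂ ≤ W) (hW₁₂ : W₁ ⊓ W₂ = ⊥)
    (a a₁ a₂ : ℕ) (ha : a = Module.finrank (ZMod p) U)
    (ha₁ : a₁ = Module.finrank (ZMod p) W₁) (ha₂ : a₂ = Module.finrank (ZMod p) W₂)
    (hle : a₁ ≤ a₂)
    (hfour : cyclesOn g (Set.univ : Set V) ≤ 4) :
    DirectSum.IsInternal (![U, W₁, W₂] : Fin 3 → Submodule (ZMod p) V) ∧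
    p = 2 ∧ Nat.gcd a₁ a₂ = 1 ∧ a ≤ 2 ∧ 2 ≤ a₁ ∧ a₁ < a₂ ∧ 5 ≤ d ∧
    (∀ x y : V, x ∈ W₁ → y ∈ W₁ → x ≠ 0 → y ≠ 0 → ∃ n : ℤ, (h.toEquiv ^ n) x = y) ∧
    (∀ x y : V, x ∈ W₂ → y ∈ W₂ → x ≠ 0 → y ≠ 0 → ∃ n : ℤ, (h.toEquiv ^ n) x = y) ∧
    minpoly (ZMod p) (h.toLinearMap.restrict hUinv) = (X - 1 : Polynomial (ZMod p)) ^ a ∧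
    cyclesOn g (Set.univ : Set V) = 4 := by
  have : Finite V := Module.finite_of_finite (ZMod p)
  have hUW : ∀ x, x ∈ U → x ∈ W → x = 0 := by
    intro x hxU hxW
    rw [hWdef] at hxW
    obtain ⟨y, rfl⟩ := hxW
    rw [hUdef, LinearMap.mem_ker, ← Module.End.mul_apply, ← pow_add] at hxU
    have hy : y ∈ LinearMap.ker (((h.toLinearMap : Module.End (ZMod p) V) - 1) ^ (d + d)) := hxU
    have := Module.End.ker_pow_le_ker_pow_finrank _ _ hy
    rw [hdim] at this
    exact this
  have hinj : Function.Injective h := h.injective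
  have hfix : ∀ x ∈ W, h x = x → x = 0 := by
    intro x hxW hx
    rcases Nat.eq_zero_or_pos d with h0 | hpos
    · have := Module.finrank_zero_iff.1 (hdim.trans h0)
      exact Subsingleton.elim _ _
    · refine hUW x ?_ hxW
      rw [hUdef, LinearMap.mem_ker]
      obtain ⟨k, rfl⟩ := Nat.exists_eq_succ_of_ne_zero hpos.ne'
      rw [Nat.succ_eq_add_one, pow_succ, Module.End.mul_apply]
      have : ((h.toLinearMap : Module.End (ZMod p) V) - 1) x = 0 := by
        simp [hx]
      rw [this, map_zero]
  have hzero : ∀ u ∈ U, ∀ w₁ ∈ W₁, ∀ w₂ ∈ W₂, u + w₁ + w₂ = 0 → u = 0 ∧ w₁ = 0 ∧ w₂ = 0 := by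
    intro u hu w₁ hw₁ w₂ hw₂ he
    have hw : w₁ + w₂ ∈ W := W.add_mem (hW₁le hw₁) (hW₂le hw₂)
    have e1 : u = -(w₁ + w₂) := by
      rw [add_assoc] at he; exact eq_neg_of_add_eq_zero_left he
    have hu0 : u = 0 := hUW u hu (e1 ▸ W.neg_mem hw)
    subst hu0
    rw [zero_add] at he
    have e2 : w₁ = -w₂ := eq_neg_of_add_eq_zero_left he
    have h1 : w₁ ∈ W₁ ⊓ W₂ := ⟨hw₁, e2 ▸ W₂.neg_mem hw₂⟩
    rw [hW₁₂, Submodule.mem_bot] at h1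
    subst h1
    exact ⟨rfl, rfl, by simpa using he⟩
  have hindep : ∀ u ∈ U, ∀ w₁ ∈ W₁, ∀ w₂ ∈ W₂, ∀ u' ∈ U, ∀ w₁' ∈ W₁, ∀ w₂' ∈ W₂,
      u + w₁ + w₂ = u' + w₁' + w₂' → u = u' ∧ w₁ = w₁' ∧ w₂ = w₂' := by
    intro u hu w₁ hw₁ w₂ hw₂ u' hu' w₁' hw₁' w₂' hw₂' he
    have := hzero (u - u') (U.sub_mem hu hu') (w₁ - w₁') (W₁.sub_mem hw₁ hw₁')
      (w₂ - w₂') (W₂.sub_mem hw₂ hw₂') (by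
        have : u - u' + (w₁ - w₁') + (w₂ - w₂') = (u + w₁ + w₂) - (u' + w₁' + w₂') := by abel
        rw [this, he, sub_self])
    simpa only [sub_eq_zero] using this
  have hgadd : ∀ n x w, g^[n] (x + w) = g^[n] x + h^[n] w := by
    intro n
    induction n with
    | zero => intro x w; rfl
    | succ n ih =>
      intro x w
      rw [Function.iterate_succ_apply, Function.iterate_succ_apply, Function.iterate_succ_apply,
        hg (x + w), hg x, ← ih, ← map_add]
      congr 2
      abel
  have hgU : ∀ n, g^[n] 0 ∈ U := by
    intro n
    induction n with
    | zero => exact U.zero_mem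
    | succ n ih =>
      rw [Function.iterate_succ_apply', hg]
      exact hUinv _ (U.add_mem ih hv)
  have hmem : ∀ W' : Submodule (ZMod p) V, (∀ x ∈ W', h x ∈ W') → ∀ n, ∀ x ∈ W', h^[n] x ∈ W' := by
    intro W' hW' n
    induction n with
    | zero => intro x hx; exact hx
    | succ n ih => intro x hx; rw [Function.iterate_succ_apply']; exact hW' _ (ih x hx)
  have hn0 : ∀ n, h^[n] 0 = 0 := fun n => iterate_map_zero h n
  have hne : ∀ n x, x ≠ 0 → h^[n] x ≠ 0 := by
    intro n x hx h0
    exact hx (hinj.iterate n (h0.trans (hn0 n).symm))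
  obtain ⟨hne₁, hinv₁, -⟩ := hW₁
  obtain ⟨hne₂, hinv₂, -⟩ := hW₂
  have hm₁ := hmem W₁ hinv₁
  have hm₂ := hmem W₂ hinv₂
  have hgen : ∀ n w₁ w₂, g^[n] (w₁ + w₂) = g^[n] 0 + h^[n] w₁ + h^[n] w₂ := by
    intro n w₁ w₂
    rw [hgadd, ← zero_add w₁, hgadd, zero_add]
  -- the main consequence of having at most four cycles
  have main : ∀ x₁ ∈ W₁, ∀ x₂ ∈ W₂, x₁ ≠ 0 → x₂ ≠ 0 →
      cyclesOn g (Set.univ : Set V) = 4 ∧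
      ∀ y, ∃ n, ∃ w₁ ∈ W₁, ∃ w₂ ∈ W₂, (w₁ = 0 ∨ w₁ = x₁) ∧ (w₂ = 0 ∨ w₂ = x₂) ∧
        y = g^[n] 0 + h^[n] w₁ + h^[n] w₂ := by
    intro x₁ hx₁ x₂ hx₂ h1 h2
    let c₁ : Fin 4 → V := ![0, x₁, 0, x₁]
    let c₂ : Fin 4 → V := ![0, 0, x₂, x₂]
    have hc₁ : ∀ i, c₁ i ∈ W₁ := by
      intro i; fin_cases i <;> simp [c₁, hx₁]
    have hc₂ : ∀ i, c₂ i ∈ W₂ := by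
      intro i; fin_cases i <;> simp [c₂, hx₂]
    obtain ⟨hf, hy⟩ := aux_four g (fun i => c₁ i + c₂ i) (by
      intro i j n hij
      beta_reduce at hij
      rw [hgen] at hij
      obtain ⟨-, e1, e2⟩ := hindep _ (hgU n) _ (hm₁ n _ (hc₁ i)) _ (hm₂ n _ (hc₂ i)) 0 U.zero_mem
        _ (hc₁ j) _ (hc₂ j) (by rw [zero_add]; exact hij)
      have q1 := hne n _ h1
      have q2 := hne n _ h2
      fin_cases i <;> fin_cases j <;>
        first
        | rfl
        | (exfalso; simp [c₁, c₂, hn0, h1, h2, h1.symm, h2.symm, q1, q2] at e1 e2)) hfour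
    refine ⟨hf, fun y => ?_⟩
    obtain ⟨i, n, hn⟩ := hy y
    refine ⟨n, c₁ i, hc₁ i, c₂ i, hc₂ i, ?_, ?_, ?_⟩
    · fin_cases i <;> simp [c₁]
    · fin_cases i <;> simp [c₂]
    · rw [← hn, hgen]
  have T : ∀ x₁ ∈ W₁, ∀ x₂ ∈ W₂, x₁ ≠ 0 → x₂ ≠ 0 → ∀ u ∈ U, ∀ y₁ ∈ W₁, ∀ y₂ ∈ W₂,
      y₁ ≠ 0 → y₂ ≠ 0 → ∃ n, g^[n] 0 = u ∧ h^[n] x₁ = y₁ ∧ h^[n] x₂ = y₂ := by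
    intro x₁ hx₁ x₂ hx₂ h1 h2 u hu y₁ hy₁ y₂ hy₂ k1 k2
    obtain ⟨n, w₁, hw₁, w₂, hw₂, o1, o2, e⟩ := (main x₁ hx₁ x₂ hx₂ h1 h2).2 (u + y₁ + y₂)
    obtain ⟨e0, e1, e2⟩ := hindep _ hu _ hy₁ _ hy₂ _ (hgU n) _ (hm₁ n _ hw₁) _ (hm₂ n _ hw₂) e
    refine ⟨n, e0.symm, ?_, ?_⟩
    · rcases o1 with rfl | rfl
      · exact absurd (e1.trans (hn0 n)) k1
      · exact e1.symm
    · rcases o2 with rfl | rfl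
      · exact absurd (e2.trans (hn0 n)) k2
      · exact e2.symm
  obtain ⟨x₁, hx₁, h1⟩ := W₁.exists_mem_ne_zero_of_ne_bot hne₁
  obtain ⟨x₂, hx₂, h2⟩ := W₂.exists_mem_ne_zero_of_ne_bot hne₂
  obtain ⟨hcount, hall⟩ := main x₁ hx₁ x₂ hx₂ h1 h2
  -- periods
  have hcard : ∀ W' : Submodule (ZMod p) V,
      Nat.card {x : V | x ∈ W' ∧ x ≠ 0} = p ^ Module.finrank (ZMod p) W' - 1 := by
    intro W'
    have e1 : Nat.card W' = p ^ Module.finrank (ZMod p) W' := by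
      rw [Module.natCard_eq_pow_finrank (K := ZMod p), Nat.card_zmod]
    have e2 : {x : V | x ∈ W' ∧ x ≠ 0} = (W' : Set V) \ {0} := by
      ext x; simp
    rw [Nat.card_coe_set_eq, e2, Set.ncard_sdiff_singleton_of_mem W'.zero_mem, ← e1]
    rfl
  have per₁ := aux_minimalPeriod h hinj x₁ {x : V | x ∈ W₁ ∧ x ≠ 0}
    (fun n => ⟨hm₁ n _ hx₁, hne n _ h1⟩) (by
      rintro y ⟨hy, hy0⟩
      obtain ⟨n, -, e, -⟩ := T x₁ hx₁ x₂ hx₂ h1 h2 0 U.zero_mem y hy x₂ hx₂ hy0 h2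
      exact ⟨n, e⟩)
  have per₂ := aux_minimalPeriod h hinj x₂ {x : V | x ∈ W₂ ∧ x ≠ 0}
    (fun n => ⟨hm₂ n _ hx₂, hne n _ h2⟩) (by
      rintro y ⟨hy, hy0⟩
      obtain ⟨n, -, -, e⟩ := T x₁ hx₁ x₂ hx₂ h1 h2 0 U.zero_mem x₁ hx₁ y hy h1 hy0
      exact ⟨n, e⟩)
  have perU := aux_minimalPeriod g g.injective 0 (U : Set V) hgU (by
      intro u hu
      obtain ⟨n, e, -, -⟩ := T x₁ hx₁ x₂ hx₂ h1 h2 u hu x₁ hx₁ x₂ hx₂ h1 h2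
      exact ⟨n, e⟩)
  rw [hcard, ← ha₁] at per₁
  rw [hcard, ← ha₂] at per₂
  have hcop : Nat.gcd (p ^ a₁ - 1) (p ^ a₂ - 1) = 1 := by
    obtain ⟨n, -, e1, e2⟩ := T x₁ hx₁ x₂ hx₂ h1 h2 0 U.zero_mem x₁ hx₁ (h x₂) (hinv₂ _ hx₂) h1
      (hne 1 _ h2)
    rw [← per₁.1, ← per₂.1]
    exact aux_coprime h hinj x₁ x₂ n e1 e2
  rw [Nat.pow_sub_one_gcd_pow_sub_one] at hcop
  have hp1 := (Fact.out : p.Prime).two_le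
  have hpg : p ^ Nat.gcd a₁ a₂ = 2 := by omega
  have hgcd0 : Nat.gcd a₁ a₂ ≠ 0 := by
    intro h0; rw [h0] at hpg; simp at hpg
  have hp2 : p = 2 := by
    have : p ≤ p ^ Nat.gcd a₁ a₂ := Nat.le_self_pow hgcd0 p
    omega
  have hgcd : Nat.gcd a₁ a₂ = 1 := by
    rw [hp2] at hpg
    exact Nat.pow_right_injective le_rfl (hpg.trans (pow_one 2).symm)
  have ha₁2 : 2 ≤ a₁ := by
    by_contra hlt
    have ha01 : a₁ = 0 ∨ a₁ = 1 := by omega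
    rcases ha01 with h0 | h0
    · rw [h0] at per₁; simp at per₁; omega
    · have : Function.minimalPeriod h x₁ = 1 := by
        rw [per₁.1, h0, hp2]
        norm_num
      exact h1 (hfix x₁ (hW₁le hx₁) (Function.minimalPeriod_eq_one_iff_isFixedPt.1 this))
  have ha12 : a₁ < a₂ := by
    refine lt_of_le_of_ne hle ?_
    intro he
    rw [← he, Nat.gcd_self] at hgcd
    omega
  -- direct sum decomposition
  have hinternal : DirectSum.IsInternal (![U, W₁, W₂] : Fin 3 → Submodule (ZMod p) V) := by
    apply DirectSum.isInternal_submodule_of_iSupIndep_of_iSup_eq_top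
    · rw [iSupIndep_fin_three]
      simp only [Matrix.cons_val]
      refine ⟨?_, ?_, ?_⟩
      all_goals
        rw [Submodule.disjoint_def]
        intro x hx hx'
        obtain ⟨y, hy, z, hz, rfl⟩ := Submodule.mem_sup.1 hx'
      · exact (hindep _ hx 0 W₁.zero_mem 0 W₂.zero_mem 0 U.zero_mem y hy z hz (by abel)).1.trans rfl
      · exact (hindep z hz 0 W₁.zero_mem y hy 0 U.zero_mem _ hx 0 W₂.zero_mem (by abel)).2.1.symm
      · exact (hindep y hy z hz 0 W₂.zero_mem 0 U.zero_mem 0 W₁.zero_mem _ hx (by abel)).2.2.symm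
    · rw [eq_top_iff]
      intro y _
      obtain ⟨n, w₁, hw₁, w₂, hw₂, -, -, rfl⟩ := hall y
      have l0 := le_iSup (![U, W₁, W₂] : Fin 3 → Submodule (ZMod p) V) 0
      have l1 := le_iSup (![U, W₁, W₂] : Fin 3 → Submodule (ZMod p) V) 1
      have l2 := le_iSup (![U, W₁, W₂] : Fin 3 → Submodule (ZMod p) V) 2
      exact Submodule.add_mem _ (Submodule.add_mem _ (l0 (hgU n)) (l1 (hm₁ n _ hw₁)))
        (l2 (hm₂ n _ hw₂))
  have hd5 : 5 ≤ d := by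
    have hle' : Module.finrank (ZMod p) ↥(W₁ ⊔ W₂) ≤ d := hdim ▸ Submodule.finrank_le _
    have := Submodule.finrank_sup_add_finrank_inf_eq W₁ W₂
    rw [hW₁₂, finrank_bot, ← ha₁, ← ha₂] at this
    omega
  -- the unipotent part
  subst hp2
  set L : Module.End (ZMod 2) V := h.toLinearMap with hL
  have hcardU : Function.minimalPeriod g 0 = 2 ^ a := by
    rw [perU.1, ha]
    have e1 := Module.natCard_eq_pow_finrank (K := ZMod 2) (V := U)
    rw [Nat.card_zmod] at e1
    exact e1
  have hLU : ∀ x ∈ U, L x ∈ U := hUinv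
  have hnil : ((L.restrict hLU - 1 : Module.End (ZMod 2) U)) ^ a = 0 := by
    have hz : LinearMap.ker ((L.restrict hLU - 1 : Module.End (ZMod 2) U) ^ d) = ⊤ := by
      rw [eq_top_iff]
      intro u _
      rw [LinearMap.mem_ker]
      apply Subtype.ext
      rw [aux_restrict]
      exact LinearMap.mem_ker.1 (hUdef.le u.2)
    have := Module.End.ker_pow_le_ker_pow_finrank (L.restrict hLU - 1 : Module.End (ZMod 2) U) d
    rw [hz, ← ha, top_le_iff, LinearMap.ker_eq_top] at this
    exact this
  have hNa : ((L - 1 : Module.End (ZMod 2) V) ^ a) v = 0 := by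
    have := aux_restrict L U hLU a ⟨v, hv⟩
    rw [hnil] at this
    exact this.symm
  have hNv : 0 < a → ((L - 1 : Module.End (ZMod 2) V) ^ (2 ^ (a - 1) - 1)) v ≠ 0 := by
    intro hapos h0
    have e := aux_iter L g v hg (a - 1) 0
    rw [h0, map_zero, map_zero, add_zero] at e
    have hd : Function.minimalPeriod g 0 ≤ 2 ^ (a - 1) :=
      Function.IsPeriodicPt.minimalPeriod_le (by positivity) e
    rw [hcardU] at hd
    have := (Nat.pow_le_pow_iff_right (by norm_num : 1 < 2)).1 hd
    omega
  have ha2 : a ≤ 2 := by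
    by_contra hgt
    have hlt : a ≤ 2 ^ (a - 1) - 1 := by
      obtain ⟨k, rfl⟩ := Nat.exists_eq_add_of_le (by omega : 3 ≤ a)
      have : k < 2 ^ k := Nat.lt_two_pow_self
      have e : 2 ^ (3 + k - 1) = 4 * 2 ^ k := by
        rw [show 3 + k - 1 = 2 + k by omega, pow_add]; norm_num
      omega
    refine hNv (by omega) ?_
    obtain ⟨k, hk⟩ := Nat.exists_eq_add_of_le hlt
    rw [hk, add_comm, pow_add, Module.End.mul_apply, hNa, map_zero]
  have hmin : minpoly (ZMod 2) (h.toLinearMap.restrict hUinv) = (X - 1 : Polynomial (ZMod 2)) ^ a := by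
    refine aux_minpoly _ a hnil ?_
    intro hapos h0
    have e := aux_restrict L U hLU (a - 1) ⟨v, hv⟩
    have h0' : (L.restrict hLU - 1 : Module.End (ZMod 2) U) ^ (a - 1) = 0 := h0
    rw [h0'] at e
    refine hNv hapos ?_
    have : 2 ^ (a - 1) - 1 = a - 1 := by
      have : a = 1 ∨ a = 2 := by omega
      rcases this with h | h <;> rw [h] <;> rfl
    rw [this]
    exact e.symm
  refine ⟨hinternal, rfl, hgcd, ha2, ha₁2, ha12, hd5, ?_, ?_, hmin, hcount⟩
  · intro x y hx hy hx0 hy0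
    obtain ⟨n, -, e, -⟩ := T x hx x₂ hx₂ hx0 h2 0 U.zero_mem y hy x₂ hx₂ hy0 h2
    refine ⟨n, ?_⟩
    rw [zpow_natCast, Equiv.Perm.coe_pow]
    exact e
  · intro x y hx hy hx0 hy0
    obtain ⟨n, -, -, e⟩ := T x₁ hx₁ x hx h1 hx0 0 U.zero_mem x₁ hx₁ y hy h1 hy0
    refine ⟨n, ?_⟩
    rw [zpow_natCast, Equiv.Perm.coe_pow]
    exact e
end

section
/- Let p ≥ 5 be a prime, V a d-dimensional vector space over 𝔽_p with d ≥ 1, and h a linear automorphism of V with 4 · orderOf h ≥ p^d. Then V is indecomposable as an 𝔽_p[h]-module: whenever V = V₁ ⊕ V₂ is an internal direct sum of h-invariant subspaces V₁ and V₂, one of V₁, V₂ is the zero subspace. -/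
open Polynomial in
theorem aux_order (p : ℕ) [Fact p.Prime] (W : Type*) [AddCommGroup W] [Module (ZMod p) W]
    [Module.Finite (ZMod p) W] [Nontrivial W] (f : Module.End (ZMod p) W)
    (hf : Function.Injective f) :
    ∃ N, 0 < N ∧ (p - 1) ∣ N ∧ N < p ^ Module.finrank (ZMod p) W ∧ f ^ N = 1 := by
  classical
  set n := Module.finrank (ZMod p) W with hn
  let A := Algebra.adjoin (ZMod p) {f}
  have : Finite (Module.End (ZMod p) W) := Module.finite_of_finite (ZMod p)
  have : Finite A := inferInstance
  have : Nontrivial A := inferInstance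
  have hu : IsUnit f := by
    rw [Module.End.isUnit_iff]
    exact ⟨hf, LinearMap.injective_iff_surjective.mp hf⟩
  obtain ⟨u, hu⟩ := hu
  have hk : f ^ orderOf u = 1 := by
    rw [← hu, ← Units.val_pow_eq_pow_val, pow_orderOf_eq_one]; rfl
  have hk0 : 0 < orderOf u := orderOf_pos u
  have hfA : f ∈ A := Algebra.self_mem_adjoin_singleton _ _
  let x : A := ⟨f, hfA⟩
  have hx : x ^ orderOf u = 1 := Subtype.ext (by simpa [x] using hk)
  have hxu : IsUnit x := IsUnit.of_pow_eq_one hx hk0.ne'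
  obtain ⟨y, hy⟩ := hxu
  have hcard : Nat.card A ≤ p ^ n := by
    let g : (Fin n → ZMod p) → Module.End (ZMod p) W := fun c => ∑ i, c i • f ^ (i : ℕ)
    have hsub : (A : Set (Module.End (ZMod p) W)) ⊆ Set.range g := by
      intro a ha
      have ha' : a ∈ A := ha
      simp only [A, Algebra.adjoin_singleton_eq_range_aeval] at ha'
      obtain ⟨q, rfl⟩ := ha'
      have hm := f.charpoly_monic
      have hdeg : (q %ₘ f.charpoly).natDegree < n := by
        have h1 := Polynomial.natDegree_modByMonic_lt q hm (by
          intro h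
          have := f.charpoly_natDegree
          rw [h, natDegree_one] at this
          exact (Module.finrank_pos (R := ZMod p) (M := W)).ne this)
        rwa [f.charpoly_natDegree] at h1
      refine ⟨fun i => (q %ₘ f.charpoly).coeff i, ?_⟩
      have h2 : aeval f q = aeval f (q %ₘ f.charpoly) := by
        conv_lhs => rw [← Polynomial.modByMonic_add_div q f.charpoly]
        simp [LinearMap.aeval_self_charpoly]
      change _ = aeval f q
      rw [h2, Polynomial.aeval_eq_sum_range' hdeg, Finset.sum_range]
    calc Nat.card A ≤ Nat.card (Set.range g) := Nat.card_mono (Set.toFinite _) hsub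
      _ ≤ Nat.card (Fin n → ZMod p) := Finite.card_range_le g
      _ = p ^ n := by simp
  refine ⟨Nat.card Aˣ, Nat.card_pos, ?_, ?_, ?_⟩
  · have h1 : Nat.card (ZMod p)ˣ = p - 1 := by
      rw [Nat.card_eq_fintype_card, ZMod.card_units]
    rw [← h1]
    exact Subgroup.card_dvd_of_injective (Units.map (algebraMap (ZMod p) A : ZMod p →* A))
      (Units.map_injective (algebraMap (ZMod p) A).injective)
  · refine lt_of_lt_of_le ?_ hcard
    exact natCard_units_lt A
  · have h1 : y ^ Nat.card Aˣ = 1 := pow_card_eq_one'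
    have h2 : x ^ Nat.card Aˣ = 1 := by
      rw [← hy, ← Units.val_pow_eq_pow_val, h1]; rfl
    exact congrArg Subtype.val h2

/-- Let `p ≥ 5` be prime, `V` a `d`-dimensional `𝔽_p`-space with `d ≥ 1`,
and `h` a linear automorphism with `4 * orderOf h ≥ p ^ d`.  Then `V` is indecomposable
as an `𝔽_p⟨h⟩`-module: if `V = V₁ ⊕ V₂` with `V₁, V₂` `h`-invariant, then `V₁ = 0` or
`V₂ = 0`. -/
theorem large_order_indecomposable (p d : ℕ) [Fact p.Prime] (hp5 : 5 ≤ p) (hd1 : 1 ≤ d)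
    (V : Type*) [AddCommGroup V] [Module (ZMod p) V] [Module.Finite (ZMod p) V]
    (hdim : Module.finrank (ZMod p) V = d)
    (h : V ≃ₗ[ZMod p] V) (hord : p ^ d ≤ 4 * orderOf h)
    (V₁ V₂ : Submodule (ZMod p) V)
    (hV₁ : ∀ x ∈ V₁, h x ∈ V₁) (hV₂ : ∀ x ∈ V₂, h x ∈ V₂)
    (hcompl : IsCompl V₁ V₂) :
    V₁ = ⊥ ∨ V₂ = ⊥ := by
  by_contra hcon
  push Not at hcon
  obtain ⟨hn1, hn2⟩ := hcon
  have key : ∀ U : Submodule (ZMod p) V, U ≠ ⊥ → (∀ x ∈ U, h x ∈ U) →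
      ∃ N, 0 < N ∧ (p - 1) ∣ N ∧ N < p ^ Module.finrank (ZMod p) U ∧
        ∀ M, N ∣ M → ∀ x ∈ U, (h ^ M) x = x := by
    intro U hU hinv
    have : Nontrivial U := (Submodule.nontrivial_iff_ne_bot).2 hU
    let f : Module.End (ZMod p) U := (h : V →ₗ[ZMod p] V).restrict hinv
    have hf : Function.Injective f := by
      intro a b hab
      have := congrArg Subtype.val hab
      exact Subtype.ext (h.injective this)
    obtain ⟨N, h0, h1, h2, h3⟩ := aux_order p U f hf
    refine ⟨N, h0, h1, h2, ?_⟩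
    have hpow : ∀ (k : ℕ) (x : U), ((f ^ k) x : V) = (h ^ k) (x : V) := by
      intro k
      induction k with
      | zero => intro x; simp
      | succ k ih =>
        intro x
        rw [pow_succ, pow_succ, Module.End.mul_apply, ih]
        rfl
    rintro M ⟨k, rfl⟩ x hx
    have := hpow (N * k) ⟨x, hx⟩
    rw [pow_mul f, h3, one_pow] at this
    exact this.symm
  obtain ⟨N1, a0, a1, a2, a3⟩ := key V₁ hn1 hV₁
  obtain ⟨N2, b0, b1, b2, b3⟩ := key V₂ hn2 hV₂
  have hL : h ^ (Nat.lcm N1 N2) = 1 := by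
    ext x
    obtain ⟨y, hy, z, hz, rfl⟩ := Submodule.mem_sup.1
      (show x ∈ V₁ ⊔ V₂ by rw [hcompl.sup_eq_top]; trivial)
    rw [map_add, a3 _ (Nat.dvd_lcm_left _ _) y hy, b3 _ (Nat.dvd_lcm_right _ _) z hz]
    rfl
  have hle : orderOf h ≤ Nat.lcm N1 N2 :=
    Nat.le_of_dvd (Nat.lcm_pos a0 b0) (orderOf_dvd_of_pow_eq_one hL)
  have hg : p - 1 ≤ Nat.gcd N1 N2 := Nat.le_of_dvd (Nat.gcd_pos_of_pos_left _ a0) (Nat.dvd_gcd a1 b1)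
  have hg4 : 4 ≤ Nat.gcd N1 N2 := by omega
  have hsum : p ^ d = p ^ Module.finrank (ZMod p) V₁ * p ^ Module.finrank (ZMod p) V₂ := by
    rw [← pow_add, Submodule.finrank_add_eq_of_isCompl hcompl, hdim]
  have h1 : N1 * N2 < p ^ d := by
    rw [hsum]
    exact Nat.mul_lt_mul'' a2 b2
  have h2 := Nat.gcd_mul_lcm N1 N2
  have h3 : 4 * Nat.lcm N1 N2 ≤ Nat.gcd N1 N2 * Nat.lcm N1 N2 := Nat.mul_le_mul_right _ hg4
  omega
end

section
/- Let p ≥ 5 be a prime, V a d-dimensional vector space over 𝔽_p with d ≥ 3, and h a linear automorphism of V with 4 · orderOf h ≥ p^d. Then V is a simple 𝔽_p[h]-module (h acts irreducibly), orderOf h divides p^d − 1, and 3 · orderOf h ≥ p^d − 1 (i.e. h is the i-th power of a Singer cycle for some i ∈ {1, 2, 3}). -/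
open Polynomial in
theorem aux_units (p : ℕ) [Fact p.Prime] (g : (ZMod p)[X]) (hg : g.Monic) (hdeg : 0 < g.natDegree)
    (N : ℕ) (hN : N ≠ 0) (hdvd : g ∣ X ^ N - 1) :
    ∃ U : ℕ, 0 < U ∧ U < p ^ g.natDegree ∧ (p - 1) ∣ U ∧ g ∣ X ^ U - 1 ∧
      (Irreducible g → U = p ^ g.natDegree - 1) := by
  have hfin : Module.Finite (ZMod p) (AdjoinRoot g) := hg.finite_adjoinRoot
  have hF : Finite (AdjoinRoot g) := Module.finite_of_finite (ZMod p)
  have hnt : Nontrivial (AdjoinRoot g) := by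
    apply AdjoinRoot.nontrivial
    intro h0
    have : g.natDegree = 0 := natDegree_eq_of_degree_eq_some h0
    omega
  have hcard : Nat.card (AdjoinRoot g) = p ^ g.natDegree := by
    rw [Module.natCard_eq_pow_finrank (K := ZMod p), (AdjoinRoot.powerBasis' hg).finrank]
    simp
  have hroot : ∀ n : ℕ, g ∣ X ^ n - 1 ↔ (AdjoinRoot.root g) ^ n = 1 := by
    intro n
    rw [← AdjoinRoot.mk_eq_zero]
    simp [sub_eq_zero]
  obtain ⟨u, hu⟩ : IsUnit (AdjoinRoot.root g) := IsUnit.of_pow_eq_one ((hroot N).1 hdvd) hN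
  refine ⟨Nat.card (AdjoinRoot g)ˣ, Nat.card_pos, ?_, ?_, ?_, ?_⟩
  · rw [← hcard]
    have : Fintype (AdjoinRoot g) := Fintype.ofFinite _
    have : Fintype (AdjoinRoot g)ˣ := Fintype.ofFinite _
    simpa only [Fintype.card_eq_nat_card] using card_units_lt (AdjoinRoot g)
  · have h1 := Subgroup.card_dvd_of_injective
      (Units.map (algebraMap (ZMod p) (AdjoinRoot g) : ZMod p →* AdjoinRoot g))
      (Units.map_injective (algebraMap (ZMod p) (AdjoinRoot g)).injective)
    rwa [Nat.card_eq_fintype_card, ZMod.card_units] at h1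
  · rw [hroot, ← hu, ← Units.val_pow_eq_pow_val, pow_card_eq_one']
    simp
  · intro hirr
    have : Fact (Irreducible g) := ⟨hirr⟩
    rw [Nat.card_units, hcard]

open Polynomial in
theorem aux_pow (p a b : ℕ) (hab : a ∣ b) : ((X : (ZMod p)[X]) ^ a - 1) ∣ X ^ b - 1 := by
  obtain ⟨c, rfl⟩ := hab
  rw [pow_mul]
  simpa using sub_dvd_pow_sub_pow ((X : (ZMod p)[X]) ^ a) 1 c

theorem aux_exp (p a e : ℕ) (hp5 : 5 ≤ p) (ha : 1 ≤ a) (he : 2 ≤ e) (hd : 3 ≤ a * e) :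
    e ≤ p ^ (a * (e - 1) - 1) ∧ a + (a * (e - 1) - 1) + 1 = a * e := by
  obtain ⟨k, rfl⟩ : ∃ k, e = k + 2 := ⟨e - 2, by omega⟩
  have h1 : a * (k + 2) = a * (k + 1) + a := by ring
  have h2 : a * (k + 1) = a * k + a := by ring
  have e1 : k + 2 - 1 = k + 1 := by omega
  rw [e1]
  constructor
  · have h3 : max k 1 ≤ a * (k + 1) - 1 := by
      have : k ≤ a * k := Nat.le_mul_of_pos_left k ha
      rcases Nat.lt_or_ge a 2 with h | h
      · obtain rfl : a = 1 := by omega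
        omega
      · omega
    calc k + 2 ≤ 5 ^ (max k 1) := by
          rcases Nat.eq_zero_or_pos k with rfl | hk
          · norm_num
          · rw [max_eq_left hk]
            clear * - hk
            induction k, hk using Nat.le_induction with
            | base => norm_num
            | succ n hn ih => rw [pow_succ]; omega
      _ ≤ p ^ (max k 1) := Nat.pow_le_pow_left hp5 _
      _ ≤ _ := Nat.pow_le_pow_right (by omega) h3
  · have : 0 < a * (k + 1) := by positivity
    omega

/-- Let `p ≥ 5` be prime, `V` a `d`-dimensional `𝔽_p`-space with `d ≥ 3`,
and `h` a linear automorphism with `4 * orderOf h ≥ p ^ d`.  Then `V` is a simple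
`𝔽_p⟨h⟩`-module, `orderOf h` divides `p ^ d - 1`, and `3 * orderOf h ≥ p ^ d - 1`
(`h` is the `i`-th power of a Singer cycle for some `i ∈ {1, 2, 3}`). -/
theorem large_order_singer (p d : ℕ) [Fact p.Prime] (hp5 : 5 ≤ p) (hd3 : 3 ≤ d)
    (V : Type*) [AddCommGroup V] [Module (ZMod p) V] [Module.Finite (ZMod p) V]
    (hdim : Module.finrank (ZMod p) V = d)
    (h : V ≃ₗ[ZMod p] V) (hord : p ^ d ≤ 4 * orderOf h) :
    Nontrivial V ∧
    (∀ W : Submodule (ZMod p) V, (∀ x ∈ W, h x ∈ W) → W = ⊥ ∨ W = ⊤) ∧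
    orderOf h ∣ p ^ d - 1 ∧
    p ^ d - 1 ≤ 3 * orderOf h := by
  classical
  have hp : p.Prime := Fact.out
  have hNpos : orderOf h ≠ 0 := by
    intro h0
    rw [h0] at hord
    have : 0 < p ^ d := by positivity
    omega
  have hV : Nontrivial V := Module.nontrivial_of_finrank_pos (R := ZMod p) (by omega)
  let T : Module.End (ZMod p) V := h.toLinearMap
  have hTi : IsIntegral (ZMod p) T := Algebra.IsIntegral.isIntegral T
  set m := minpoly (ZMod p) T with hm
  have hmon : m.Monic := minpoly.monic hTi
  have hkey : ∀ n : ℕ, orderOf h ∣ n ↔ m ∣ Polynomial.X ^ n - 1 := by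
    intro n
    have ho : orderOf T = orderOf h :=
      orderOf_injective (LinearEquiv.automorphismGroup.toLinearMapMonoidHom (R := ZMod p) (M := V))
        (fun a b hab => LinearEquiv.toLinearMap_injective hab) h
    rw [← ho, orderOf_dvd_iff_pow_eq_one, hm, minpoly.dvd_iff]
    simp [sub_eq_zero]
  have hdvd : m ∣ Polynomial.X ^ (orderOf h) - 1 := (hkey _).1 dvd_rfl
  have hmdeg : 0 < m.natDegree := minpoly.natDegree_pos hTi
  have hmle : ∀ (W : Type _) [AddCommGroup W] [Module (ZMod p) W] [Module.Finite (ZMod p) W]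
      (S : Module.End (ZMod p) W),
      (minpoly (ZMod p) S).natDegree ≤ Module.finrank (ZMod p) W := by
    intro W _ _ _ S
    rw [← LinearMap.charpoly_natDegree S]
    exact Polynomial.natDegree_le_of_dvd (LinearMap.minpoly_dvd_charpoly S)
      (LinearMap.charpoly_monic S).ne_zero
  have hbound : ∀ U : ℕ, 0 < U → 4 * U < p ^ d → ¬ (m ∣ Polynomial.X ^ U - 1) := by
    intro U hU hlt hd
    have := Nat.le_of_dvd hU ((hkey U).2 hd)
    omega
  have hsmall : ∀ U k : ℕ, 0 < U → U < p ^ k → k + 1 ≤ d → ¬ (m ∣ Polynomial.X ^ U - 1) := by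
    intro U k hU hlt hk
    refine hbound U hU ?_
    have h1 : p ^ (k + 1) ≤ p ^ d := Nat.pow_le_pow_right hp.pos hk
    rw [pow_succ] at h1
    have h2 : p ^ k * 5 ≤ p ^ k * p := Nat.mul_le_mul_left _ hp5
    omega
  have hmd : m.natDegree = d := by
    have h1 : m.natDegree ≤ d := hdim ▸ hmle V T
    by_contra hne
    obtain ⟨U, hU, hlt, -, hUd, -⟩ := aux_units p m hmon hmdeg _ hNpos hdvd
    exact hsmall U _ hU hlt (by omega) hUd
  have hirr : Irreducible m := by
    obtain ⟨f, hfm, hf, hfd⟩ := Polynomial.exists_monic_irreducible_factor m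
      (Polynomial.not_isUnit_of_natDegree_pos m hmdeg)
    have hfdeg : 0 < f.natDegree := hf.natDegree_pos
    obtain ⟨g, hg, hfg⟩ := (FiniteMultiplicity.of_not_isUnit hf.not_isUnit hmon.ne_zero).exists_eq_pow_mul_and_not_dvd
    generalize multiplicity f m = e at hg
    have hgm : g.Monic := (hfm.pow e).of_mul_monic_left (hg ▸ hmon)
    have he : e ≠ 0 := by
      rintro rfl
      rw [pow_zero, one_mul] at hg
      exact hfg (hg ▸ hfd)
    have hdegs : e * f.natDegree + g.natDegree = d := by
      rw [← hmd, hg, (hfm.pow e).natDegree_mul hgm, hfm.natDegree_pow]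
    rcases Nat.eq_zero_or_pos g.natDegree with hg0 | hgpos
    · have hg1 : g = 1 := hgm.natDegree_eq_zero.1 hg0
      rw [hg1, mul_one] at hg
      rcases Nat.lt_or_ge e 2 with he2 | he2
      · obtain rfl : e = 1 := by omega
        rw [hg, pow_one]
        exact hf
      · exfalso
        obtain ⟨U, hU, hlt, -, hUd, -⟩ := aux_units p f hfm hfdeg _ hNpos (hfd.trans hdvd)
        have hd' : f.natDegree * e = d := by rw [mul_comm]; omega
        obtain ⟨h1, h2⟩ := aux_exp p f.natDegree e hp5 hfdeg he2 (by omega)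
        set k := f.natDegree * (e - 1) - 1
        refine hsmall (U * p ^ k) (f.natDegree + k) (by positivity) ?_ (by omega) ?_
        · rw [pow_add]
          exact Nat.mul_lt_mul_of_pos_right hlt (by positivity)
        · rw [hg, pow_mul]
          have h3 := sub_pow_char_pow (Polynomial.X ^ U : Polynomial (ZMod p)) 1 (p := p) (n := k)
          rw [one_pow] at h3
          rw [← h3]
          exact (pow_dvd_pow f h1).trans (pow_dvd_pow_of_dvd hUd _)
    · exfalso
      have hA : 0 < (f ^ e).natDegree := by
        rw [hfm.natDegree_pow]; positivity
      obtain ⟨U1, hU1, hlt1, ⟨c1, hc1⟩, hd1, -⟩ := aux_units p (f ^ e) (hfm.pow e) hA _ hNpos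
        ((hg ▸ Dvd.intro _ rfl : f ^ e ∣ m).trans hdvd)
      obtain ⟨U2, hU2, hlt2, ⟨c2, hc2⟩, hd2, -⟩ := aux_units p g hgm hgpos _ hNpos
        ((hg ▸ Dvd.intro_left _ rfl : g ∣ m).trans hdvd)
      have hcop : IsCoprime (f ^ e) g := (hf.coprime_iff_not_dvd.2 hfg).pow_left
      have hc1p : 0 < c1 := Nat.pos_of_ne_zero (by rintro rfl; simp at hc1; omega)
      have hc2p : 0 < c2 := Nat.pos_of_ne_zero (by rintro rfl; simp at hc2; omega)
      refine hbound ((p - 1) * c1 * c2) (by have : 0 < p - 1 := by omega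
                                            positivity) ?_ ?_
      · have hq : 4 ≤ p - 1 := by omega
        calc 4 * ((p - 1) * c1 * c2) ≤ (p - 1) * ((p - 1) * c1 * c2) := Nat.mul_le_mul_right _ hq
          _ = U1 * U2 := by rw [hc1, hc2]; ring
          _ < p ^ (f ^ e).natDegree * p ^ g.natDegree := Nat.mul_lt_mul'' hlt1 hlt2
          _ = p ^ d := by rw [← pow_add, hfm.natDegree_pow, hdegs]
      · rw [hg]
        refine hcop.mul_dvd (hd1.trans (aux_pow p _ _ ?_)) (hd2.trans (aux_pow p _ _ ?_))
        · rw [hc1]; exact Dvd.intro _ rfl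
        · rw [hc2]; exact ⟨c1, by ring⟩
  have hdv : orderOf h ∣ p ^ d - 1 := by
    obtain ⟨U, hU, hlt, -, hUd, hUi⟩ := aux_units p m hmon hmdeg _ hNpos hdvd
    rw [hkey, ← hmd, ← hUi hirr]
    exact hUd
  refine ⟨hV, ?_, hdv, ?_⟩
  · intro W hW
    by_cases hb : W = ⊥
    · exact Or.inl hb
    right
    have hWnt : Nontrivial W := Submodule.nontrivial_iff_ne_bot.2 hb
    let S : Module.End (ZMod p) W := T.restrict hW
    have hSi : IsIntegral (ZMod p) S := Algebra.IsIntegral.isIntegral S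
    have hSd : minpoly (ZMod p) S ∣ m := by
      apply minpoly.dvd
      ext x
      have h1 : ∀ q : Polynomial (ZMod p), ((Polynomial.aeval S q x : W) : V) =
          Polynomial.aeval T q (x : V) := by
        intro q
        induction q using Polynomial.induction_on' with
        | add a b ha hb => simp [ha, hb]
        | monomial n a =>
          simp only [Polynomial.aeval_monomial, Module.End.mul_apply, Module.algebraMap_end_apply,
            Submodule.coe_smul]
          congr 1
          have : ∀ y : W, ((S y : W) : V) = T y := fun y => rfl
          clear * - this
          induction n with
          | zero => simp
          | succ n ih => rw [pow_succ', pow_succ', Module.End.mul_apply, Module.End.mul_apply, this, ih]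
      rw [h1, hm, minpoly.aeval]
      simp
    have heq : minpoly (ZMod p) S = m := by
      have hassoc := (hirr.dvd_iff.1 hSd).resolve_left (minpoly.not_isUnit _ _)
      exact (Polynomial.eq_of_monic_of_associated hmon (minpoly.monic hSi) hassoc).symm
    apply Submodule.eq_top_of_finrank_eq
    have h1 := hmle W S
    rw [heq, hmd] at h1
    have h2 := Submodule.finrank_le W
    omega
  · obtain ⟨q, hq⟩ := hdv
    have hpos : 0 < p ^ d := by positivity
    have hq4 : q < 4 := by
      by_contra hcon
      have : orderOf h * 4 ≤ orderOf h * q := Nat.mul_le_mul_left _ (by omega)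
      omega
    have : orderOf h * q ≤ orderOf h * 3 := Nat.mul_le_mul_left _ (by omega)
    omega
end

section
/- Let p ≥ 5 be a prime, V a d-dimensional vector space over 𝔽_p with d ≥ 1, h a linear automorphism of V, v ∈ V, and let g = t_v h satisfy 4 · orderOf g ≥ p^d. Then one of the following holds: (1) V is a simple 𝔽_p[h]-module, orderOf h divides p^d − 1, 3 · orderOf h ≥ p^d − 1, and orderOf g = orderOf h; (2) d ≥ 2 and there exist h-invariant subspaces U, W with V = U ⊕ W, dim U = 1, h restricted to U the identity, W a simple 𝔽_p[h]-module, orderOf h dividing p^{d−1} − 1, 3 · orderOf h ≥ p^{d−1} − 1, and orderOf g = p · orderOf h; (3) d = 1, h = 1, v ≠ 0, and orderOf g = p; (4) d = 2 and there exist a nonzero scalar c ∈ 𝔽_p and a unipotent automorphism u ≠ 1 of V with h = c · u, 3 · orderOf c ≥ p − 1, and orderOf g = orderOf h = p · orderOf c. -/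
open Polynomial

namespace AffLarge

lemma pow_lin_bound {p : ℕ} (hp : 5 ≤ p) (m : ℕ) : m + 1 ≤ p ^ m := by
  have : m < p ^ m := Nat.lt_pow_self (by omega)
  omega

lemma pow_lin_bound2 {p : ℕ} (hp : 5 ≤ p) (m : ℕ) : m + 3 ≤ p ^ (m + 1) := by
  have := pow_lin_bound hp m
  have h2 : 5 * p ^ m ≤ p ^ (m + 1) := by rw [pow_succ, mul_comm]; gcongr
  omega

lemma dvd_of_dvd {R : Type*} [CommRing R] {f : R[X]} {N M : ℕ} (hf : f ∣ X ^ N - 1) (h : N ∣ M) :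
    f ∣ X ^ M - 1 := by
  obtain ⟨k, rfl⟩ := h
  refine hf.trans ?_
  rw [pow_mul]
  exact sub_one_dvd_pow_sub_one _ _

lemma pow_dvd {p : ℕ} [Fact p.Prime] {f : (ZMod p)[X]} {N e t : ℕ} (hf : f ∣ X ^ N - 1)
    (he : e ≤ p ^ t) : f ^ e ∣ X ^ (N * p ^ t) - 1 := by
  have h1 : (X ^ (N * p ^ t) - 1 : (ZMod p)[X]) = (X ^ N - 1) ^ (p ^ t) := by
    rw [sub_pow_char_pow, pow_mul, one_pow]
  rw [h1]
  exact (pow_dvd_pow f he).trans (pow_dvd_pow_of_dvd hf _)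

lemma irr_dvd {p : ℕ} [Fact p.Prime] {f : (ZMod p)[X]} (hf : Irreducible f) (hX : ¬ X ∣ f) :
    f ∣ X ^ (p ^ f.natDegree - 1) - 1 := by
  have h := (Irreducible.natDegree_dvd_iff_dvd_X_pow_card_pow_sub_X hf (n := f.natDegree)).1 dvd_rfl
  rw [Nat.card_zmod] at h
  have hpos : 1 ≤ p ^ f.natDegree := Nat.one_le_pow _ _ (Fact.out : p.Prime).pos
  have h1 : (X ^ p ^ f.natDegree - X : (ZMod p)[X]) = X * (X ^ (p ^ f.natDegree - 1) - 1) := by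
    rw [mul_sub, ← pow_succ', Nat.sub_add_cancel hpos, mul_one]
  rw [h1] at h
  rcases hf.prime.dvd_or_dvd h with h | h
  · exfalso
    exact hX ((hf.dvd_symm (irreducible_X)) h)
  · exact h

/-- splitting off a prime power -/
lemma split {p : ℕ} [Fact p.Prime] {ν : (ZMod p)[X]} (hm : ν.Monic) (h1 : 1 ≤ ν.natDegree) :
    ∃ (f ρ : (ZMod p)[X]) (e : ℕ), Irreducible f ∧ f.Monic ∧ ρ.Monic ∧ 1 ≤ e ∧ ν = f ^ e * ρ ∧
      IsCoprime f ρ := by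
  obtain ⟨f, hfm, hfi, hfd⟩ := exists_monic_irreducible_factor ν
    (not_isUnit_of_natDegree_pos _ h1)
  have hfin : FiniteMultiplicity f ν := finiteMultiplicity_of_degree_pos_of_monic
    (degree_pos_of_irreducible hfi) hfm hm.ne_zero
  obtain ⟨ρ, h2, h3⟩ := hfin.exists_eq_pow_mul_and_not_dvd
  refine ⟨f, ρ, _, hfi, hfm, ?_, ?_, h2, ?_⟩
  · rw [h2] at hm
    exact (hfm.pow _).of_mul_monic_left hm
  · exact Nat.one_le_iff_ne_zero.2 (multiplicity_ne_zero.2 hfd)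
  · exact (hfi.coprime_iff_not_dvd).2 h3

lemma deg_split {p : ℕ} [Fact p.Prime] {f ρ : (ZMod p)[X]} (hf : f.Monic) (hρ : ρ.Monic) (e : ℕ) :
    (f ^ e * ρ).natDegree = e * f.natDegree + ρ.natDegree := by
  rw [(hf.pow e).natDegree_mul hρ, hf.natDegree_pow]

lemma lcm_bound {p a b A B : ℕ} (hp : 5 ≤ p) (ha : p - 1 ∣ A) (hb : p - 1 ∣ B)
    (hA0 : 0 < A) (_hB0 : 0 < B) (hA : A < p ^ a) (hB : B < p ^ b) :
    4 * A.lcm B < p ^ (a + b) := by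
  have h1 : p - 1 ≤ A.gcd B := Nat.le_of_dvd (Nat.gcd_pos_of_pos_left _ hA0) (Nat.dvd_gcd ha hb)
  have h2 := Nat.gcd_mul_lcm A B
  calc 4 * A.lcm B ≤ A.gcd B * A.lcm B := by gcongr; omega
    _ = A * B := h2
    _ < p ^ a * p ^ b := Nat.mul_lt_mul'' hA hB
    _ = _ := (pow_add _ _ _).symm

lemma ppow {p : ℕ} [Fact p.Prime] (hp : 5 ≤ p) {f : (ZMod p)[X]} (hf : Irreducible f)
    (hX : ¬ X ∣ f) (e : ℕ) (he : 1 ≤ e) : ∃ N, 0 < N ∧ p - 1 ∣ N ∧ N < p ^ (e * f.natDegree) ∧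
      f ^ e ∣ X ^ N - 1 := by
  have hk : 1 ≤ f.natDegree := hf.natDegree_pos
  have hlt : 1 < p ^ f.natDegree := Nat.one_lt_pow (by omega) (by omega)
  obtain ⟨m, rfl⟩ : ∃ m, e = m + 1 := ⟨e - 1, by omega⟩
  refine ⟨(p ^ f.natDegree - 1) * p ^ m, by have : 0 < p ^ m := by positivity
                                            exact Nat.mul_pos (by omega) this, ?_, ?_, ?_⟩
  · apply Dvd.dvd.mul_right
    simpa using Nat.sub_dvd_pow_sub_pow p 1 f.natDegree
  · calc _ < p ^ f.natDegree * p ^ m := by gcongr; omega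
      _ = p ^ (f.natDegree + m) := (pow_add _ _ _).symm
      _ ≤ _ := by gcongr; · omega
                  · nlinarith
  · exact pow_dvd (irr_dvd hf hX) (pow_lin_bound hp m)

lemma lemA {p : ℕ} [Fact p.Prime] (hp : 5 ≤ p) : ∀ (k : ℕ) (ν : (ZMod p)[X]), ν.natDegree = k →
    ν.Monic → 1 ≤ k → ¬ X ∣ ν → ∃ N, 0 < N ∧ p - 1 ∣ N ∧ N < p ^ k ∧ ν ∣ X ^ N - 1 := by
  intro k
  induction k using Nat.strong_induction_on with
  | _ k ih =>
  intro ν hk hm h1 hX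
  obtain ⟨f, ρ, e, hfi, hfm, hρ, he, rfl, hc⟩ := split hm (hk ▸ h1)
  have hXf : ¬ X ∣ f := fun h => hX ((h.trans (dvd_pow_self f (by omega))).mul_right _)
  have hXρ : ¬ X ∣ ρ := fun h => hX (h.mul_left _)
  rw [deg_split hfm hρ] at hk
  have hkf : 1 ≤ f.natDegree := hfi.natDegree_pos
  obtain ⟨A, hA0, hAp, hA, hAd⟩ := ppow hp hfi hXf e he
  rcases Nat.eq_zero_or_pos ρ.natDegree with h0 | h0
  · have : ρ = 1 := hρ.natDegree_eq_zero.1 h0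
    subst this
    refine ⟨A, hA0, hAp, ?_, by simpa using hAd⟩
    rw [← hk, h0]; simpa using hA
  · obtain ⟨B, hB0, hBp, hB, hBd⟩ := ih ρ.natDegree (by nlinarith) ρ rfl hρ h0 hXρ
    have := lcm_bound hp hAp hBp hA0 hB0 hA hB
    refine ⟨A.lcm B, Nat.lcm_pos hA0 hB0, hAp.trans (Nat.dvd_lcm_left _ _), by rw [← hk]; omega, ?_⟩
    exact (hc.pow_left).mul_dvd (dvd_of_dvd hAd (Nat.dvd_lcm_left _ _))
      (dvd_of_dvd hBd (Nat.dvd_lcm_right _ _))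

lemma lemD {p : ℕ} [Fact p.Prime] (hp : 5 ≤ p) (ν : (ZMod p)[X]) 
    (hm : ν.Monic) (h1 : 1 ≤ ν.natDegree) (hX : ¬ X ∣ ν) :
    Irreducible ν ∨ (ν.natDegree = 2 ∧ ∃ a : ZMod p, ν = (X - C a) ^ 2) ∨
    ∃ N, 0 < N ∧ 4 * N < p ^ ν.natDegree ∧ ν ∣ X ^ N - 1 := by
  obtain ⟨f, ρ, e, hfi, hfm, hρ, he, rfl, hc⟩ := split hm h1
  have hXf : ¬ X ∣ f := fun h => hX ((h.trans (dvd_pow_self f (by omega))).mul_right _)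
  have hXρ : ¬ X ∣ ρ := fun h => hX (h.mul_left _)
  rw [deg_split hfm hρ]
  have hkf : 1 ≤ f.natDegree := hfi.natDegree_pos
  rcases Nat.eq_zero_or_pos ρ.natDegree with h0 | h0
  · have : ρ = 1 := hρ.natDegree_eq_zero.1 h0
    subst this
    simp only [mul_one, natDegree_one, add_zero]
    rcases Nat.eq_or_lt_of_le he with h | h
    · left; rw [← h]; simpa using hfi
    right
    have hlt : 1 < p ^ f.natDegree := Nat.one_lt_pow (by omega) (by omega)
    rcases Nat.eq_or_lt_of_le hkf with hk | hk
    · obtain ⟨a, ha⟩ : ∃ a : ZMod p, f = X - C a := by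
        refine ⟨- f.coeff 0, ?_⟩
        have := eq_X_add_C_of_natDegree_le_one (p := f) (by omega)
        have h2 : f.coeff 1 = 1 := by
          have := hfm.coeff_natDegree
          rwa [← hk] at this
        rw [h2] at this
        rw [C_neg, sub_neg_eq_add]
        simpa using this
      by_cases he2 : e = 2
      · left
        subst he2
        exact ⟨by omega, a, by rw [ha]⟩
      right
      obtain ⟨m, rfl⟩ : ∃ m, e = m + 3 := ⟨e - 3, by omega⟩
      refine ⟨(p ^ f.natDegree - 1) * p ^ (m + 1), 
        Nat.mul_pos (by omega) (by positivity), ?_,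
        pow_dvd (irr_dvd hfi hXf) (pow_lin_bound2 hp m)⟩
      rw [← hk, pow_one, mul_one]
      calc 4 * ((p - 1) * p ^ (m + 1)) = (4 * (p - 1)) * p ^ (m + 1) := by ring
        _ < (p * p) * p ^ (m + 1) := by
          have : 4 * (p - 1) < p * p := by
            have : 5 * p ≤ p * p := by gcongr
            omega
          gcongr
        _ = _ := by ring
    · right
      obtain ⟨m, rfl⟩ : ∃ m, e = m + 2 := ⟨e - 2, by omega⟩
      refine ⟨(p ^ f.natDegree - 1) * p ^ (m + 1), 
        Nat.mul_pos (by omega) (by positivity), ?_,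
        pow_dvd (irr_dvd hfi hXf) (pow_lin_bound hp (m + 1))⟩
      calc 4 * ((p ^ f.natDegree - 1) * p ^ (m + 1)) < p * (p ^ f.natDegree * p ^ (m + 1)) := by
            apply Nat.mul_lt_mul''
            · omega
            · gcongr; omega
        _ = p ^ (1 + f.natDegree + (m + 1)) := by ring
        _ ≤ _ := by gcongr; · omega
                    · nlinarith
  · right; right
    obtain ⟨A, hA0, hAp, hA, hAd⟩ := ppow hp hfi hXf e he
    obtain ⟨B, hB0, hBp, hB, hBd⟩ := lemA hp ρ.natDegree ρ rfl hρ h0 hXρ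
    refine ⟨A.lcm B, Nat.lcm_pos hA0 hB0, lcm_bound hp hAp hBp hA0 hB0 hA hB, ?_⟩
    exact (hc.pow_left).mul_dvd (dvd_of_dvd hAd (Nat.dvd_lcm_left _ _))
      (dvd_of_dvd hBd (Nat.dvd_lcm_right _ _))


lemma irr_X_sub_one {p : ℕ} [Fact p.Prime] : Irreducible (X - 1 : (ZMod p)[X]) := by
  simpa using irreducible_X_sub_C (1 : ZMod p)

lemma monic_X_sub_one {p : ℕ} [Fact p.Prime] : (X - 1 : (ZMod p)[X]).Monic := by
  simpa using monic_X_sub_C (1 : ZMod p)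

lemma deg_X_sub_one {p : ℕ} [Fact p.Prime] : (X - 1 : (ZMod p)[X]).natDegree = 1 := by
  simpa using natDegree_X_sub_C (1 : ZMod p)

lemma X_sub_one_dvd {R : Type*} [CommRing R] (N : ℕ) : (X - 1 : R[X]) ∣ X ^ N - 1 :=
  sub_one_dvd_pow_sub_one _ _

lemma lemC {p : ℕ} [Fact p.Prime] (hp : 5 ≤ p) (χ : (ZMod p)[X])
    (hm : χ.Monic) (h1 : 1 ≤ χ.natDegree) (hX : ¬ X ∣ χ) :
    (Irreducible χ ∧ ¬ (X - 1) ∣ χ) ∨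
    (∃ a : ZMod p, χ = (X - C a) ^ 2 ∧ ¬ (X - 1) ∣ χ) ∨
    χ = X - 1 ∨
    (∃ f : (ZMod p)[X], Irreducible f ∧ f.Monic ∧ χ = (X - 1) * f ∧ IsCoprime (X - 1) f) ∨
    ∃ N, 0 < N ∧ 4 * N < p ^ χ.natDegree ∧ (X - 1) * χ ∣ X ^ N - 1 := by
  have hfin : FiniteMultiplicity (X - 1) χ := finiteMultiplicity_of_degree_pos_of_monic
    (degree_pos_of_irreducible irr_X_sub_one) monic_X_sub_one hm.ne_zero
  obtain ⟨ν, h2, h3⟩ := hfin.exists_eq_pow_mul_and_not_dvd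
  generalize multiplicity (X - 1) χ = e at h2
  have hν : ν.Monic := by
    rw [h2] at hm
    exact (monic_X_sub_one.pow _).of_mul_monic_left hm
  have hc : IsCoprime (X - 1) ν := (irr_X_sub_one.coprime_iff_not_dvd).2 h3
  have hXν : ¬ X ∣ ν := fun h => hX (h2 ▸ h.mul_left _)
  have hdeg : χ.natDegree = e + ν.natDegree := by
    rw [h2, deg_split monic_X_sub_one hν, deg_X_sub_one, mul_one]
  have h11 : (X - 1 : (ZMod p)[X]) ∣ X ^ 1 - 1 := by simp
  rcases Nat.eq_zero_or_pos e with rfl | he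
  · simp only [pow_zero, one_mul] at h2
    subst h2
    rcases lemD hp χ hm h1 hX with h | ⟨_, a, h⟩ | ⟨N, hN0, hN, hd⟩
    · exact Or.inl ⟨h, h3⟩
    · exact Or.inr (Or.inl ⟨a, h, h3⟩)
    · exact Or.inr (Or.inr (Or.inr (Or.inr ⟨N, hN0, hN, hc.mul_dvd (X_sub_one_dvd _) hd⟩)))
  right; right
  rcases Nat.eq_zero_or_pos ν.natDegree with h0 | h0
  · have : ν = 1 := hν.natDegree_eq_zero.1 h0
    subst this
    rw [mul_one] at h2
    rcases Nat.eq_or_lt_of_le he with h | h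
    · left; rw [h2, ← h]; simp
    · right; right
      obtain ⟨m, rfl⟩ : ∃ m, e = m + 2 := ⟨e - 2, by omega⟩
      refine ⟨1 * p ^ (m + 1), by positivity, ?_, ?_⟩
      · rw [hdeg, natDegree_one, add_zero, one_mul, pow_succ p (m + 1), mul_comm]
        gcongr; omega
      · rw [h2, ← pow_succ']
        exact pow_dvd h11 (pow_lin_bound2 hp m)
  right
  rcases Nat.eq_or_lt_of_le he with h | h
  · subst h
    replace h2 : χ = (X - 1) * ν := by rw [h2]; simp
    replace hdeg : χ.natDegree = 1 + ν.natDegree := hdeg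
    have h22 : (X - 1 : (ZMod p)[X]) ^ 2 ∣ X ^ (1 * p ^ 1) - 1 := pow_dvd h11 (by rw [pow_one]; omega)
    rcases lemD hp ν hν h0 hXν with hi | ⟨hk, a, ha⟩ | ⟨N, hN0, hN, hd⟩
    · left; exact ⟨ν, hi, hν, h2, hc⟩
    · right
      have hXa : ¬ X ∣ (X - C a : (ZMod p)[X]) := fun h => hXν (by
        rw [ha]; exact h.trans (dvd_pow_self _ (by omega)))
      have hd := irr_dvd (irreducible_X_sub_C a) hXa
      rw [natDegree_X_sub_C, pow_one] at hd
      refine ⟨(p - 1) * p ^ 1, Nat.mul_pos (by omega) (by rw [pow_one]; omega), ?_, ?_⟩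
      · rw [hdeg, hk]
        have : (p - 1) * p ^ 1 < p * p := by rw [pow_one]; exact Nat.mul_lt_mul_of_pos_right (by omega) (by omega)
        calc _ < p * (p * p) := by apply Nat.mul_lt_mul'' _ this; omega
          _ = _ := by ring
      · rw [h2, ← mul_assoc, ← sq]
        refine (hc.pow_left).mul_dvd (dvd_of_dvd h22 ?_) ?_
        · rw [one_mul]; exact Dvd.intro_left _ rfl
        · rw [ha]; exact pow_dvd hd (by rw [pow_one]; omega)
    · right
      refine ⟨N * p, Nat.mul_pos hN0 (by omega), ?_, ?_⟩
      · rw [hdeg, pow_add, pow_one, mul_comm N, mul_left_comm]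
        gcongr
      · rw [h2, ← mul_assoc, ← sq]
        refine (hc.pow_left).mul_dvd (dvd_of_dvd h22 ?_) (dvd_of_dvd hd (Dvd.intro _ rfl))
        simp
  · right
    obtain ⟨m, rfl⟩ : ∃ m, e = m + 2 := ⟨e - 2, by omega⟩
    obtain ⟨B, hB0, hBp, hB, hBd⟩ := lemA hp ν.natDegree ν rfl hν h0 hXν
    refine ⟨B * p ^ (m + 1), Nat.mul_pos hB0 (by positivity), ?_, ?_⟩
    · rw [hdeg]
      calc 4 * (B * p ^ (m + 1)) < p * (p ^ ν.natDegree * p ^ (m + 1)) := by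
            apply Nat.mul_lt_mul''
            · omega
            · gcongr
        _ = _ := by ring
    · rw [h2, ← mul_assoc, ← pow_succ']
      refine (hc.pow_left).mul_dvd (dvd_of_dvd (pow_dvd h11 (pow_lin_bound2 hp m)) ?_)
        (dvd_of_dvd hBd (Dvd.intro _ rfl))
      simp

section affine
variable {p : ℕ} [Fact p.Prime] {V : Type*} [AddCommGroup V] [Module (ZMod p) V]
  [Module.Finite (ZMod p) V] (h : V ≃ₗ[ZMod p] V) (v : V) (g : Equiv.Perm V)

lemma g_pow (hg : ∀ x : V, g x = h (x + v)) (N : ℕ) (x : V) :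
    (g ^ N) x = ((h : Module.End (ZMod p) V) ^ N) x +
      h ((∑ i ∈ Finset.range N, (h : Module.End (ZMod p) V) ^ i) v) := by
  induction N with
  | zero => simp
  | succ N ih =>
    rw [pow_succ', Equiv.Perm.mul_apply, ih, hg, geom_sum_succ, pow_succ']
    simp [add_assoc]

lemma h_pow_iff (N : ℕ) : h ^ N = 1 ↔ (h : Module.End (ZMod p) V) ^ N = 1 := by
  have hinj : Function.Injective (LinearEquiv.automorphismGroup.toLinearMapMonoidHom
    (R := ZMod p) (M := V)) := fun a b hab => LinearEquiv.toLinearMap_injective hab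
  have := map_pow (LinearEquiv.automorphismGroup.toLinearMapMonoidHom (R := ZMod p) (M := V)) h N
  rw [← hinj.eq_iff, this, map_one]
  rfl

lemma orderOf_h : orderOf (h : Module.End (ZMod p) V) = orderOf h := by
  rw [orderOf_eq_orderOf_iff]
  intro n; rw [h_pow_iff]

lemma g_pow_iff (hg : ∀ x : V, g x = h (x + v)) (N : ℕ) :
    g ^ N = 1 ↔ (h : Module.End (ZMod p) V) ^ N = 1 ∧
      (∑ i ∈ Finset.range N, (h : Module.End (ZMod p) V) ^ i) v = 0 := by
  constructor
  · intro H
    have h0 := g_pow h v g hg N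
    rw [H] at h0
    have hv : (∑ i ∈ Finset.range N, (h : Module.End (ZMod p) V) ^ i) v = 0 := by
      have := h0 0
      rw [Equiv.Perm.one_apply, map_zero, zero_add] at this
      exact (LinearEquiv.map_eq_zero_iff h).1 this.symm
    refine ⟨?_, hv⟩
    ext x
    have := h0 x
    rw [hv] at this
    simpa using this.symm
  · rintro ⟨h1, h2⟩
    ext x
    rw [g_pow h v g hg, h1, h2]; simp

lemma h_pow_of_dvd {N : ℕ} (hd : (h : Module.End (ZMod p) V).charpoly ∣ X ^ N - 1) :
    (h : Module.End (ZMod p) V) ^ N = 1 := by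
  obtain ⟨q, hq⟩ := hd
  have := congrArg (aeval (h : Module.End (ZMod p) V)) hq
  rw [map_mul, LinearMap.aeval_self_charpoly, zero_mul] at this
  simpa [sub_eq_zero] using this

lemma g_pow_of_dvd (hg : ∀ x : V, g x = h (x + v)) {N : ℕ}
    (hd : (X - 1) * (h : Module.End (ZMod p) V).charpoly ∣ X ^ N - 1) : g ^ N = 1 := by
  rw [g_pow_iff h v g hg]
  refine ⟨h_pow_of_dvd h ((Dvd.intro_left _ rfl).trans hd), ?_⟩
  rw [← mul_geom_sum] at hd
  have hd' := (mul_dvd_mul_iff_left (irr_X_sub_one (p := p)).ne_zero).1 hd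
  obtain ⟨q, hq⟩ := hd'
  have := congrArg (aeval (h : Module.End (ZMod p) V)) hq
  rw [map_mul, LinearMap.aeval_self_charpoly, zero_mul] at this
  have h2 : (∑ i ∈ Finset.range N, (h : Module.End (ZMod p) V) ^ i) = 0 := by
    simpa using this
  rw [h2]; rfl

lemma not_X_dvd : ¬ X ∣ (h : Module.End (ZMod p) V).charpoly := by
  intro hX
  have h1 : (h : Module.End (ZMod p) V).charpoly.IsRoot 0 := by
    have := X_dvd_iff.1 hX
    rwa [coeff_zero_eq_eval_zero] at this
  rw [← Module.End.hasEigenvalue_iff_isRoot_charpoly] at h1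
  obtain ⟨x, hx⟩ := h1.exists_hasEigenvector
  have := hx.apply_eq_smul
  simp at this
  exact hx.2 this

lemma fixed_iff : (X - 1) ∣ (h : Module.End (ZMod p) V).charpoly ↔ ∃ x : V, x ≠ 0 ∧ h x = x := by
  have h1 : (X - 1 : (ZMod p)[X]) = X - C 1 := by simp
  rw [h1, dvd_iff_isRoot, ← Module.End.hasEigenvalue_iff_isRoot_charpoly]
  constructor
  · intro h1
    obtain ⟨x, hx⟩ := h1.exists_hasEigenvector
    exact ⟨x, hx.2, by simpa using hx.apply_eq_smul⟩
  · rintro ⟨x, hx, hx'⟩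
    exact Module.End.hasEigenvalue_of_hasEigenvector
      (x := x) ⟨Module.End.mem_eigenspace_iff.2 (by simpa using hx'), hx⟩

lemma orderOf_g_eq (hg : ∀ x : V, g x = h (x + v))
    (hf : ¬ (X - 1) ∣ (h : Module.End (ZMod p) V).charpoly) : orderOf g = orderOf h := by
  rw [orderOf_eq_orderOf_iff]
  intro n
  rw [h_pow_iff, g_pow_iff h v g hg]
  refine ⟨fun h => h.1, fun H => ⟨H, ?_⟩⟩
  by_contra hne
  apply hf
  rw [fixed_iff]
  refine ⟨_, hne, ?_⟩
  have := mul_geom_sum (h : Module.End (ZMod p) V) n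
  rw [H, sub_self] at this
  have := congrArg (fun f : Module.End (ZMod p) V => f v) this
  simpa [sub_eq_zero] using this

/-- invariant subspaces killed by an irreducible polynomial are big -/
lemma dim_ge {f : (ZMod p)[X]} (hf : Irreducible f) (W : Submodule (ZMod p) V)
    (hW : ∀ x ∈ W, h x ∈ W) (hne : W ≠ ⊥)
    (hk : ∀ x ∈ W, aeval (h : Module.End (ZMod p) V) f x = 0) :
    f.natDegree ≤ Module.finrank (ZMod p) W := by
  let k : Module.End (ZMod p) W := (h : Module.End (ZMod p) V).restrict hW
  have hcomm : ∀ q : (ZMod p)[X], ∀ x : W,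
      ((aeval k q x : W) : V) = aeval (h : Module.End (ZMod p) V) q x := by
    intro q
    induction q using Polynomial.induction_on' with
    | add a b ha hb => intro x; simp [ha, hb]
    | monomial n a =>
      intro x
      simp only [aeval_monomial, Module.End.mul_apply, Module.algebraMap_end_apply]
      simp only [Submodule.coe_smul]
      congr 1
      simp only [k]
      rw [Module.End.pow_restrict]
      rfl
  have h0 : aeval k f = 0 := by
    ext x
    rw [hcomm, hk x x.2]; rfl
  have hd : minpoly (ZMod p) k ∣ f := minpoly.dvd _ _ h0
  have : Nontrivial W := Submodule.nontrivial_iff_ne_bot.2 hne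
  have hnu : ¬ IsUnit (minpoly (ZMod p) k) := minpoly.not_isUnit _ _
  have hd2 : f ∣ minpoly (ZMod p) k := by
    obtain ⟨q, hq⟩ := hd
    rcases hf.isUnit_or_isUnit hq with h | h
    · exact absurd h hnu
    · obtain ⟨r, hr⟩ := h.exists_right_inv
      exact ⟨r, by rw [hq, mul_assoc, hr, mul_one]⟩
  have hd3 := hd2.trans (LinearMap.minpoly_dvd_charpoly k)
  have := natDegree_le_of_dvd hd3 (LinearMap.charpoly_monic k).ne_zero
  rwa [LinearMap.charpoly_natDegree] at this

end affine

lemma orderOf_algebraMap_field {K B : Type*} [Field K] [Ring B] [Algebra K B] [Nontrivial B]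
    (a : K) : orderOf (algebraMap K B a) = orderOf a :=
  orderOf_injective (algebraMap K B).toMonoidHom (algebraMap K B).injective a

lemma three_mul {m q : ℕ} (hd : m ∣ q - 1) (hq : 1 < q) (h : q ≤ 4 * m) : q - 1 ≤ 3 * m := by
  obtain ⟨k, hk⟩ := hd
  have : k < 4 := by
    by_contra hk4
    have : m * 4 ≤ m * k := by gcongr; omega
    omega
  rw [hk, mul_comm]
  gcongr; omega

end AffLarge

/-- Classification of affine transformations `g = t_v h` of order at least
`p^d / 4` over `𝔽_p`, `p ≥ 5`: either (1) `h` is (a power of) a Singer cycle; or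
(2) `h = J₁ ⊕ s` with `s` a Singer-type element on a hyperplane and `orderOf g = p * orderOf h`;
or (3) `d = 1`, `h = 1`, `g` a nontrivial translation; or (4) `d = 2` and `h = c • u`
with `c` a scalar of order at least `(p-1)/3` and `u ≠ 1` unipotent. -/
theorem affine_large_order_classification (p d : ℕ) [Fact p.Prime] (hp5 : 5 ≤ p)
    (hd1 : 1 ≤ d)
    (V : Type*) [AddCommGroup V] [Module (ZMod p) V] [Module.Finite (ZMod p) V]
    (hdim : Module.finrank (ZMod p) V = d)
    (h : V ≃ₗ[ZMod p] V) (v : V)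
    (g : Equiv.Perm V) (hg : ∀ x : V, g x = h (x + v))
    (hord : p ^ d ≤ 4 * orderOf g) :
    -- (1) Singer cycle case
    ((∀ W : Submodule (ZMod p) V, (∀ x ∈ W, h x ∈ W) → W = ⊥ ∨ W = ⊤) ∧
      orderOf h ∣ p ^ d - 1 ∧ p ^ d - 1 ≤ 3 * orderOf h ∧ orderOf g = orderOf h) ∨
    -- (2) `J₁ ⊕ s_{d-1}^i` case
    (2 ≤ d ∧ ∃ U W : Submodule (ZMod p) V,
      (∀ x ∈ U, h x ∈ U) ∧ (∀ x ∈ W, h x ∈ W) ∧ IsCompl U W ∧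
      Module.finrank (ZMod p) U = 1 ∧ (∀ x ∈ U, h x = x) ∧
      (W ≠ ⊥ ∧ ∀ W' : Submodule (ZMod p) V, W' ≤ W → (∀ x ∈ W', h x ∈ W') →
        W' = ⊥ ∨ W' = W) ∧
      orderOf h ∣ p ^ (d - 1) - 1 ∧ p ^ (d - 1) - 1 ≤ 3 * orderOf h ∧
      orderOf g = p * orderOf h) ∨
    -- (3) translation case
    (d = 1 ∧ h = 1 ∧ v ≠ 0 ∧ orderOf g = p) ∨
    -- (4) `s₁^i ⊗ J₂` case
    (d = 2 ∧ ∃ (c : ZMod p), c ≠ 0 ∧ ∃ u : V ≃ₗ[ZMod p] V,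
      ((u.toLinearMap : Module.End (ZMod p) V) - 1) ^ d = 0 ∧ u ≠ 1 ∧
      (h.toLinearMap : Module.End (ZMod p) V) = c • (u.toLinearMap : Module.End (ZMod p) V) ∧
      p - 1 ≤ 3 * orderOf c ∧ orderOf g = orderOf h ∧ orderOf h = p * orderOf c) := by
  set H : Module.End (ZMod p) V := (h : V →ₗ[ZMod p] V) with hH
  have hdeg : H.charpoly.natDegree = d := by rw [LinearMap.charpoly_natDegree, hdim]
  have hpp : p.Prime := Fact.out
  have hpd : 1 < p ^ d := Nat.one_lt_pow (by omega) (by omega)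
  have hNt : Nontrivial V := Module.nontrivial_of_finrank_pos (R := ZMod p) (by omega)
  have hH0 := LinearMap.aeval_self_charpoly H
  rcases AffLarge.lemC hp5 H.charpoly (LinearMap.charpoly_monic H) (by omega)
    (AffLarge.not_X_dvd h) with ⟨hi, hn1⟩ | ⟨a, ha, hn1⟩ | h1 | ⟨f, hfi, hfm, hf, hc⟩ |
      ⟨N, hN0, hN, hd⟩
  · -- irreducible
    left
    have hgh := AffLarge.orderOf_g_eq h v g hg hn1
    have hdv : orderOf h ∣ p ^ d - 1 := by
      rw [orderOf_dvd_iff_pow_eq_one, AffLarge.h_pow_iff]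
      apply AffLarge.h_pow_of_dvd
      have := AffLarge.irr_dvd hi (AffLarge.not_X_dvd h)
      rwa [hdeg] at this
    refine ⟨?_, hdv, AffLarge.three_mul hdv hpd (hgh ▸ hord), hgh⟩
    intro W hW
    by_cases hb : W = ⊥
    · exact Or.inl hb
    right
    have := AffLarge.dim_ge h hi W hW hb (fun x _ => by rw [← hH, hH0]; rfl)
    rw [hdeg] at this
    apply Submodule.eq_top_of_finrank_eq
    have := Submodule.finrank_le W
    omega
  · -- scalar times unipotent
    right; right; right
    have hgh := AffLarge.orderOf_g_eq h v g hg hn1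
    have hd2 : d = 2 := by
      rw [← hdeg, ha, natDegree_pow, natDegree_X_sub_C]
    subst hd2
    have ha0 : a ≠ 0 := by
      rintro rfl
      apply AffLarge.not_X_dvd h
      rw [← hH, ha]
      simp
    have hap : a ^ (p - 1) = 1 := ZMod.pow_card_sub_one_eq_one ha0
    have haord : orderOf a ∣ p - 1 := orderOf_dvd_of_pow_eq_one hap
    let A : Module.End (ZMod p) V := algebraMap (ZMod p) _ a
    have hA : orderOf A = orderOf a := AffLarge.orderOf_algebraMap_field a
    let u : V ≃ₗ[ZMod p] V := h.trans (LinearEquiv.smulOfNeZero (ZMod p) V a⁻¹ (inv_ne_zero ha0))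
    have hu : (u : Module.End (ZMod p) V) = a⁻¹ • H := by
      ext x; rfl
    have hHu : H = a • (u : Module.End (ZMod p) V) := by
      rw [hu, smul_smul, mul_inv_cancel₀ ha0, one_smul]
    have hHA : H = A * (u : Module.End (ZMod p) V) := by
      rw [hHu, Algebra.smul_def]
    have hsq : ((u : Module.End (ZMod p) V) - 1) ^ 2 = 0 := by
      have h2 : (u : Module.End (ZMod p) V) - 1 = a⁻¹ • (H - A) := by
        rw [smul_sub, ← hu, Algebra.smul_def, ← map_mul, inv_mul_cancel₀ ha0, map_one]
      rw [ha] at hH0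
      simp only [map_pow, map_sub, aeval_X, aeval_C] at hH0
      rw [h2, _root_.smul_pow, hH0, smul_zero]
    have hu1 : u ≠ 1 := by
      intro hu1
      have hHA' : H = A := by
        rw [hHA, hu1]; rfl
      have hh : orderOf h = orderOf a := by
        rw [← AffLarge.orderOf_h, ← hH, hHA', hA]
      have := Nat.le_of_dvd (by omega) haord
      have h5 : 5 * p ≤ p ^ 2 := by rw [sq]; gcongr
      omega
    have hup : (u : Module.End (ZMod p) V) ^ p = 1 := by
      have : CharP (Module.End (ZMod p) V) p := 
        charP_of_injective_algebraMap (algebraMap (ZMod p) (Module.End (ZMod p) V)).injective p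
      have h3 := sub_pow_char_of_commute p (Commute.one_right (u : Module.End (ZMod p) V))
      have h4 : ((u : Module.End (ZMod p) V) - 1) ^ p = 0 := 
        pow_eq_zero_of_le (by omega) hsq
      rw [h4, one_pow] at h3
      exact (sub_eq_zero.1 h3.symm)
    have huo : orderOf (u : Module.End (ZMod p) V) = p := by
      apply orderOf_eq_prime hup
      intro h1
      exact hu1 (LinearEquiv.toLinearMap_injective h1)
    have hho : orderOf h = p * orderOf a := by
      rw [← AffLarge.orderOf_h, ← hH, hHA, Commute.orderOf_mul_eq_mul_orderOf_of_coprime, huo, hA,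
        mul_comm]
      · exact Algebra.commutes _ _
      · rw [huo, hA]
        refine Nat.Coprime.coprime_dvd_left haord ?_
        rw [Nat.coprime_comm, hpp.coprime_iff_not_dvd]
        intro h1
        have := Nat.le_of_dvd (by omega) h1
        omega
    refine ⟨rfl, a, ha0, u, hsq, hu1, hHu, ?_, hgh, hho⟩
    apply AffLarge.three_mul haord (by omega)
    rw [hgh, hho, sq, mul_left_comm] at hord
    exact Nat.le_of_mul_le_mul_left hord (by omega)
  · -- translation
    right; right; left
    have hd1' : d = 1 := by rw [← hdeg, h1, AffLarge.deg_X_sub_one]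
    subst hd1'
    have hh1 : H = 1 := by
      rw [h1] at hH0
      simpa [sub_eq_zero] using hH0
    have hh : h = 1 := LinearEquiv.toLinearMap_injective hh1
    have hg1 : g ≠ 1 := by
      rintro rfl
      rw [orderOf_one, pow_one] at hord
      omega
    have hgp : g ^ p = 1 := by
      rw [AffLarge.g_pow_iff h v g hg, ← hH, hh1]
      refine ⟨one_pow _, ?_⟩
      simp [← Nat.cast_smul_eq_nsmul (ZMod p)]
    refine ⟨rfl, hh, ?_, orderOf_eq_prime hgp hg1⟩
    rintro rfl
    apply hg1
    ext x
    rw [hg, hh]; simp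
  · -- direct sum
    right; left
    have hdf : 1 + f.natDegree = d := by
      rw [← hdeg, hf, AffLarge.monic_X_sub_one.natDegree_mul hfm, AffLarge.deg_X_sub_one]
    have hfpos : 1 ≤ f.natDegree := hfi.natDegree_pos
    have hXf : ¬ X ∣ f := fun hx => AffLarge.not_X_dvd h (by
      rw [← hH, hf]; exact hx.mul_left _)
    have hdv : orderOf h ∣ p ^ (d - 1) - 1 := by
      rw [orderOf_dvd_iff_pow_eq_one, AffLarge.h_pow_iff]
      apply AffLarge.h_pow_of_dvd
      rw [← hH, hf]
      refine hc.mul_dvd (AffLarge.X_sub_one_dvd _) ?_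
      have := AffLarge.irr_dvd hfi hXf
      rwa [show d - 1 = f.natDegree by omega]
    have hp1 : 1 < p ^ (d - 1) := Nat.one_lt_pow (by omega) (by omega)
    have hpd1 : p ^ d = p * p ^ (d - 1) := by rw [← pow_succ']; congr 1; omega
    have hm : orderOf h ≤ p ^ (d - 1) - 1 := Nat.le_of_dvd (by omega) hdv
    have hgm : orderOf g = p * orderOf h := by
      have h1 : orderOf h ∣ orderOf g := by
        rw [orderOf_dvd_iff_pow_eq_one, AffLarge.h_pow_iff]
        exact ((AffLarge.g_pow_iff h v g hg _).1 (pow_orderOf_eq_one g)).1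
      have h2 : orderOf g ∣ p * orderOf h := by
        rw [orderOf_dvd_iff_pow_eq_one, mul_comm, pow_mul]
        have key : ∀ x, (g ^ orderOf h) x = x +
            h ((∑ i ∈ Finset.range (orderOf h), (h : Module.End (ZMod p) V) ^ i) v) := by
          intro x
          rw [AffLarge.g_pow h v g hg, (AffLarge.h_pow_iff h _).1 (pow_orderOf_eq_one h)]; rfl
        generalize h ((∑ i ∈ Finset.range (orderOf h), (h : Module.End (ZMod p) V) ^ i) v) = w at key
        have key2 : ∀ n : ℕ, ∀ x, ((g ^ orderOf h) ^ n) x = x + n • w := by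
          intro n
          induction n with
          | zero => intro x; simp
          | succ n ih => intro x; rw [pow_succ', Equiv.Perm.mul_apply, ih, key, succ_nsmul, add_assoc]
        ext x
        rw [key2, ← Nat.cast_smul_eq_nsmul (ZMod p)]
        simp
      obtain ⟨k, hk⟩ := h1
      have hmpos : 0 < orderOf h := by
        rcases Nat.eq_zero_or_pos (orderOf h) with h0 | h0
        · rw [h0, zero_dvd_iff] at hdv; omega
        · exact h0
      rw [hk, mul_comm p] at h2
      have hkp : k ∣ p := Nat.dvd_of_mul_dvd_mul_left hmpos h2
      rcases (Nat.dvd_prime hpp).1 hkp with rfl | rfl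
      · exfalso
        rw [hk, mul_one, hpd1] at hord
        have : 5 * p ^ (d - 1) ≤ p * p ^ (d - 1) := by gcongr
        omega
      · rw [hk, mul_comm]
    have h3 : p ^ (d - 1) - 1 ≤ 3 * orderOf h := by
      apply AffLarge.three_mul hdv hp1
      rw [hgm, hpd1, mul_left_comm] at hord
      exact Nat.le_of_mul_le_mul_left hord (by omega)
    have hX1 : aeval H (X - 1 : (ZMod p)[X]) = H - 1 := by simp
    let U := LinearMap.ker (aeval H (X - 1 : (ZMod p)[X]))
    let W := LinearMap.ker (aeval H f)
    have hUfix : ∀ x ∈ U, h x = x := by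
      intro x hx
      have : aeval H (X - 1 : (ZMod p)[X]) x = 0 := hx
      rw [hX1] at this
      exact sub_eq_zero.1 this
    have hWinv : ∀ x ∈ W, h x ∈ W := by
      intro x hx
      have hx' : aeval H f x = 0 := hx
      have : aeval H f (H x) = H (aeval H f x) := by
        have hcm : aeval H f * H = H * aeval H f := by
          have := congrArg (aeval H) (mul_comm f X)
          simpa using this
        exact LinearMap.congr_fun hcm x
      change aeval H f (H x) = 0
      rw [this, hx', map_zero]
    have hcompl : IsCompl U W := by
      refine ⟨disjoint_ker_aeval_of_isCoprime H hc, ?_⟩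
      rw [codisjoint_iff, sup_ker_aeval_eq_ker_aeval_mul_of_coprime H hc, ← hf, hH0]
      exact LinearMap.ker_zero
    have hU : U ≠ ⊥ := by
      obtain ⟨x, hx, hx'⟩ := (AffLarge.fixed_iff h).1 (by rw [← hH, hf]; exact Dvd.intro _ rfl)
      intro hb
      apply hx
      have : x ∈ U := by
        change aeval H (X - 1 : (ZMod p)[X]) x = 0
        rw [hX1]
        simp [hH, hx']
      rwa [hb, Submodule.mem_bot] at this
    have hW : W ≠ ⊥ := by
      intro hb
      have hUt : U = ⊤ := by
        have := hcompl.sup_eq_top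
        rwa [hb, sup_bot_eq] at this
      have hh1 : H = 1 := by
        ext x
        exact hUfix x (hUt ▸ Submodule.mem_top)
      have hcp := LinearMap.charpoly_one (R := ZMod p) (M := V)
      rw [← hh1, hf] at hcp
      have hfd : f ∣ (X - 1) ^ Module.finrank (ZMod p) V := hcp ▸ Dvd.intro_left _ rfl
      have := (hc.symm.pow_right (n := Module.finrank (ZMod p) V)).isUnit_of_dvd' dvd_rfl hfd
      exact hfi.not_isUnit this
    have hsum := Submodule.finrank_add_eq_of_isCompl hcompl
    have hUpos : 0 < Module.finrank (ZMod p) U := by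
      have := Submodule.nontrivial_iff_ne_bot.2 hU
      exact Module.finrank_pos
    have hWge := AffLarge.dim_ge h hfi W hWinv hW (fun x hx => hx)
    refine ⟨by omega, U, W, ?_, hWinv, hcompl, by omega, hUfix, ⟨hW, ?_⟩, hdv, h3, hgm⟩
    · intro x hx
      rw [hUfix x hx]; exact hx
    · intro W' hle hinv
      by_cases hb : W' = ⊥
      · exact Or.inl hb
      right
      have := AffLarge.dim_ge h hfi W' hinv hb (fun x hx => hle hx)
      apply Submodule.eq_of_le_of_finrank_le hle
      omega
  · exfalso
    have := orderOf_le_of_pow_eq_one hN0 (AffLarge.g_pow_of_dvd h v g hg hd)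
    rw [hdeg] at hN
    omega
end

section
/- Let p ≥ 5 be a prime, V a d-dimensional vector space over 𝔽_p with d ≥ 1, h a linear automorphism of V, v ∈ V, and suppose the affine transformation g = t_v h has at most four cycles on V. Then one of the following holds: (1) ker(h − 1) = 0, V is a simple 𝔽_p[h]-module, orderOf h divides p^d − 1, and 3 · orderOf h ≥ p^d − 1; (2) d = 2 and there exist a nonzero scalar c ∈ 𝔽_p of order p − 1 and a unipotent automorphism u ≠ 1 with h = c · u; (3) d = 1, h = 1 and v ≠ 0; (4) d ≥ 2 and there exist h-invariant subspaces U, W with V = U ⊕ W, dim U = 1, h restricted to U the identity, W a simple 𝔽_p[h]-module, orderOf h dividing p^{d−1} − 1, 3 · orderOf h ≥ p^{d−1} − 1, and orderOf g = p · orderOf h. -/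
theorem pig_extract {α : Type*} [Zero α] (r : α → α → Prop) (a b c d : α) (ha : ¬ r 0 a)
    (hb : ¬ r 0 b) (hc : ¬ r 0 c) (hd : ¬ r 0 d) (i j : Fin 5) (hij : i < j)
    (hr : r ((![0, a, b, c, d] : Fin 5 → α) i) ((![0, a, b, c, d] : Fin 5 → α) j)) :
    r a b ∨ r a c ∨ r a d ∨ r b c ∨ r b d ∨ r c d := by
  fin_cases i <;> fin_cases j <;> simp at hij hr <;> tauto

/-- Being in the same forward orbit of a linear map. -/
def OrbRel {V : Type*} [AddCommGroup V] {p : ℕ} [Module (ZMod p) V]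
    (h : Module.End (ZMod p) V) (x y : V) : Prop := ∃ k : ℕ, (h ^ k) x = y

section
variable {V : Type*} [AddCommGroup V] {p : ℕ} [Module (ZMod p) V]

theorem OrbRel.symm' {h : Module.End (ZMod p) V} {m : ℕ} (hm : 0 < m) (hm1 : h ^ m = 1)
    {x y : V} (hxy : OrbRel h x y) : OrbRel h y x := by
  obtain ⟨k, rfl⟩ := hxy
  refine ⟨(m - 1) * k, ?_⟩
  rw [← Module.End.mul_apply, ← pow_add]
  have : (m - 1) * k + k = m * k := by
    obtain ⟨m, rfl⟩ : ∃ t, m = t + 1 := ⟨m - 1, by omega⟩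
    simp; ring
  rw [this, pow_mul, hm1, one_pow, Module.End.one_apply]

theorem pow_mem_of_inv {h : Module.End (ZMod p) V} {W : Submodule (ZMod p) V}
    (hW : ∀ x ∈ W, h x ∈ W) (k : ℕ) {x : V} (hx : x ∈ W) : (h ^ k) x ∈ W := by
  induction k with
  | zero => simpa using hx
  | succ k ih => rw [pow_succ', Module.End.mul_apply]; exact hW _ ih

theorem OrbRel.mem_iff {h : Module.End (ZMod p) V} {m : ℕ} (hm : 0 < m) (hm1 : h ^ m = 1)
    {W : Submodule (ZMod p) V}
    (hW : ∀ x ∈ W, h x ∈ W) {x y : V} (hxy : OrbRel h x y) : x ∈ W ↔ y ∈ W := by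
  constructor
  · intro hx
    obtain ⟨k, rfl⟩ := hxy
    exact pow_mem_of_inv hW k hx
  · intro hy
    obtain ⟨k, rfl⟩ := hxy.symm' hm hm1
    exact pow_mem_of_inv hW k hy

theorem ker_inv {h N : Module.End (ZMod p) V} (hc : Commute h N) :
    ∀ x ∈ LinearMap.ker N, h x ∈ LinearMap.ker N := by
  intro x hx
  rw [LinearMap.mem_ker] at hx ⊢
  rw [← Module.End.mul_apply, ← hc.eq, Module.End.mul_apply, hx, map_zero]

theorem map_inv' {h N : Module.End (ZMod p) V} (hc : Commute h N) {W : Submodule (ZMod p) V}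
    (hW : ∀ x ∈ W, h x ∈ W) :
    ∀ x ∈ W.map N, h x ∈ W.map N := by
  rintro _ ⟨w, hw, rfl⟩
  refine ⟨h w, hW w hw, ?_⟩
  rw [← Module.End.mul_apply, ← hc.eq, Module.End.mul_apply]

theorem two_smul_ne {p : ℕ} [Fact p.Prime] (hp5 : 5 ≤ p) {V : Type*} [AddCommGroup V]
    [Module (ZMod p) V] (W : Submodule (ZMod p) V) {x : V} (hx : x + x ∈ W) : x ∈ W := by
  have h2 : (2 : ZMod p) ≠ 0 := by
    intro h
    have := (ZMod.natCast_eq_zero_iff 2 p).1 (by exact_mod_cast h)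
    have := Nat.le_of_dvd (by norm_num) this
    omega
  have : (2 : ZMod p) • x ∈ W := by rwa [two_smul]
  exact (Submodule.smul_mem_iff W h2).1 this

/-- Simple case. -/
theorem simple_case [Fact p.Prime] [Module.Finite (ZMod p) V] [Nontrivial V]
    (h : Module.End (ZMod p) V) (m : ℕ) (hm : 0 < m) (hm1 : h ^ m = 1)
    (hpig : ∀ a b c d : V, a ≠ 0 → b ≠ 0 → c ≠ 0 → d ≠ 0 →
      OrbRel h a b ∨ OrbRel h a c ∨ OrbRel h a d ∨ OrbRel h b c ∨ OrbRel h b d ∨ OrbRel h c d)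
    (hs : ∀ W : Submodule (ZMod p) V, (∀ x ∈ W, h x ∈ W) → W = ⊥ ∨ W = ⊤) :
    (orderOf h ∣ p ^ (Module.finrank (ZMod p) V) - 1 ∧
      p ^ (Module.finrank (ZMod p) V) - 1 ≤ 3 * orderOf h) := by
  classical
  have : Finite V := Module.finite_of_finite (ZMod p)
  have := Fintype.ofFinite V
  have hfree : ∀ (k : ℕ) (x : V), x ≠ 0 → (h ^ k) x = x → h ^ k = 1 := by
    intro k x hx hk
    have hc : Commute h (h ^ k - 1) := ((Commute.refl h).pow_right k).sub_right (Commute.one_right h)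
    rcases hs _ (ker_inv hc) with h0 | h0
    · exfalso
      apply hx
      have : x ∈ LinearMap.ker (h ^ k - 1) := by simp [hk]
      rw [h0] at this
      simpa using this
    · rw [LinearMap.ker_eq_top] at h0
      exact sub_eq_zero.1 h0
  -- the permutation of nonzero vectors
  have hinv : h * h ^ (m - 1) = 1 := by rw [← pow_succ', Nat.sub_add_cancel hm, hm1]
  have hinv' : h ^ (m - 1) * h = 1 := by rw [← pow_succ, Nat.sub_add_cancel hm, hm1]
  have hi1 : ∀ x, h ((h ^ (m-1)) x) = x := fun x => by rw [← Module.End.mul_apply, hinv]; rfl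
  have hi2 : ∀ x, (h ^ (m-1)) (h x) = x := fun x => by rw [← Module.End.mul_apply, hinv']; rfl
  let σ : Equiv.Perm {x : V // x ≠ 0} :=
    { toFun := fun x => ⟨h x.1, fun h0 => x.2 (by rw [← hi2 x.1, h0, map_zero])⟩
      invFun := fun x => ⟨(h ^ (m-1)) x.1, fun h0 => x.2 (by rw [← hi1 x.1, h0, map_zero])⟩
      left_inv := fun x => by simp [hi2]
      right_inv := fun x => by simp [hi1] }
  have hσ : ∀ (k : ℕ) (x : {x : V // x ≠ 0}), (((σ ^ k) x : {x : V // x ≠ 0}) : V) = (h ^ k) x.1 := by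
    intro k x
    induction k with
    | zero => simp
    | succ k ih =>
      rw [pow_succ', pow_succ', Equiv.Perm.mul_apply, Module.End.mul_apply, ← ih]; rfl
  obtain ⟨e, he⟩ := exists_ne (0 : V)
  have hord : orderOf σ = orderOf h := by
    apply orderOf_eq_orderOf_iff.2
    intro k
    constructor
    · intro hk
      apply hfree k e he
      rw [← hσ k ⟨e, he⟩, hk]; rfl
    · intro hk
      ext x
      rw [hσ, hk]; rfl
  have hstab : ∀ x : {x : V // x ≠ 0}, MulAction.stabilizer (Subgroup.zpowers σ) x = ⊥ := by
    intro x
    rw [eq_bot_iff]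
    rintro ⟨τ, hτ⟩ hx
    rw [Subgroup.mem_bot]
    obtain ⟨k, rfl⟩ := (mem_powers_iff_mem_zpowers.2 hτ : τ ∈ Submonoid.powers σ)
    have hx' : (σ ^ k) x = x := hx
    have : (h ^ k) x.1 = x.1 := by rw [← hσ, hx']
    have := hfree k _ x.2 this
    apply Subtype.ext
    ext z
    change (((σ ^ k) z : {x : V // x ≠ 0}) : V) = z
    rw [hσ, this]; rfl
  have hcard := MulAction.card_eq_sum_card_group_div_card_stabilizer (Subgroup.zpowers σ) {x : V // x ≠ 0}
  have hVc : Fintype.card {x : V // x ≠ 0} = p ^ (Module.finrank (ZMod p) V) - 1 := by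
    have h1 : Fintype.card V = p ^ (Module.finrank (ZMod p) V) := by
      rw [Module.card_eq_pow_finrank (K := ZMod p), ZMod.card]
    rw [Fintype.card_subtype_compl, h1]; simp
  have hz : Fintype.card (Subgroup.zpowers σ) = orderOf h := by
    rw [← hord, Fintype.card_zpowers]
  rw [hVc] at hcard
  have hsum : p ^ (Module.finrank (ZMod p) V) - 1 =
      Fintype.card (Quotient (MulAction.orbitRel (Subgroup.zpowers σ) {x : V // x ≠ 0})) * orderOf h := by
    rw [hcard, Finset.sum_congr rfl (g := fun _ => orderOf h)]
    · simp
    · intro ω _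
      have : Fintype.card (MulAction.stabilizer (Subgroup.zpowers σ) ω.out) = 1 := by
        rw [← Nat.card_eq_fintype_card, hstab]; simp
      rw [this, hz, Nat.div_one]
  refine ⟨⟨_, by rw [hsum, mul_comm]⟩, ?_⟩
  rw [hsum]
  apply Nat.mul_le_mul_right
  by_contra hlt
  push Not at hlt
  obtain ⟨f⟩ : Nonempty (Fin 4 ↪ Quotient (MulAction.orbitRel (Subgroup.zpowers σ) {x : V // x ≠ 0})) :=
    Function.Embedding.nonempty_of_card_le (by rw [Fintype.card_fin]; exact hlt)
  have key : ∀ i j : Fin 4, OrbRel h (f i).out.1 (f j).out.1 → i = j := by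
    rintro i j ⟨k, hk⟩
    apply f.injective
    rw [← Quotient.out_eq (f i), ← Quotient.out_eq (f j)]
    symm
    apply Quotient.sound
    refine ⟨⟨σ ^ k, Subgroup.npow_mem_zpowers σ k⟩, ?_⟩
    apply Subtype.ext
    rw [← hk, ← hσ]; rfl
  rcases hpig _ _ _ _ (f 0).out.2 (f 1).out.2 (f 2).out.2 (f 3).out.2 with H | H | H | H | H | H <;>
    · have := key _ _ H
      simp at this

/-- Non-simple case. -/
theorem nonsimple_case [Fact p.Prime] (hp5 : 5 ≤ p) [Module.Finite (ZMod p) V]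
    (h : Module.End (ZMod p) V) (m : ℕ) (hm : 0 < m) (hm1 : h ^ m = 1)
    (hpig : ∀ a b c d : V, a ≠ 0 → b ≠ 0 → c ≠ 0 → d ≠ 0 →
      OrbRel h a b ∨ OrbRel h a c ∨ OrbRel h a d ∨ OrbRel h b c ∨ OrbRel h b d ∨ OrbRel h c d)
    (W : Submodule (ZMod p) V) (hW : ∀ x ∈ W, h x ∈ W) (hWb : W ≠ ⊥) (hWt : W ≠ ⊤)
    (hmax : ∀ W' : Submodule (ZMod p) V, (∀ x ∈ W', h x ∈ W') → W ≤ W' → W' = W ∨ W' = ⊤) :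
    Module.finrank (ZMod p) V = 2 ∧ ∃ c : ZMod p, c ≠ 0 ∧ orderOf c = p - 1 ∧
      (h - c • (1 : Module.End (ZMod p) V)) ^ 2 = 0 ∧ h ≠ c • (1 : Module.End (ZMod p) V) := by
  classical
  have hfinV : Finite V := Module.finite_of_finite (ZMod p)
  have hprime : p.Prime := Fact.out
  obtain ⟨e₀, he₀W, he₀⟩ := (Submodule.ne_bot_iff W).1 hWb
  obtain ⟨x₀, hx₀⟩ : ∃ x, x ∉ W := by
    by_contra hcon
    push Not at hcon
    exact hWt (eq_top_iff.2 fun x _ => hcon x)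
  -- three elements outside W
  have hthree : ∀ a b c : V, a ∉ W → b ∉ W → c ∉ W →
      OrbRel h a b ∨ OrbRel h a c ∨ OrbRel h b c := by
    intro a b c ha hb hc
    have hn : ∀ z, z ∉ W → z ≠ 0 := fun z hz h0 => hz (h0 ▸ W.zero_mem)
    have hno : ∀ z, z ∉ W → ¬ OrbRel h e₀ z := fun z hz hr => hz ((hr.mem_iff hm hm1 hW).1 he₀W)
    rcases hpig e₀ a b c he₀ (hn a ha) (hn b hb) (hn c hc) with H | H | H | H | H | H
    · exact absurd H (hno _ ha)
    · exact absurd H (hno _ hb)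
    · exact absurd H (hno _ hc)
    · exact Or.inl H
    · exact Or.inr (Or.inl H)
    · exact Or.inr (Or.inr H)
  -- the order on the quotient
  have hcm : ∀ k : ℕ, Commute h (h ^ k - 1) := fun k =>
    ((Commute.refl h).pow_right k).sub_right (Commute.one_right h)
  have hall : ∀ (k : ℕ) (x : V), x ∉ W → (h ^ k) x - x ∈ W → ∀ z, (h ^ k) z - z ∈ W := by
    intro k x hx hk
    have hinv : ∀ z ∈ W.comap (h ^ k - 1), h z ∈ W.comap (h ^ k - 1) := by
      intro z hz
      rw [Submodule.mem_comap] at hz ⊢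
      rw [← Module.End.mul_apply, ← (hcm k).eq, Module.End.mul_apply]
      exact hW _ hz
    have hle : W ≤ W.comap (h ^ k - 1) := by
      intro z hz
      rw [Submodule.mem_comap]
      exact W.sub_mem (pow_mem_of_inv hW k hz) hz
    rcases hmax _ hinv hle with h1 | h1
    · exfalso
      apply hx
      rw [← h1]
      exact hk
    · intro z
      have : z ∈ W.comap (h ^ k - 1) := h1 ▸ Submodule.mem_top
      exact this
  let hq : Module.End (ZMod p) (V ⧸ W) := W.mapQ W h hW
  have hqk : ∀ (k : ℕ) (z : V), (hq ^ k) (W.mkQ z) = W.mkQ ((h ^ k) z) := by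
    intro k z
    induction k with
    | zero => simp
    | succ k ih =>
      rw [pow_succ', pow_succ', Module.End.mul_apply, Module.End.mul_apply, ih]; rfl
  have hqone : ∀ k : ℕ, (∀ z, (h ^ k) z - z ∈ W) ↔ hq ^ k = 1 := by
    intro k
    constructor
    · intro H
      ext z
      change (hq ^ k) (W.mkQ z) = W.mkQ z
      rw [hqk]
      exact (Submodule.Quotient.eq W).2 (H z)
    · intro H z
      apply (Submodule.Quotient.eq W).1
      change W.mkQ _ = W.mkQ z
      rw [← hqk, H]; rfl
  obtain ⟨n, hn⟩ : ∃ n, n = orderOf hq := ⟨_, rfl⟩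
  have hP1 : ∀ z, (h ^ n) z - z ∈ W := (hqone n).2 (by rw [hn]; exact pow_orderOf_eq_one hq)
  have hP2 : ∀ (k : ℕ) (x : V), x ∉ W → (h ^ k) x - x ∈ W → n ∣ k := by
    intro k x hx hk
    rw [hn]
    exact orderOf_dvd_of_pow_eq_one ((hqone k).1 (hall k x hx hk))
  obtain ⟨N, hN⟩ : ∃ N, N = h ^ n - 1 := ⟨_, rfl⟩
  have hNa : ∀ z, (h ^ n) z = z + N z := by intro z; rw [hN]; simp
  have hNW : ∀ z, N z ∈ W := by intro z; rw [hN]; exact hP1 z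
  have hcN : Commute h N := hN ▸ hcm n
  have hNk : ∀ (k : ℕ) z, N ((h ^ k) z) = (h ^ k) (N z) := by
    intro k z
    rw [← Module.End.mul_apply, ← (hcN.pow_left k).eq, Module.End.mul_apply]
  have hfixs : ∀ (s : ℕ) z, N z = 0 → (h ^ (n * s)) z = z := by
    intro s z hz
    induction s with
    | zero => simp
    | succ s ih => rw [mul_add, mul_one, pow_add, Module.End.mul_apply, hNa, hz, add_zero, ih]
  have hfixrel : ∀ a b, OrbRel h a b → (N a = 0 ↔ N b = 0) := by
    intro a b H
    have := H.mem_iff hm hm1 (ker_inv hcN)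
    simpa using this
  -- case (i)
  have hii : ∀ x, x ∉ W → N x ≠ 0 := by
    intro x hx hNx
    have hxe : ∀ w ∈ W, x + w ∉ W := fun w hw hc => hx ((W.add_mem_iff_left hw).1 hc)
    by_cases hib : ∃ e ∈ W, N e ≠ 0
    · obtain ⟨e, heW, hNe⟩ := hib
      have hnx : -x ∉ W := fun hc => hx (by simpa using hc)
      have hnfe : N (x + e) ≠ 0 := by rw [map_add, hNx, zero_add]; exact hNe
      have hnfe' : N (-(x + e)) ≠ 0 := by rw [map_neg]; exact neg_ne_zero.2 hnfe
      have hnfe2 : N (x + -e) ≠ 0 := by rw [map_add, hNx, zero_add, map_neg]; simpa using hNe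
      have hnxf : N (-x) = 0 := by rw [map_neg, hNx, neg_zero]
      have hA : OrbRel h x (-x) := by
        rcases hthree x (-x) (x + e) hx hnx (hxe e heW) with H | H | H
        · exact H
        · exact absurd ((hfixrel _ _ H).1 hNx) hnfe
        · exact absurd ((hfixrel _ _ H).1 hnxf) hnfe
      have hB : OrbRel h (x + e) (-(x + e)) := by
        rcases hthree x (x + e) (-(x + e)) hx (hxe e heW)
          (fun hc => hxe e heW (by simpa only [neg_neg] using W.neg_mem hc)) with H | H | H
        · exact absurd ((hfixrel _ _ H).1 hNx) hnfe
        · exact absurd ((hfixrel _ _ H).1 hNx) hnfe'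
        · exact H
      have hC : OrbRel h (x + e) (x + -e) := by
        rcases hthree x (x + e) (x + -e) hx (hxe e heW) (hxe _ (W.neg_mem heW)) with H | H | H
        · exact absurd ((hfixrel _ _ H).1 hNx) hnfe
        · exact absurd ((hfixrel _ _ H).1 hNx) hnfe2
        · exact H
      obtain ⟨j, hj⟩ := hA
      obtain ⟨i, hi⟩ := hB
      obtain ⟨r, hr⟩ := hC
      have hrn : n ∣ r := by
        apply hP2 r _ (hxe e heW)
        rw [hr]
        have : x + -e - (x + e) = -(e + e) := by abel
        rw [this]
        exact W.neg_mem (W.add_mem heW heW)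
      obtain ⟨s, rfl⟩ := hrn
      have hse : (h ^ (n * s)) e = -e := by
        rw [map_add, hfixs s x hNx] at hr
        exact add_left_cancel hr
      have hijn : n ∣ i + j := by
        apply hP2 _ x hx
        rw [pow_add, Module.End.mul_apply, hj, map_neg]
        have h1 : (h ^ i) x = -(x + e) - (h ^ i) e := by rw [← hi, map_add]; abel
        rw [h1]
        have : -(-(x + e) - (h ^ i) e) - x = e + (h ^ i) e := by abel
        rw [this]
        exact W.add_mem heW (pow_mem_of_inv hW i heW)
      obtain ⟨q, hqq⟩ := hijn
      have hix : (h ^ i) x = -x := by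
        have h1 := hfixs q x hNx
        rw [← hqq, pow_add, Module.End.mul_apply, hj, map_neg] at h1
        rw [← h1, neg_neg]
        rw [h1]
      have hie : (h ^ i) e = -e := by
        rw [map_add, hix, neg_add] at hi
        exact add_left_cancel hi
      have h2i : n ∣ i + i := by
        apply hP2 _ x hx
        rw [pow_add, Module.End.mul_apply, hix, map_neg, hix]
        simp
      obtain ⟨t, ht⟩ := h2i
      have hte : (h ^ (n * t)) e = e := by
        rw [← ht, pow_add, Module.End.mul_apply, hie, map_neg, hie, neg_neg]
      have htodd : Odd t := by
        by_contra hcon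
        rw [Nat.not_odd_iff_even] at hcon
        obtain ⟨t', rfl⟩ := hcon
        have hi' : i = n * t' := by rw [mul_add] at ht; omega
        have h1 := hfixs t' x hNx
        rw [← hi', hix] at h1
        apply hx
        apply two_smul_ne hp5
        have : x + x = 0 := by
          nth_rewrite 1 [← h1]; simp
        rw [this]; exact W.zero_mem
      have g1 : ∀ l, (h ^ (n * t * l)) e = e := by
        intro l
        induction l with
        | zero => simp
        | succ l ih => rw [mul_add, mul_one, pow_add, Module.End.mul_apply, hte, ih]
      have g2 : ∀ l, (h ^ (n * s * l)) e = (-1 : ℤ) ^ l • e := by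
        intro l
        induction l with
        | zero => simp
        | succ l ih =>
          rw [mul_add, mul_one, pow_add, Module.End.mul_apply, hse, map_neg, ih, pow_succ]
          simp
      have g3 := g2 t
      rw [show n * s * t = n * t * s by ring, g1, htodd.neg_one_pow] at g3
      have : e + e = 0 := by
        nth_rewrite 1 [g3]; simp
      have he0 : e ∈ (⊥ : Submodule (ZMod p) V) :=
        two_smul_ne hp5 ⊥ (by rw [this]; exact Submodule.zero_mem _)
      rw [Submodule.mem_bot] at he0
      rw [he0, map_zero] at hNe
      exact hNe rfl
    · push Not at hib
      have hkey : ∀ a ∈ W, ∀ b ∈ W, OrbRel h (x + a) (x + b) → a = b := by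
        rintro a ha b hb ⟨k, hk⟩
        have hnk : n ∣ k := by
          apply hP2 k _ (hxe a ha)
          rw [hk]
          have : x + b - (x + a) = b - a := by abel
          rw [this]
          exact W.sub_mem hb ha
        obtain ⟨s, rfl⟩ := hnk
        rw [hfixs s _ (by rw [map_add, hNx, hib a ha, add_zero])] at hk
        exact add_left_cancel hk
      have hne2 : e₀ + e₀ ≠ 0 := by
        intro h0
        have := two_smul_ne hp5 (⊥ : Submodule (ZMod p) V) (x := e₀) (by simpa using h0)
        exact he₀ (by simpa using this)
      rcases hthree (x + 0) (x + e₀) (x + (e₀ + e₀)) (hxe _ W.zero_mem) (hxe _ he₀W)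
        (hxe _ (W.add_mem he₀W he₀W)) with H | H | H
      · exact he₀ (hkey _ W.zero_mem _ he₀W H).symm
      · exact hne2 (hkey _ W.zero_mem _ (W.add_mem he₀W he₀W) H).symm
      · have := hkey _ he₀W _ (W.add_mem he₀W he₀W) H
        exact he₀ (by simpa using this)
  -- case (ii)
  have hkerN : ∀ z, N z = 0 → z ∈ W := fun z hz => by
    by_contra hcon
    exact hii z hcon hz
  have hNx₀ : N x₀ ∉ W.map N := by
    rintro ⟨w, hw, hwx⟩
    have h1 : N (x₀ - w) = 0 := by rw [map_sub, hwx, sub_self]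
    exact hx₀ ((W.sub_mem_iff_left hw).1 (hkerN _ h1))
  have hWNinv := map_inv' hcN hW
  -- N kills N W
  have hNNW : ∀ w ∈ W, N (N w) = 0 := by
    by_contra hcon
    push Not at hcon
    obtain ⟨w, hwW, hw⟩ := hcon
    obtain ⟨z, hz⟩ : ∃ z, z = N w := ⟨_, rfl⟩
    rw [← hz] at hw
    have hzW : z ∈ W := hz ▸ hNW w
    have hzN : z ∈ W.map N := ⟨w, hwW, hz.symm⟩
    have hz0 : z ≠ 0 := fun h0 => hw (by rw [h0, map_zero])
    have hNx0ne : N x₀ ≠ 0 := hii x₀ hx₀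
    have hx0ne : x₀ ≠ 0 := fun h0 => hx₀ (h0 ▸ W.zero_mem)
    have hmidle : ∀ a ∈ W.map N, a ∈ W := by rintro _ ⟨w, _, rfl⟩; exact hNW w
    -- two elements in W.map N
    have hlow : ∀ a ∈ W.map N, a ≠ 0 → OrbRel h z a := by
      intro a ha ha0
      rcases hpig z a (N x₀) x₀ hz0 ha0 hNx0ne hx0ne with H | H | H | H | H | H
      · exact H
      · exact absurd ((H.mem_iff hm hm1 hWNinv).1 hzN) hNx₀
      · exact absurd ((H.mem_iff hm hm1 hW).1 hzW) hx₀
      · exact absurd ((H.mem_iff hm hm1 hWNinv).1 ha) hNx₀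
      · exact absurd ((H.mem_iff hm hm1 hW).1 (hmidle a ha)) hx₀
      · exact absurd ((H.mem_iff hm hm1 hW).1 (hNW _)) hx₀
    have hmid : ∀ a b, a ∈ W → b ∈ W → a ∉ W.map N → b ∉ W.map N → OrbRel h a b := by
      intro a b ha hb ha' hb'
      have hne : ∀ a, a ∉ W.map N → a ≠ 0 := fun a ha h0 => ha (h0 ▸ Submodule.zero_mem _)
      rcases hpig z a b x₀ hz0 (hne _ ha') (hne _ hb') hx0ne with H | H | H | H | H | H
      · exact absurd ((H.mem_iff hm hm1 hWNinv).1 hzN) ha'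
      · exact absurd ((H.mem_iff hm hm1 hWNinv).1 hzN) hb'
      · exact absurd ((H.mem_iff hm hm1 hW).1 hzW) hx₀
      · exact H
      · exact absurd ((H.mem_iff hm hm1 hW).1 ha) hx₀
      · exact absurd ((H.mem_iff hm hm1 hW).1 hb) hx₀
    -- a kernel element
    obtain ⟨k, hkW, hk0, hNk0⟩ : ∃ k ∈ W, k ≠ 0 ∧ N k = 0 := by
      by_contra hcon
      push Not at hcon
      have hinj : Function.Injective (N.restrict (fun w (_ : w ∈ W) => hNW w)) := by
        rw [injective_iff_map_eq_zero]
        rintro ⟨a, ha⟩ h0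
        have h0' : N a = 0 := congrArg Subtype.val h0
        by_contra hne
        exact hcon a ha (fun h1 => hne (Subtype.ext h1)) h0'
      have hsur := Finite.injective_iff_surjective.1 hinj
      obtain ⟨⟨a, ha⟩, hax⟩ := hsur ⟨N x₀, hNW x₀⟩
      exact hNx₀ ⟨a, ha, congrArg Subtype.val hax⟩
    by_cases hkN : k ∈ W.map N
    · exact hw ((hfixrel _ _ (hlow k hkN hk0)).2 hNk0)
    · have h1 := hmid k (k + z) hkW (W.add_mem hkW hzW) hkN
        (fun hc => hkN ((Submodule.add_mem_iff_left _ hzN).1 hc))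
      have h2 := (hfixrel _ _ h1).1 hNk0
      rw [map_add, hNk0, zero_add] at h2
      exact hw h2
  have hN3 : N ^ 3 = 0 := by
    ext z
    rw [pow_succ, pow_two]
    simp only [Module.End.mul_apply, LinearMap.zero_apply]
    exact hNNW _ (hNW z)
  have : Nontrivial V := ⟨⟨e₀, 0, he₀⟩⟩
  have hchar : CharP (Module.End (ZMod p) V) p :=
    charP_of_injective_algebraMap (algebraMap (ZMod p) (Module.End (ZMod p) V)).injective p
  have hyp : (h ^ n) ^ p = 1 := by
    have h1 : N ^ p = 0 := pow_eq_zero_of_le (by omega) hN3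
    have h2 : (h ^ n - 1) ^ p = (h ^ n) ^ p - 1 ^ p :=
      sub_pow_char_of_commute _ (Commute.one_right _)
    rw [← hN, h1, one_pow] at h2
    exact (sub_eq_zero.1 h2.symm)
  -- counting
  have hcount : Nat.card W ≤ 2 * p := by
    have hxe : ∀ w ∈ W, x₀ + w ∉ W := fun w hw hc => hx₀ ((W.add_mem_iff_left hw).1 hc)
    have hrel : ∀ a ∈ W, ∀ b ∈ W, OrbRel h (x₀ + a) (x₀ + b) →
        ∃ s < p, ((h ^ n) ^ s) (x₀ + a) = x₀ + b := by
      rintro a ha b hb ⟨k, hk⟩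
      have hnk : n ∣ k := by
        apply hP2 k _ (hxe a ha)
        rw [hk]
        have : x₀ + b - (x₀ + a) = b - a := by abel
        rw [this]
        exact W.sub_mem hb ha
      obtain ⟨s, rfl⟩ := hnk
      refine ⟨s % p, Nat.mod_lt _ hprime.pos, ?_⟩
      rw [← hk, pow_mul]
      congr 1
      conv_rhs => rw [← Nat.div_add_mod s p, pow_add, pow_mul, hyp, one_pow, one_mul]
    let S : V → Set V := fun a => (fun s => ((h ^ n) ^ s) (x₀ + a) - x₀) '' (Finset.range p : Set ℕ)
    have hScard : ∀ a, (S a).ncard ≤ p := by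
      intro a
      refine (Set.ncard_image_le (Finset.finite_toSet _)).trans ?_
      rw [Set.ncard_coe_finset]; simp
    have hSmem : ∀ a ∈ W, ∀ b ∈ W, OrbRel h (x₀ + a) (x₀ + b) → b ∈ S a := by
      intro a ha b hb hr
      obtain ⟨s, hs, hsb⟩ := hrel a ha b hb hr
      exact ⟨s, by simpa using hs, by simp [hsb]⟩
    have hcov : ∃ b, (W : Set V) ⊆ S 0 ∪ S b := by
      by_cases hall' : ∀ b ∈ W, OrbRel h (x₀ + 0) (x₀ + b)
      · exact ⟨0, fun b hb => Or.inl (hSmem 0 W.zero_mem b hb (hall' b hb))⟩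
      · push Not at hall'
        obtain ⟨b, hb, hnb⟩ := hall'
        refine ⟨b, fun c hc => ?_⟩
        rcases hthree (x₀ + 0) (x₀ + b) (x₀ + c) (hxe _ W.zero_mem) (hxe _ hb) (hxe _ hc) with
          H | H | H
        · exact absurd H hnb
        · exact Or.inl (hSmem 0 W.zero_mem c hc H)
        · exact Or.inr (hSmem b hb c hc H)
    obtain ⟨b, hb⟩ := hcov
    calc Nat.card W = (W : Set V).ncard := rfl
      _ ≤ (S 0 ∪ S b).ncard := Set.ncard_le_ncard hb (Set.toFinite _)
      _ ≤ (S 0).ncard + (S b).ncard := Set.ncard_union_le _ _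
      _ ≤ 2 * p := by have := hScard 0; have := hScard b; omega
  have hfW : Module.finrank (ZMod p) W = 1 := by
    have h1 : Nat.card W = p ^ Module.finrank (ZMod p) W := by
      rw [Module.natCard_eq_pow_finrank (K := ZMod p), Nat.card_zmod]
    rw [h1] at hcount
    have h2 : Module.finrank (ZMod p) W < 2 := by
      by_contra hcon
      push Not at hcon
      have := Nat.pow_le_pow_right hprime.pos hcon
      nlinarith
    have h3 : Module.finrank (ZMod p) W ≠ 0 := by
      intro h0
      exact hWb (Submodule.finrank_eq_zero.1 h0)
    omega
  have hspan : ∀ w ∈ W, ∃ a : ZMod p, a • e₀ = w := by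
    intro w hw
    have hne : (⟨e₀, he₀W⟩ : W) ≠ 0 := fun h0 => he₀ (congrArg Subtype.val h0)
    obtain ⟨a, ha⟩ := exists_smul_eq_of_finrank_eq_one hfW hne ⟨w, hw⟩
    exact ⟨a, congrArg Subtype.val ha⟩
  obtain ⟨c, hc⟩ := hspan _ (hW e₀ he₀W)
  have hcW : ∀ w ∈ W, h w = c • w := by
    intro w hw
    obtain ⟨a, rfl⟩ := hspan w hw
    rw [map_smul, ← hc, smul_comm]
  have hNe₀ : N e₀ = 0 := by
    obtain ⟨a, ha⟩ := hspan _ (hNW e₀)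
    have h1 := hNNW e₀ he₀W
    rw [← ha, map_smul, ← ha, smul_smul] at h1
    rcases smul_eq_zero.1 h1 with h2 | h2
    · rw [← ha, mul_self_eq_zero.1 h2, zero_smul]
    · exact absurd h2 he₀
  have hker : LinearMap.ker N = W := by
    apply le_antisymm
    · intro z hz
      exact hkerN z hz
    · intro w hw
      obtain ⟨a, rfl⟩ := hspan w hw
      rw [LinearMap.mem_ker, map_smul, hNe₀, smul_zero]
  have hd : Module.finrank (ZMod p) V = 2 := by
    have h1 := LinearMap.finrank_range_add_finrank_ker N
    rw [hker, hfW] at h1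
    have h2 : Module.finrank (ZMod p) (LinearMap.range N) ≤ Module.finrank (ZMod p) W :=
      Submodule.finrank_mono (by rintro _ ⟨z, rfl⟩; exact hNW z)
    have h3 : Module.finrank (ZMod p) W < Module.finrank (ZMod p) V :=
      Submodule.finrank_lt hWt
    omega
  have hhc : ∀ z, h z - c • z ∈ W := by
    intro z
    apply hkerN
    have h1 := hNk 1 z
    rw [pow_one] at h1
    rw [map_sub, map_smul, h1, hcW _ (hNW z), sub_self]
  have hinjh : ∀ z, h z = 0 → z = 0 := by
    intro z hz
    have : (h ^ (m - 1 + 1)) z = z := by rw [Nat.sub_add_cancel hm, hm1]; rfl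
    rw [← this, pow_succ, Module.End.mul_apply, hz, map_zero]
  have hc0 : c ≠ 0 := by
    rintro rfl
    exact he₀ (hinjh _ (by rw [← hc, zero_smul]))
  refine ⟨hd, c, hc0, ?_, ?_, ?_⟩
  · -- order of c
    have hgen : ∀ l : ZMod p, l ≠ 0 → ∃ k : ℕ, c ^ k = l := by
      intro l hl
      have hk1 : ∀ k : ℕ, (h ^ k) e₀ = c ^ k • e₀ := by
        intro k
        induction k with
        | zero => simp
        | succ k ih => rw [pow_succ', Module.End.mul_apply, ih, map_smul, ← hc, smul_smul, ← pow_succ]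
      have hk2 : ∀ k : ℕ, (h ^ k) x₀ - c ^ k • x₀ ∈ W := by
        intro k
        induction k with
        | zero => simp
        | succ k ih =>
          rw [pow_succ', Module.End.mul_apply]
          have h1 := W.add_mem (hW _ ih) (W.smul_mem (c ^ k) (hhc x₀))
          have : h ((h ^ k) x₀ - c ^ k • x₀) + c ^ k • (h x₀ - c • x₀) =
            h ((h ^ k) x₀) - c ^ (k+1) • x₀ := by
            rw [map_sub, map_smul, smul_sub, smul_smul, ← pow_succ]; abel
          rwa [this] at h1
      have hlx : l • x₀ ∉ W := fun hc' => hx₀ ((Submodule.smul_mem_iff W hl).1 hc')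
      have hle : l • e₀ ∈ W := W.smul_mem l he₀W
      rcases hpig e₀ (l • e₀) x₀ (l • x₀) he₀ (smul_ne_zero hl he₀)
        (fun h0 => hx₀ (h0 ▸ W.zero_mem)) (fun h0 => hlx (h0 ▸ W.zero_mem)) with
        H | H | H | H | H | H
      · obtain ⟨k, hk⟩ := H
        rw [hk1] at hk
        exact ⟨k, smul_left_injective _ he₀ hk⟩
      · exact absurd ((H.mem_iff hm hm1 hW).1 he₀W) hx₀
      · exact absurd ((H.mem_iff hm hm1 hW).1 he₀W) hlx
      · exact absurd ((H.mem_iff hm hm1 hW).1 hle) hx₀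
      · exact absurd ((H.mem_iff hm hm1 hW).1 hle) hlx
      · obtain ⟨k, hk⟩ := H
        refine ⟨k, ?_⟩
        have h1 := hk2 k
        rw [hk, ← sub_smul] at h1
        by_contra hne
        exact hx₀ ((Submodule.smul_mem_iff W (sub_ne_zero.2 (Ne.symm hne))).1 h1)
    have hgu : ∀ l : (ZMod p)ˣ, l ∈ Subgroup.zpowers (Units.mk0 c hc0) := by
      intro l
      obtain ⟨k, hk⟩ := hgen l l.ne_zero
      rw [show l = (Units.mk0 c hc0) ^ k by ext; simp [hk]]
      exact Subgroup.npow_mem_zpowers _ _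
    have h1 := orderOf_eq_card_of_forall_mem_zpowers hgu
    rw [← orderOf_units, Units.val_mk0, Nat.card_eq_fintype_card, ZMod.card_units] at h1
    exact h1
  · ext z
    rw [pow_two, Module.End.mul_apply]
    simp only [LinearMap.sub_apply, LinearMap.smul_apply, Module.End.one_apply, LinearMap.zero_apply]
    rw [hcW _ (hhc z), sub_self]
  · intro hh
    have hk1 : ∀ (k : ℕ) z, (h ^ k) z = c ^ k • z := by
      intro k z
      induction k with
      | zero => simp
      | succ k ih =>
        rw [pow_succ', Module.End.mul_apply, ih, hh]
        simp [smul_smul, pow_succ, mul_comm]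
    have h1 := hk1 n e₀
    rw [hNa, hNe₀, add_zero] at h1
    have h2 : c ^ n = 1 := by
      have : (1 : ZMod p) • e₀ = c ^ n • e₀ := by rw [one_smul]; exact h1
      exact (smul_left_injective _ he₀ this).symm
    have h3 := hk1 n x₀
    rw [h2, one_smul, hNa] at h3
    exact hii x₀ hx₀ (by simpa using h3)

theorem linear_case [Fact p.Prime] (hp5 : 5 ≤ p) [Module.Finite (ZMod p) V] [Nontrivial V]
    (h : Module.End (ZMod p) V) (m : ℕ) (hm : 0 < m) (hm1 : h ^ m = 1)
    (hpig : ∀ a b c d : V, a ≠ 0 → b ≠ 0 → c ≠ 0 → d ≠ 0 →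
      OrbRel h a b ∨ OrbRel h a c ∨ OrbRel h a d ∨ OrbRel h b c ∨ OrbRel h b d ∨ OrbRel h c d) :
    (LinearMap.ker (h - 1) = ⊥ ∧
      (∀ W : Submodule (ZMod p) V, (∀ x ∈ W, h x ∈ W) → W = ⊥ ∨ W = ⊤) ∧
      orderOf h ∣ p ^ (Module.finrank (ZMod p) V) - 1 ∧
      p ^ (Module.finrank (ZMod p) V) - 1 ≤ 3 * orderOf h) ∨
    (Module.finrank (ZMod p) V = 2 ∧ ∃ c : ZMod p, c ≠ 0 ∧ orderOf c = p - 1 ∧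
      (h - c • (1 : Module.End (ZMod p) V)) ^ 2 = 0 ∧ h ≠ c • (1 : Module.End (ZMod p) V)) := by
  by_cases hs : ∀ W : Submodule (ZMod p) V, (∀ x ∈ W, h x ∈ W) → W = ⊥ ∨ W = ⊤
  · left
    refine ⟨?_, hs, simple_case h m hm hm1 hpig hs⟩
    rw [Submodule.eq_bot_iff]
    intro e he
    by_contra he0
    have he' : h e = e := by
      rw [LinearMap.mem_ker, LinearMap.sub_apply, sub_eq_zero] at he
      exact he
    have hk : ∀ (a : ZMod p) (k : ℕ), (h ^ k) (a • e) = a • e := by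
      intro a k
      induction k with
      | zero => simp
      | succ k ih => rw [pow_succ, Module.End.mul_apply, map_smul, he', ih]
    have hrel : ∀ i j : ℕ, i < 5 → j < 5 → OrbRel h ((i : ZMod p) • e) ((j : ZMod p) • e) → i = j := by
      rintro i j hi hj ⟨k, hk'⟩
      rw [hk] at hk'
      have h1 := smul_left_injective _ he0 hk'
      have h2 := (ZMod.natCast_eq_natCast_iff' i j p).1 h1
      rwa [Nat.mod_eq_of_lt (by omega), Nat.mod_eq_of_lt (by omega)] at h2
    have hne : ∀ i : ℕ, 0 < i → i < 5 → (i : ZMod p) • e ≠ 0 := by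
      intro i hi hi5 h0
      have := hrel i 0 hi5 (by norm_num) ⟨0, by simp [h0]⟩
      omega
    rcases hpig _ _ _ _ (hne 1 (by norm_num) (by norm_num)) (hne 2 (by norm_num) (by norm_num))
      (hne 3 (by norm_num) (by norm_num)) (hne 4 (by norm_num) (by norm_num)) with
      H | H | H | H | H | H <;>
    · have := hrel _ _ (by norm_num) (by norm_num) H
      omega
  · right
    push Not at hs
    obtain ⟨W₀, hW₀, hb, ht⟩ := hs
    have hfin : Finite V := Module.finite_of_finite (ZMod p)
    obtain ⟨W, hWle, hWmax⟩ := Set.Finite.exists_le_maximal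
      (Set.toFinite {W : Submodule (ZMod p) V | (∀ x ∈ W, h x ∈ W) ∧ W ≠ ⊤}) (a := W₀) ⟨hW₀, ht⟩
    refine nonsimple_case hp5 h m hm hm1 hpig W hWmax.prop.1 ?_ hWmax.prop.2 ?_
    · rintro rfl
      exact hb (le_bot_iff.1 hWle)
    · intro W' hW' hle
      by_cases hT : W' = ⊤
      · exact Or.inr hT
      · exact Or.inl (le_antisymm (hWmax.le_of_ge ⟨hW', hT⟩ hle) hle)

theorem geom_char [Fact p.Prime] (h : Module.End (ZMod p) V) :
    ∑ i ∈ Finset.range p, h ^ i = (h - 1) ^ (p - 1) := by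
  have hp : p.Prime := Fact.out
  have h1 : ∑ i ∈ Finset.range p, (Polynomial.X : Polynomial (ZMod p)) ^ i
      = (Polynomial.X - 1) ^ (p - 1) := by
    have hne : (Polynomial.X - 1 : Polynomial (ZMod p)) ≠ 0 := Polynomial.X_sub_C_ne_zero 1
    apply mul_right_cancel₀ hne
    rw [geom_sum_mul, ← pow_succ, Nat.sub_add_cancel hp.pos, sub_pow_char, one_pow]
  have h2 := congrArg (Polynomial.aeval h) h1
  simpa using h2

theorem pow_char' [Fact p.Prime] (h : Module.End (ZMod p) V) :
    h ^ p - 1 = (h - 1) ^ p := by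
  have hp : p.Prime := Fact.out
  have h1 : (Polynomial.X : Polynomial (ZMod p)) ^ p - 1
      = (Polynomial.X - 1) ^ p := by
    rw [sub_pow_char, one_pow]
  have h2 := congrArg (Polynomial.aeval h) h1
  simpa using h2

end


/-- Classification of affine transformations `g = t_v h` with at most four
cycles over `𝔽_p`, `p ≥ 5`: either (1) `h` is fixed-point-free and a (power of a) Singer
cycle; or (2) `d = 2` and `h = c • u` with `c` a scalar of order `p - 1` and `u ≠ 1`
unipotent; or (3) `d = 1`, `h = 1`, `g` a nontrivial translation; or (4) `h = J₁ ⊕ s`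
with `s` Singer-type on a hyperplane and `orderOf g = p * orderOf h`. -/
theorem affine_four_cycles_classification (p d : ℕ) [Fact p.Prime] (hp5 : 5 ≤ p)
    (hd1 : 1 ≤ d)
    (V : Type*) [AddCommGroup V] [Module (ZMod p) V] [Module.Finite (ZMod p) V]
    (hdim : Module.finrank (ZMod p) V = d)
    (h : V ≃ₗ[ZMod p] V) (v : V)
    (g : Equiv.Perm V) (hg : ∀ x : V, g x = h (x + v))
    (hfour : cyclesOn g (Set.univ : Set V) ≤ 4) :
    -- (1) Singer cycle case
    (LinearMap.ker ((h.toLinearMap : Module.End (ZMod p) V) - 1) = ⊥ ∧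
      (∀ W : Submodule (ZMod p) V, (∀ x ∈ W, h x ∈ W) → W = ⊥ ∨ W = ⊤) ∧
      orderOf h ∣ p ^ d - 1 ∧ p ^ d - 1 ≤ 3 * orderOf h) ∨
    -- (2) `s₁ ⊗ J₂` case
    (d = 2 ∧ ∃ (c : ZMod p), c ≠ 0 ∧ orderOf c = p - 1 ∧ ∃ u : V ≃ₗ[ZMod p] V,
      ((u.toLinearMap : Module.End (ZMod p) V) - 1) ^ d = 0 ∧ u ≠ 1 ∧
      (h.toLinearMap : Module.End (ZMod p) V) = c • (u.toLinearMap : Module.End (ZMod p) V)) ∨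
    -- (3) translation case
    (d = 1 ∧ h = 1 ∧ v ≠ 0) ∨
    -- (4) `J₁ ⊕ s_{d-1}^i` case
    (2 ≤ d ∧ ∃ U W : Submodule (ZMod p) V,
      (∀ x ∈ U, h x ∈ U) ∧ (∀ x ∈ W, h x ∈ W) ∧ IsCompl U W ∧
      Module.finrank (ZMod p) U = 1 ∧ (∀ x ∈ U, h x = x) ∧
      (W ≠ ⊥ ∧ ∀ W' : Submodule (ZMod p) V, W' ≤ W → (∀ x ∈ W', h x ∈ W') →
        W' = ⊥ ∨ W' = W) ∧
      orderOf h ∣ p ^ (d - 1) - 1 ∧ p ^ (d - 1) - 1 ≤ 3 * orderOf h ∧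
      orderOf g = p * orderOf h) := by
  classical
  have hprime : p.Prime := Fact.out
  have hfinV : Finite V := Module.finite_of_finite (ZMod p)
  obtain ⟨T, hT⟩ : ∃ T, T = (h.toLinearMap : Module.End (ZMod p) V) := ⟨_, rfl⟩
  have hTa : ∀ x, h x = T x := fun x => by rw [hT]; rfl
  have hTpow : ∀ k : ℕ, T ^ k = ((h ^ k : V ≃ₗ[ZMod p] V).toLinearMap : Module.End (ZMod p) V) := by
    intro k
    rw [hT]
    exact (map_pow (LinearEquiv.automorphismGroup.toLinearMapMonoidHom (R := ZMod p) (M := V)) h k).symm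
  have hord : orderOf h = orderOf T := by
    apply orderOf_eq_orderOf_iff.2
    intro k
    rw [hTpow]
    constructor
    · intro hk; rw [hk]; rfl
    · intro hk
      ext x
      exact LinearMap.congr_fun hk x
  have hfinE : Finite (V ≃ₗ[ZMod p] V) := Finite.of_injective (fun f => (f : V → V)) DFunLike.coe_injective
  have hm : 0 < orderOf T := by rw [← hord]; exact orderOf_pos h
  have hm1 : T ^ orderOf T = 1 := pow_orderOf_eq_one T
  have hgT : ∀ x, g x = T x + T v := by intro x; rw [hg, hTa, map_add]
  -- pigeonhole
  have hpig5 : ∀ a : Fin 5 → V, ∃ i j : Fin 5, i < j ∧ ∃ k : ℕ, (g ^ k) (a i) = a j := by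
    intro a
    let f : Fin 5 → {O : Set V // ∃ x ∈ (Set.univ : Set V), O = {y | g.SameCycle x y}} :=
      fun i => ⟨{y | g.SameCycle (a i) y}, a i, Set.mem_univ _, rfl⟩
    have hni : ¬ Function.Injective f := by
      intro hinj
      have := Nat.card_le_card_of_injective f hinj
      unfold cyclesOn at hfour
      rw [Nat.card_eq_fintype_card, Fintype.card_fin] at this
      omega
    have hsame : ∀ i j, f i = f j → ∃ k : ℕ, (g ^ k) (a i) = a j := by
      intro i j hij
      have h1 : {y | g.SameCycle (a i) y} = {y | g.SameCycle (a j) y} := congrArg Subtype.val hij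
      have h2 : a j ∈ {y | g.SameCycle (a i) y} := by rw [h1]; exact Equiv.Perm.SameCycle.refl g _
      exact Equiv.Perm.SameCycle.exists_nat_pow_eq h2
    unfold Function.Injective at hni
    push Not at hni
    obtain ⟨i, j, hij, hne⟩ := hni
    rcases lt_or_gt_of_ne hne with hl | hl
    · exact ⟨i, j, hl, hsame i j hij⟩
    · exact ⟨j, i, hl, hsame j i hij.symm⟩
  by_cases hfix : ∃ w, g w = w
  · -- fixed point
    obtain ⟨w, hw⟩ := hfix
    have hpow : ∀ (k : ℕ) x, (g ^ k) (w + x) = w + (T ^ k) x := by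
      intro k x
      induction k with
      | zero => simp
      | succ k ih =>
        rw [pow_succ', pow_succ', Equiv.Perm.mul_apply, Module.End.mul_apply, ih, hgT, map_add]
        have hw' := hgT w
        rw [hw] at hw'
        nth_rewrite 2 [hw']
        abel
    have hnt : Nontrivial V := by
      apply Module.nontrivial_of_finrank_pos (R := ZMod p)
      omega
    have hpig : ∀ a b c d : V, a ≠ 0 → b ≠ 0 → c ≠ 0 → d ≠ 0 →
        OrbRel T a b ∨ OrbRel T a c ∨ OrbRel T a d ∨ OrbRel T b c ∨ OrbRel T b d ∨
          OrbRel T c d := by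
      intro a b c d ha hb hc hd
      obtain ⟨i, j, hij, k, hk⟩ := hpig5 (fun i => w + (![0, a, b, c, d] : Fin 5 → V) i)
      simp only [hpow] at hk
      have hk' := add_left_cancel hk
      have hr : OrbRel T ((![0, a, b, c, d] : Fin 5 → V) i) ((![0, a, b, c, d] : Fin 5 → V) j) :=
        ⟨k, hk'⟩
      have hz : ∀ z, z ≠ 0 → ¬ OrbRel T 0 z := by
        rintro z hz ⟨k, hk⟩
        rw [map_zero] at hk
        exact hz hk.symm
      exact pig_extract (OrbRel T) a b c d (hz a ha) (hz b hb) (hz c hc) (hz d hd) i j hij hr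
    rcases linear_case hp5 T _ hm hm1 hpig with ⟨h1, h2, h3, h4⟩ | ⟨h1, c, hc0, hc, hsq, hne⟩
    · left
      rw [← hT, hord, ← hdim]
      refine ⟨h1, ?_, h3, h4⟩
      intro W hW
      exact h2 W (fun x hx => by rw [← hTa]; exact hW x hx)
    · right; left
      have hd2 : d = 2 := by omega
      refine ⟨hd2, c, hc0, hc, h.trans (LinearEquiv.smulOfNeZero (ZMod p) V c⁻¹ (inv_ne_zero hc0)), ?_, ?_, ?_⟩
      · have hu : ((h.trans (LinearEquiv.smulOfNeZero (ZMod p) V c⁻¹ (inv_ne_zero hc0))).toLinearMap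
            : Module.End (ZMod p) V) - 1 = c⁻¹ • (T - c • (1 : Module.End (ZMod p) V)) := by
          ext x
          simp only [LinearMap.sub_apply, LinearMap.smul_apply, Module.End.one_apply, smul_sub,
            smul_smul, inv_mul_cancel₀ hc0, one_smul, ← hTa]
          rfl
        rw [hu, hd2, smul_pow, hsq, smul_zero]
      · intro hu
        apply hne
        ext x
        have h5 : c⁻¹ • h x = x := LinearEquiv.congr_fun hu x
        rw [LinearMap.smul_apply, Module.End.one_apply, ← hTa]
        nth_rewrite 2 [← h5]
        rw [smul_smul, mul_inv_cancel₀ hc0, one_smul]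
      · ext x
        change h x = c • c⁻¹ • h x
        rw [smul_smul, mul_inv_cancel₀ hc0, one_smul]
  -- no fixed point
  right; right
  push Not at hfix
  obtain ⟨M, hM⟩ : ∃ M, M = T - 1 := ⟨_, rfl⟩
  have hTM : ∀ x, T x = x + M x := by intro x; rw [hM]; simp
  have hTv : T v ∉ LinearMap.range M := by
    rintro ⟨w, hw⟩
    apply hfix (-w)
    rw [hgT, ← hw, hTM, map_neg]; abel
  have hgk : ∀ (k : ℕ) x, (g ^ k) x = (T ^ k) x + (∑ i ∈ Finset.range k, T ^ i) (T v) := by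
    intro k x
    induction k with
    | zero => simp
    | succ k ih =>
      rw [pow_succ', Equiv.Perm.mul_apply, ih, hgT, Finset.sum_range_succ', map_add, pow_succ',
        Module.End.mul_apply]
      simp only [pow_succ', ← Finset.mul_sum]
      simp [add_assoc]
  have hgp : ∀ x, (g ^ p) x - x ∈ LinearMap.range (M ^ 2) := by
    intro x
    rw [hgk, geom_char, ← hM]
    have h1 : (T ^ p) x = x + (M ^ p) x := by
      have := LinearMap.congr_fun (pow_char' T) x
      rw [← hM, LinearMap.sub_apply, Module.End.one_apply] at this
      rw [← this]; abel
    rw [h1]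
    have h2 : x + (M ^ p) x + (M ^ (p - 1)) (T v) - x = (M ^ p) x + (M ^ (p - 1)) (T v) := by abel
    rw [h2]
    apply Submodule.add_mem
    · refine ⟨(M ^ (p - 2)) x, ?_⟩
      rw [← Module.End.mul_apply, ← pow_add]
      congr 2; omega
    · refine ⟨(M ^ (p - 3)) (T v), ?_⟩
      rw [← Module.End.mul_apply, ← pow_add]
      congr 2; omega
  obtain ⟨R, hR⟩ : ∃ R, R = LinearMap.range (M ^ 2) := ⟨_, rfl⟩
  rw [← hR] at hgp
  have hcardq : Nat.card (V ⧸ R) ≤ 4 * p := by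
    let f : {O : Set V // ∃ x ∈ (Set.univ : Set V), O = {y | g.SameCycle x y}} × Fin p → V ⧸ R :=
      fun q => R.mkQ ((g ^ (q.2 : ℕ)) q.1.2.choose)
    have hgq : ∀ (q : ℕ) x, R.mkQ ((g ^ (p * q)) x) = R.mkQ x := by
      intro q x
      induction q with
      | zero => simp
      | succ q ih =>
        rw [mul_add, mul_one, add_comm, pow_add, Equiv.Perm.mul_apply, ← ih]
        exact (Submodule.Quotient.eq R).2 (hgp _)
    have hsur : Function.Surjective f := by
      intro z
      obtain ⟨x, rfl⟩ := R.mkQ_surjective z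
      let O : {O : Set V // ∃ x ∈ (Set.univ : Set V), O = {y | g.SameCycle x y}} :=
        ⟨{y | g.SameCycle x y}, x, Set.mem_univ _, rfl⟩
      have hO : {y | g.SameCycle x y} = {y | g.SameCycle O.2.choose y} := O.2.choose_spec.2
      have hx : x ∈ {y | g.SameCycle O.2.choose y} := by
        rw [← hO]; exact Equiv.Perm.SameCycle.refl g x
      obtain ⟨k, hk⟩ := Equiv.Perm.SameCycle.exists_nat_pow_eq hx
      refine ⟨(O, ⟨k % p, Nat.mod_lt _ hprime.pos⟩), ?_⟩
      change R.mkQ ((g ^ (k % p)) O.2.choose) = R.mkQ x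
      rw [← hk]
      conv_rhs => rw [← Nat.div_add_mod k p, pow_add, Equiv.Perm.mul_apply, hgq]
    have h1 := Nat.card_le_card_of_surjective f hsur
    rw [Nat.card_prod, Nat.card_eq_fintype_card (α := Fin p), Fintype.card_fin] at h1
    unfold cyclesOn at hfour
    exact h1.trans (Nat.mul_le_mul_right p hfour)
  have hfq : Module.finrank (ZMod p) (V ⧸ R) ≤ 1 := by
    rw [Module.natCard_eq_pow_finrank (K := ZMod p), Nat.card_zmod] at hcardq
    by_contra hcon
    push Not at hcon
    have := Nat.pow_le_pow_right hprime.pos hcon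
    norm_num at this
    nlinarith
  have hRle : R ≤ LinearMap.range M := by
    rw [hR]
    rintro _ ⟨x, rfl⟩
    exact ⟨M x, by rw [pow_two, Module.End.mul_apply]⟩
  obtain ⟨W, hWdef⟩ : ∃ W, W = LinearMap.range M := ⟨_, rfl⟩
  obtain ⟨U, hUdef⟩ : ∃ U, U = LinearMap.ker M := ⟨_, rfl⟩
  have hWlt : Module.finrank (ZMod p) W < d := by
    rw [← hdim]
    apply Submodule.finrank_lt
    intro htop
    rw [← hWdef, htop] at hTv
    exact hTv Submodule.mem_top
  have hRW : R = W := by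
    rw [hWdef]
    apply Submodule.eq_of_le_of_finrank_le hRle
    have := Submodule.finrank_quotient_add_finrank R
    rw [← hWdef]
    omega
  have hfW : Module.finrank (ZMod p) W = d - 1 := by
    have := Submodule.finrank_quotient_add_finrank R
    rw [hRW] at this hfq
    omega
  have hfU : Module.finrank (ZMod p) U = 1 := by
    have := LinearMap.finrank_range_add_finrank_ker M
    rw [← hWdef, ← hUdef] at this
    omega
  have hMW : ∀ x, M x ∈ W := fun x => hWdef ▸ LinearMap.mem_range_self M x
  have hdisj : Disjoint U W := by
    rw [Submodule.disjoint_def]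
    intro x hxU hxW
    have hsur : Function.Surjective (M.restrict (fun w (_ : w ∈ W) => hMW w)) := by
      rintro ⟨y, hy⟩
      rw [← hRW, hR] at hy
      obtain ⟨z, hz⟩ := hy
      refine ⟨⟨M z, hMW z⟩, Subtype.ext ?_⟩
      rw [pow_two] at hz
      exact hz
    have hinj := Finite.injective_iff_surjective.2 hsur
    have h0 : (⟨x, hxW⟩ : W) = 0 := by
      apply hinj
      apply Subtype.ext
      rw [hUdef] at hxU
      simpa using hxU
    exact congrArg Subtype.val h0
  have hcompl : IsCompl U W := by
    refine (Submodule.isCompl_iff_disjoint U W ?_).2 hdisj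
    omega
  have hTU : ∀ x ∈ U, T x = x := by
    intro x hx
    rw [hUdef, LinearMap.mem_ker] at hx
    rw [hTM, hx, add_zero]
  have hTW : ∀ x ∈ W, T x ∈ W := by
    intro x hx
    rw [hTM]
    exact W.add_mem hx (hMW x)
  obtain ⟨u₀, hu₀, w₁, hw₁, huw⟩ : ∃ u ∈ U, ∃ w ∈ W, u + w = T v :=
    Submodule.mem_sup.1 (by rw [hcompl.sup_eq_top]; exact Submodule.mem_top)
  obtain ⟨w₂, hw₂⟩ : ∃ w, M w = w₁ := by rw [hWdef] at hw₁; exact hw₁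
  obtain ⟨w₀, hw₀⟩ : ∃ w, w = -w₂ := ⟨_, rfl⟩
  have hg0 : ∀ x, g (w₀ + x) = w₀ + T x + u₀ := by
    intro x
    rw [hgT, map_add, ← huw, ← hw₂, hTM w₀, hw₀, map_neg]; abel
  have hu0 : u₀ ≠ 0 := by
    intro h0
    apply hfix w₀
    have := hg0 0
    simpa [h0] using this
  have hpow : ∀ (k : ℕ) x, (g ^ k) (w₀ + x) = w₀ + ((T ^ k) x + (k : ZMod p) • u₀) := by
    intro k x
    induction k with
    | zero => simp
    | succ k ih =>
      rw [pow_succ', pow_succ', Equiv.Perm.mul_apply, Module.End.mul_apply, ih, hg0, map_add,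
        map_smul, hTU u₀ hu₀]
      push_cast
      rw [add_smul, one_smul]; abel
  by_cases hd : d = 1
  · left
    refine ⟨hd, ?_, ?_⟩
    · have hW0 : W = ⊥ := by
        apply Submodule.finrank_eq_zero.1
        omega
      ext x
      rw [hTa, hTM]
      have := hMW x
      rw [hW0, Submodule.mem_bot] at this
      rw [this, add_zero]; rfl
    · rintro rfl
      apply hTv
      rw [map_zero]
      exact Submodule.zero_mem _
  right
  have hd2 : 2 ≤ d := by omega
  have hntW : Nontrivial W := by
    apply Module.nontrivial_of_finrank_pos (R := ZMod p)
    omega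
  obtain ⟨S, hS⟩ : ∃ S : Module.End (ZMod p) W, S = T.restrict hTW := ⟨_, rfl⟩
  have hSpow : ∀ (k : ℕ) (x : W), ((S ^ k) x : V) = (T ^ k) x := by
    intro k x
    rw [hS, Module.End.pow_restrict]; rfl
  have hSone : ∀ k : ℕ, S ^ k = 1 ↔ T ^ k = 1 := by
    intro k
    constructor
    · intro hk
      ext x
      obtain ⟨u, hu, w, hw, rfl⟩ : ∃ u ∈ U, ∃ w ∈ W, u + w = x :=
        Submodule.mem_sup.1 (by rw [hcompl.sup_eq_top]; exact Submodule.mem_top)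
      have h1 := hSpow k ⟨w, hw⟩
      rw [hk] at h1
      have h2 : (T ^ k) u = u := by
        clear h1 hk
        induction k with
        | zero => simp
        | succ k ih => rw [pow_succ, Module.End.mul_apply, hTU u hu, ih]
      rw [map_add, h2, ← h1]; rfl
    · intro hk
      ext x
      rw [hSpow, hk]; rfl
  have hordS : orderOf S = orderOf T := orderOf_eq_orderOf_iff.2 hSone
  have hsep : ∀ (a b : ZMod p) (w w' : V), w ∈ W → w' ∈ W → w + a • u₀ = w' + b • u₀ →
      w = w' ∧ a = b := by
    intro a b w w' hw hw' heq
    have h1 : w - w' = (b - a) • u₀ := by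
      rw [sub_smul, sub_eq_sub_iff_add_eq_add, heq, add_comm]
    have h2 : w - w' = 0 := by
      apply (Submodule.disjoint_def.1 hdisj) _ _ (W.sub_mem hw hw')
      rw [h1]
      exact U.smul_mem _ hu₀
    refine ⟨sub_eq_zero.1 h2, ?_⟩
    rw [h2] at h1
    rcases smul_eq_zero.1 h1.symm with h3 | h3
    · exact (sub_eq_zero.1 h3).symm
    · exact absurd h3 hu0
  have hTkW : ∀ (k : ℕ) x, x ∈ W → (T ^ k) x ∈ W := fun k x hx => pow_mem_of_inv hTW k hx
  have hpig : ∀ a b c d : W, a ≠ 0 → b ≠ 0 → c ≠ 0 → d ≠ 0 →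
      OrbRel S a b ∨ OrbRel S a c ∨ OrbRel S a d ∨ OrbRel S b c ∨ OrbRel S b d ∨
        OrbRel S c d := by
    intro a b c d ha hb hc hd
    obtain ⟨i, j, hij, k, hk⟩ := hpig5 (fun i => w₀ + ((![0, a, b, c, d] : Fin 5 → W) i : V))
    simp only [hpow] at hk
    have hk' := add_left_cancel hk
    have hk'' := (hsep k 0 _ _ (hTkW _ _ (Subtype.prop _)) (Subtype.prop _)
      (by rw [hk', zero_smul, add_zero])).1
    have hr : OrbRel S ((![0, a, b, c, d] : Fin 5 → W) i) ((![0, a, b, c, d] : Fin 5 → W) j) :=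
      ⟨k, Subtype.ext (by rw [hSpow]; exact hk'')⟩
    have hz : ∀ z : W, z ≠ 0 → ¬ OrbRel S 0 z := by
      rintro z hz ⟨k, hk⟩
      rw [map_zero] at hk
      exact hz hk.symm
    exact pig_extract (OrbRel S) a b c d (hz a ha) (hz b hb) (hz c hc) (hz d hd) i j hij hr
  rcases linear_case hp5 S _ hm ((hSone _).2 hm1) hpig with ⟨h1, h2, h3, h4⟩ | ⟨h1, c, hc0, hc, hsq, hne⟩
  · rw [hordS, hfW] at h3 h4
    refine ⟨hd2, U, W, ?_, ?_, hcompl, hfU, ?_, ⟨?_, ?_⟩, ?_, ?_, ?_⟩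
    · intro x hx; rw [hTa, hTU x hx]; exact hx
    · intro x hx; rw [hTa]; exact hTW x hx
    · intro x hx; rw [hTa, hTU x hx]
    · rintro rfl
      exact not_nontrivial _ hntW
    · intro W' hle hinv
      rcases h2 (W'.comap W.subtype) (by
        intro x hx
        rw [Submodule.mem_comap] at hx ⊢
        have := hinv _ hx
        rw [hTa] at this
        rw [hS]
        exact this) with h5 | h5
      · left
        rw [Submodule.eq_bot_iff]
        intro x hx
        have h6 : (⟨x, hle hx⟩ : W) ∈ W'.comap W.subtype := hx
        rw [h5, Submodule.mem_bot] at h6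
        exact congrArg Subtype.val h6
      · right
        apply le_antisymm hle
        intro x hx
        have h6 : (⟨x, hx⟩ : W) ∈ W'.comap W.subtype := h5 ▸ Submodule.mem_top
        exact h6
    · rw [hord]; exact h3
    · rw [hord]; exact h4
    · rw [hord]
      have hcop : Nat.Coprime p (orderOf T) := by
        rw [hprime.coprime_iff_not_dvd]
        intro hdvd
        have h5 := hdvd.trans h3
        have h6 : p ∣ p ^ (d - 1) := dvd_pow_self p (by omega)
        have h7 := (Nat.dvd_sub_iff_right (Nat.one_le_pow _ _ hprime.pos) h6).1 h5
        exact hprime.one_lt.ne' (Nat.dvd_one.1 h7)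
      apply Nat.dvd_antisymm
      · apply orderOf_dvd_of_pow_eq_one
        ext x
        have h5 := hpow (p * orderOf T) (x - w₀)
        rw [mul_comm, pow_mul T, hm1, one_pow, mul_comm] at h5
        simpa using h5
      · have hgo : g ^ orderOf g = 1 := pow_orderOf_eq_one g
        have hx : ∀ w ∈ W, (T ^ orderOf g) w = w ∧ ((orderOf g : ℕ) : ZMod p) = 0 := by
          intro w hw
          have h5 := hpow (orderOf g) w
          rw [hgo, Equiv.Perm.one_apply] at h5
          have h6 := add_left_cancel h5
          exact hsep _ _ _ _ (hTkW _ _ hw) hw (by rw [← h6, zero_smul, add_zero])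
        apply hcop.mul_dvd_of_dvd_of_dvd
        · exact (ZMod.natCast_eq_zero_iff _ _).1 (hx 0 W.zero_mem).2
        · apply orderOf_dvd_of_pow_eq_one
          apply (hSone _).1
          ext x
          rw [hSpow, (hx x x.2).1]; rfl
  · exfalso
    obtain ⟨D, hD⟩ : ∃ D, D = S - c • (1 : Module.End (ZMod p) W) := ⟨_, rfl⟩
    have hSD : ∀ x, S x = c • x + D x := by intro x; rw [hD]; simp
    rw [← hD] at hsq
    have hDD : ∀ x, D (D x) = 0 := by
      intro x
      rw [← Module.End.mul_apply, ← pow_two, hsq]; rfl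
    obtain ⟨x, hx⟩ : ∃ x, D x ≠ 0 := by
      by_contra hcon
      push Not at hcon
      apply hne
      apply LinearMap.ext
      intro x
      rw [hSD, hcon, add_zero]; rfl
    have hSk : ∀ k : ℕ, c • (S ^ k) x = (c ^ (k + 1)) • x + (k * c ^ k : ZMod p) • D x := by
      intro k
      induction k with
      | zero => simp
      | succ k ih =>
        rw [pow_succ', Module.End.mul_apply, ← map_smul, ih, map_add, map_smul, map_smul, hSD, hSD (D x), hDD]
        simp only [smul_add, smul_smul, add_zero, add_assoc, ← add_smul]
        congr 2 <;> (push_cast; ring)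
    have hDx0 : x ≠ 0 := fun h0 => hx (by rw [h0, map_zero])
    have hk0 : ∀ k : ℕ, (S ^ k) x = x → (k : ZMod p) = 0 := by
      intro k hk
      have h5 := hSk k
      rw [hk] at h5
      have h6 := congrArg D h5
      rw [map_add, map_smul, map_smul, map_smul, hDD, smul_zero, add_zero] at h6
      have h7 : c = c ^ (k + 1) := smul_left_injective _ hx h6
      rw [← h7] at h5
      have h8 : (k * c ^ k : ZMod p) • D x = 0 := by simpa using h5
      rcases smul_eq_zero.1 h8 with h9 | h9
      · exact (mul_eq_zero.1 h9).resolve_right (pow_ne_zero _ hc0)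
      · exact absurd h9 hx
    obtain ⟨i, j, hij, k, hk⟩ := hpig5 (fun i => w₀ + ((x : V) + ((i : ℕ) : ZMod p) • u₀))
    simp only [hpow] at hk
    have hk' := add_left_cancel hk
    have hTu : (T ^ k) u₀ = u₀ := by
      clear hk hk'
      induction k with
      | zero => simp
      | succ k ih => rw [pow_succ, Module.End.mul_apply, hTU u₀ hu₀, ih]
    rw [map_add, map_smul, hTu, add_assoc, ← add_smul] at hk'
    obtain ⟨h5, h6⟩ := hsep _ _ _ _ (hTkW _ _ x.2) x.2 hk'
    have h7 := hk0 k (Subtype.ext (by rw [hSpow]; exact h5))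
    rw [h7, add_zero] at h6
    have h8 := (ZMod.natCast_eq_natCast_iff' _ _ p).1 h6
    rw [Nat.mod_eq_of_lt (by omega), Nat.mod_eq_of_lt (by omega)] at h8
    have : (i : ℕ) < j := hij
    omega
end
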